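/- For every integer n ≥ 0, the inequality N2(0,6,n) + N2(1,6,n) > N2(2,6,n) + N2(3,6,n) holds. -/

import Mathlib

open scoped Classical

/-- The M2-rank of a partition: ⌈ℓ/2⌉ − s, where ℓ is the largest part
(0 for the empty partition) and s is the number of parts. -/
def m2Rank {n : ℕ} (P : n.Partition) : ℤ :=
  (((P.parts.sup + 1) / 2 : ℕ) : ℤ) - (Multiset.card P.parts : ℤ)

/-- A partition has no repeated odd parts. -/
def NoRepeatedOddParts {n : ℕ} (P : n.Partition) : Prop :=
  ∀ j : ℕ, Odd j → P.parts.count j ≤ 1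

/-- `N2 r m n` is the number of partitions of `n` without repeated odd parts whose
M2-rank is congruent to `r` modulo `m`. -/
noncomputable def N2 (r : ℤ) (m n : ℕ) : ℕ :=
  Nat.card {P : n.Partition // NoRepeatedOddParts P ∧ m2Rank P ≡ r [ZMOD (m : ℤ)]}

/-!
Let `A n` be the sum, over the partitions of `n` without repeated odd parts, of the weight
`1, 1, -1, -1, 0, 0` according to the residue of the M2-rank modulo `6`; the claim is `0 < A n`.
A bijection in the style of Dyson's adjoint gives recurrences for the rank generating functions,
and these turn `L(q) = ∑ A n * (-q) ^ n` into the product of the generating function `P(-q)` of all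
the partitions with a series over `ℤ` of Lerch type. Splitting this series according to its index
modulo `3`, and evaluating the pieces by theta function identities that go back to the Jacobi
triple product, gives

  `-2 * q * L(q) = P(-q ^ 9) * (-2 * q * ℓ₁ + 2 * q ^ 2 * θ₁ ^ 2 + (1 - 2 * ℓ₀) +`
  `  (θ₂ ^ 2 - 1) / 2 + (θ₃ ^ 2 - 1) / 2)`

with theta series `θᵢ` and Lerch series `ℓᵢ`. The products `P(-q ^ 9) * ℓᵢ` are again rank
generating functions, now with weights of visible sign, so each of the five terms is a power series
in `-q` with nonnegative coefficients. The first is positive at all exponents `≡ 1` modulo `3`, the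
second at those `≡ 2`, the last two between them at the nonzero multiples of `3`. Hence `2 * A n`,
the coefficient of `(-q) ^ (n + 1)`, is positive. Everything is evaluated at real `0 < q < 1 / 2`;
coefficients are compared only at the end.
-/

open Filter Topology

namespace M2Rank

section ThetaSeries

variable {b : ℝ}

/-! ### Theta and Appell–Lerch series -/

/-- Real sequences on `ℤ` growing at most linearly: the factors that may be multiplied into a
theta series without harming its convergence. -/
def LinearGrowth (e : ℤ → ℝ) : Prop :=
  ∃ C : ℝ, ∀ r : ℤ, |e r| ≤ C * (1 + |(r : ℝ)|)

lemma LinearGrowth.of_bounded {e : ℤ → ℝ} (C : ℝ) (h : ∀ r, |e r| ≤ C) : LinearGrowth e :=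
  ⟨C, fun r ↦ (h r).trans
    (le_mul_of_one_le_right ((abs_nonneg _).trans (h 0)) (by linarith [abs_nonneg (r : ℝ)]))⟩

lemma linearGrowth_one : LinearGrowth fun _ ↦ 1 :=
  .of_bounded 1 (by simp)

lemma linearGrowth_intCast : LinearGrowth fun r ↦ (r : ℝ) :=
  ⟨1, fun r ↦ by linarith⟩

lemma zpow_gauss_eq_exp (hb0 : 0 < b) (a c : ℤ) {y : ℝ} (hy : 0 < y) (r : ℤ) :
    b ^ (a * r ^ 2 + c * r) * y ^ r =
      Real.exp ((a * Real.log b) * r ^ 2 + (c * Real.log b + Real.log y) * r) := by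
  rw [← Real.exp_log (zpow_pos hb0 _), ← Real.exp_log (zpow_pos hy r), ← Real.exp_add,
    Real.log_zpow, Real.log_zpow]
  congr 1
  push_cast
  ring

lemma summable_gauss_mul (hb0 : 0 < b) (hb1 : b < 1) {a : ℤ} (ha : 0 < a) (c : ℤ) {y : ℝ}
    (hy : y ≠ 0) {e : ℤ → ℝ} (he : LinearGrowth e) :
    Summable fun r : ℤ ↦ b ^ (a * r ^ 2 + c * r) * y ^ r * e r := by
  obtain ⟨C, hC⟩ := he
  have ha' : (0 : ℝ) < a := mod_cast ha
  set T : ℝ := -(a * Real.log b) / Real.pi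
  set L : ℝ := c * Real.log b + Real.log |y|
  have hT : 0 < T := div_pos (neg_pos.2 (mul_neg_of_pos_of_neg ha' (Real.log_neg hb0 hb1)))
    Real.pi_pos
  have hsum (k : ℕ) := summable_pow_mul_jacobiTheta₂_term_bound (|L| / (2 * Real.pi)) hT k
  refine .of_norm_bounded (((hsum 0).add (hsum 1)).mul_left C) fun r ↦ ?_
  have hexp : |b ^ (a * r ^ 2 + c * r) * y ^ r| ≤
      Real.exp (-Real.pi * (T * r ^ 2 - 2 * (|L| / (2 * Real.pi)) * |(r : ℝ)|)) := by
    rw [abs_mul, abs_zpow, abs_zpow, abs_of_pos hb0, zpow_gauss_eq_exp hb0 a c (abs_pos.2 hy) r,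
      Real.exp_le_exp]
    calc a * Real.log b * r ^ 2 + L * r
        ≤ a * Real.log b * r ^ 2 + |L| * |(r : ℝ)| := by
          rw [← abs_mul]; gcongr; exact le_abs_self _
      _ = _ := by simp only [T]; field_simp; ring
  rw [Real.norm_eq_abs, abs_mul]
  calc _ ≤ _ := mul_le_mul hexp (hC r) (abs_nonneg _) (Real.exp_pos _).le
    _ = _ := by push_cast; ring

/-- The factor `1 / (1 - x b ^ (2 r))` of an Appell–Lerch series; the junk value `0` at a pole
deletes the singular term. -/
noncomputable def poleFactor (b x : ℝ) (r : ℤ) : ℝ :=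
  1 / (1 - x * b ^ (2 * r))

lemma tendsto_zpow_two_mul_atTop (hb0 : 0 < b) (hb1 : b < 1) :
    Tendsto (fun r : ℤ ↦ b ^ (2 * r)) atTop (𝓝 0) := by
  have h := (tendsto_rpow_atTop_of_base_lt_one b (by linarith) hb1).comp
    ((tendsto_intCast_atTop_atTop (R := ℝ)).const_mul_atTop two_pos)
  refine h.congr fun r ↦ ?_
  rw [Function.comp_apply, ← Real.rpow_intCast]
  push_cast
  rfl

lemma poleFactor_isBigO_atTop (hb0 : 0 < b) (hb1 : b < 1) (x : ℝ) :
    poleFactor b x =O[atTop] fun _ ↦ (1 : ℝ) := by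
  have h : Tendsto (fun r : ℤ ↦ 1 - x * b ^ (2 * r)) atTop (𝓝 (1 - x * 0)) :=
    ((tendsto_zpow_two_mul_atTop hb0 hb1).const_mul x).const_sub 1
  have h' := h.inv₀ (by simp)
  simp only [← one_div] at h'
  exact h'.isBigO_one ℝ

lemma poleFactor_isBigO_atBot (hb0 : 0 < b) (hb1 : b < 1) {x : ℝ} (hx : x ≠ 0) :
    poleFactor b x =O[atBot] fun _ ↦ (1 : ℝ) := by
  -- Divide through by `x b ^ (2 r)`, whose inverse tends to `0`.
  have h : Tendsto (fun r : ℤ ↦ x⁻¹ * b ^ (2 * -r)) atBot (𝓝 (x⁻¹ * 0)) :=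
    ((tendsto_zpow_two_mul_atTop hb0 hb1).comp tendsto_neg_atBot_atTop).const_mul _
  have h' := h.div (h.sub_const 1) (by simp)
  refine (h'.congr fun r ↦ ?_).isBigO_one ℝ
  have hx' : x * b ^ (2 * r) ≠ 0 := mul_ne_zero hx (zpow_pos hb0 _).ne'
  rw [Pi.div_apply, mul_neg, zpow_neg, ← mul_inv, poleFactor]
  rw [← mul_div_mul_left _ _ hx', mul_inv_cancel₀ hx', mul_sub, mul_inv_cancel₀ hx', mul_one]

lemma linearGrowth_poleFactor (hb0 : 0 < b) (hb1 : b < 1) {x : ℝ} (hx : x ≠ 0) :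
    LinearGrowth (poleFactor b x) := by
  have hO : poleFactor b x =O[cofinite] fun _ ↦ (1 : ℝ) := by
    rw [Int.cofinite_eq, Asymptotics.isBigO_sup]
    exact ⟨poleFactor_isBigO_atBot hb0 hb1 hx, poleFactor_isBigO_atTop hb0 hb1 x⟩
  obtain ⟨C, hC⟩ := (Asymptotics.isBigO_cofinite_iff (by simp)).1 hO
  exact .of_bounded C fun r ↦ by simpa using hC r

/-- The theta series `∑ b ^ (r² - r) y ^ r`, that is `j(-y; b²)` in the usual notation
`j(x; p) = (x; p)_∞ (p / x; p)_∞ (p; p)_∞`. Taking `b` with `b² = p` keeps exponents integral. -/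
noncomputable def theta (b y : ℝ) : ℝ :=
  ∑' r : ℤ, b ^ (r ^ 2 - r) * y ^ r

/-- The Euler derivative `y d/dy` of `theta b`. -/
noncomputable def thetaDeriv (b y : ℝ) : ℝ :=
  ∑' r : ℤ, b ^ (r ^ 2 - r) * y ^ r * (r : ℝ)

/-- The Appell–Lerch series with numerators those of `theta b y` and poles governed by `x`. -/
noncomputable def appell (b x y : ℝ) : ℝ :=
  ∑' r : ℤ, b ^ (r ^ 2 - r) * y ^ r * poleFactor b x r

lemma summable_theta_mul (hb0 : 0 < b) (hb1 : b < 1) {y : ℝ} (hy : y ≠ 0) {e : ℤ → ℝ}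
    (he : LinearGrowth e) : Summable fun r : ℤ ↦ b ^ (r ^ 2 - r) * y ^ r * e r := by
  simpa only [one_mul, neg_one_mul, ← sub_eq_add_neg] using
    summable_gauss_mul hb0 hb1 one_pos (-1) hy he

lemma summable_theta (hb0 : 0 < b) (hb1 : b < 1) {y : ℝ} (hy : y ≠ 0) :
    Summable fun r : ℤ ↦ b ^ (r ^ 2 - r) * y ^ r := by
  simpa only [mul_one] using summable_theta_mul hb0 hb1 hy linearGrowth_one

lemma summable_thetaDeriv (hb0 : 0 < b) (hb1 : b < 1) {y : ℝ} (hy : y ≠ 0) :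
    Summable fun r : ℤ ↦ b ^ (r ^ 2 - r) * y ^ r * (r : ℝ) :=
  summable_theta_mul hb0 hb1 hy linearGrowth_intCast

lemma summable_appell (hb0 : 0 < b) (hb1 : b < 1) {x y : ℝ} (hx : x ≠ 0) (hy : y ≠ 0) :
    Summable fun r : ℤ ↦ b ^ (r ^ 2 - r) * y ^ r * poleFactor b x r :=
  summable_theta_mul hb0 hb1 hy (linearGrowth_poleFactor hb0 hb1 hx)

end ThetaSeries

section ConvolutionSlices

variable {b : ℝ}

/-- The shear `(k, r) ↦ (r, k - r)` of `ℤ × ℤ`, which reorganises a double series by the value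
`k` of the sum of its two indices. -/
def antidiagonalShear : ℤ × ℤ ≃ ℤ × ℤ where
  toFun z := (z.2, z.1 - z.2)
  invFun z := (z.1 + z.2, z.1)
  left_inv z := by ext <;> simp
  right_inv z := by ext <;> simp

lemma hasSum_int_convolution {f g : ℤ → ℝ} (hf : Summable f) (hg : Summable g) :
    HasSum (fun k ↦ ∑' r, f r * g (k - r)) ((∑' r, f r) * ∑' r, g r) := by
  have hfg : Summable fun z : ℤ × ℤ ↦ f z.1 * g z.2 :=
    summable_mul_of_summable_norm hf.norm hg.norm
  have hshear := (antidiagonalShear.summable_iff (f := fun z ↦ f z.1 * g z.2)).2 hfg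
  rw [tsum_mul_tsum_of_summable_norm hf.norm hg.norm, ← antidiagonalShear.tsum_eq]
  exact hshear.hasSum.prod_fiberwise fun k ↦ (hshear.prod_factor k).hasSum

/-- The coefficient of `b ^ (k² - k) (u x x') ^ k` in `theta b (u x') * appell b x (u x)`; it does
not involve `u`. -/
noncomputable def appellSlice (b x x' : ℝ) (k : ℤ) : ℝ :=
  ∑' r : ℤ, b ^ (2 * r ^ 2 - 2 * k * r) * x ^ (r - k) * x' ^ (-r) * poleFactor b x r

/-- The analogue of `appellSlice` without poles: the coefficient of `b ^ (k² - k) (u x x') ^ k` in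
`theta b (u x') * theta b (u x)`. -/
noncomputable def thetaSlice (b x x' : ℝ) (k : ℤ) : ℝ :=
  ∑' r : ℤ, b ^ (2 * r ^ 2 - 2 * k * r) * x ^ (r - k) * x' ^ (-r)

/-- The constant of proportionality, independent of `u`, in the determinant identity
`theta_mul_appell_sub`. -/
noncomputable def appellConst (b x x' : ℝ) : ℝ :=
  appellSlice b x x' 0 - appellSlice b x' x 0

lemma summable_slice_mul (hb0 : 0 < b) (hb1 : b < 1) {x x' : ℝ} (hx : x ≠ 0) (hx' : x' ≠ 0)
    (k : ℤ) {e : ℤ → ℝ} (he : LinearGrowth e) :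
    Summable fun r : ℤ ↦ b ^ (2 * r ^ 2 - 2 * k * r) * x ^ (r - k) * x' ^ (-r) * e r := by
  have h := (summable_gauss_mul hb0 hb1 two_pos (-2 * k) (div_ne_zero hx hx') he).mul_left
    (x ^ (-k))
  refine h.congr fun r ↦ ?_
  rw [div_zpow, zpow_sub₀ hx, zpow_neg, zpow_neg,
    show 2 * r ^ 2 - 2 * k * r = 2 * r ^ 2 + -2 * k * r by ring]
  ring

lemma summable_appellSlice (hb0 : 0 < b) (hb1 : b < 1) {x x' : ℝ} (hx : x ≠ 0) (hx' : x' ≠ 0)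
    (k : ℤ) : Summable fun r : ℤ ↦
      b ^ (2 * r ^ 2 - 2 * k * r) * x ^ (r - k) * x' ^ (-r) * poleFactor b x r :=
  summable_slice_mul hb0 hb1 hx hx' k (linearGrowth_poleFactor hb0 hb1 hx)

lemma summable_thetaSlice (hb0 : 0 < b) (hb1 : b < 1) {x x' : ℝ} (hx : x ≠ 0) (hx' : x' ≠ 0)
    (k : ℤ) : Summable fun r : ℤ ↦ b ^ (2 * r ^ 2 - 2 * k * r) * x ^ (r - k) * x' ^ (-r) := by
  simpa only [mul_one] using summable_slice_mul hb0 hb1 hx hx' k linearGrowth_one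

lemma thetaSlice_comm (x x' : ℝ) (k : ℤ) : thetaSlice b x x' k = thetaSlice b x' x k := by
  rw [thetaSlice, ← (Equiv.subLeft k).tsum_eq]
  refine tsum_congr fun r ↦ ?_
  rw [Equiv.subLeft_apply, show 2 * (k - r) ^ 2 - 2 * k * (k - r) = 2 * r ^ 2 - 2 * k * r by ring,
    show k - r - k = -r by ring, neg_sub, mul_right_comm]

/-- `x` is nonzero and none of the factors `poleFactor b x r` is singular. -/
def PoleFree (b x : ℝ) : Prop :=
  x ≠ 0 ∧ ∀ r : ℤ, x * b ^ (2 * r) ≠ 1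

lemma PoleFree.mul_poleFactor {x : ℝ} (h : PoleFree b x) (r : ℤ) :
    (1 - x * b ^ (2 * r)) * poleFactor b x r = 1 :=
  mul_one_div_cancel (sub_ne_zero.2 (h.2 r).symm)

lemma mul_poleFactor_one (hb0 : 0 < b) (hb1 : b < 1) (r : ℤ) :
    (1 - b ^ (2 * r)) * poleFactor b 1 r = 1 - if r = 0 then 1 else 0 := by
  split_ifs with h
  · simp [h]
  · rw [poleFactor, one_mul, sub_zero]
    refine mul_one_div_cancel (sub_ne_zero.2 fun hr ↦ h ?_)
    simpa using (zpow_eq_one_iff_right₀ hb0.le hb1.ne).1 hr.symm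

lemma appellSlice_succ_sub (hb0 : 0 < b) (hb1 : b < 1) {x x' : ℝ} (hx : x ≠ 0) (hx' : x' ≠ 0)
    (k : ℤ) : appellSlice b x x' (k + 1) - appellSlice b x x' k =
      ∑' r : ℤ, b ^ (2 * r ^ 2 - 2 * (k + 1) * r) * x ^ (r - (k + 1)) * x' ^ (-r) *
        ((1 - x * b ^ (2 * r)) * poleFactor b x r) := by
  rw [appellSlice, appellSlice, ← (summable_appellSlice hb0 hb1 hx hx' (k + 1)).tsum_sub
    (summable_appellSlice hb0 hb1 hx hx' k)]
  refine tsum_congr fun r ↦ ?_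
  have hexp : b ^ (2 * r ^ 2 - 2 * k * r) =
      b ^ (2 * r ^ 2 - 2 * (k + 1) * r) * b ^ (2 * r) := by
    rw [← zpow_add₀ hb0.ne']; congr 1; ring
  have hxpow : x ^ (r - k) = x ^ (r - (k + 1)) * x := by
    rw [← zpow_add_one₀ hx]; congr 1; ring
  rw [hexp, hxpow]
  ring

lemma PoleFree.appellSlice_succ_sub (hb0 : 0 < b) (hb1 : b < 1) {x x' : ℝ} (hx : PoleFree b x)
    (hx' : x' ≠ 0) (k : ℤ) :
    appellSlice b x x' (k + 1) - appellSlice b x x' k = thetaSlice b x x' (k + 1) := by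
  simp only [M2Rank.appellSlice_succ_sub hb0 hb1 hx.1 hx', hx.mul_poleFactor, mul_one, thetaSlice]

lemma appellSlice_one_succ_sub (hb0 : 0 < b) (hb1 : b < 1) {x' : ℝ} (hx' : x' ≠ 0) (k : ℤ) :
    appellSlice b 1 x' (k + 1) - appellSlice b 1 x' k = thetaSlice b 1 x' (k + 1) - 1 := by
  have hdelta : HasSum (fun r : ℤ ↦ if r = 0 then (1 : ℝ) else 0) 1 := hasSum_ite_eq 0 1
  have hsub := (summable_thetaSlice hb0 hb1 one_ne_zero hx' (k + 1)).tsum_sub hdelta.summable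
  rw [hdelta.tsum_eq] at hsub
  rw [appellSlice_succ_sub hb0 hb1 one_ne_zero hx', thetaSlice, ← hsub]
  refine tsum_congr fun r ↦ ?_
  rw [one_mul, mul_poleFactor_one hb0 hb1, mul_sub, mul_one]
  split_ifs with h
  · simp [h]
  · simp

lemma eq_add_mul_of_forall_succ_sub {F : ℤ → ℝ} {d : ℝ} (h : ∀ k, F (k + 1) - F k = d) (k : ℤ) :
    F k = F 0 + k * d := by
  induction k using Int.induction_on with
  | zero => simp
  | succ n ih => have := h n; push_cast at *; linarith
  | pred n ih =>
    have := h (-n - 1)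
    rw [sub_add_cancel] at this
    push_cast at *
    linarith

lemma appellSlice_sub_comm (hb0 : 0 < b) (hb1 : b < 1) {x x' : ℝ} (hx : PoleFree b x)
    (hx' : PoleFree b x') (k : ℤ) :
    appellSlice b x x' k - appellSlice b x' x k = appellConst b x x' := by
  have h := eq_add_mul_of_forall_succ_sub
    (F := fun k ↦ appellSlice b x x' k - appellSlice b x' x k) (d := 0) (fun k ↦ by
      linarith [hx.appellSlice_succ_sub hb0 hb1 hx'.1 k, hx'.appellSlice_succ_sub hb0 hb1 hx.1 k,
        thetaSlice_comm (b := b) x x' (k + 1)]) k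
  simpa [appellConst] using h

lemma appellSlice_one_sub_comm (hb0 : 0 < b) (hb1 : b < 1) {x' : ℝ} (hx' : PoleFree b x')
    (k : ℤ) : appellSlice b 1 x' k - appellSlice b x' 1 k = appellConst b 1 x' - k := by
  have h := eq_add_mul_of_forall_succ_sub
    (F := fun k ↦ appellSlice b 1 x' k - appellSlice b x' 1 k) (d := -1) (fun k ↦ by
      linarith [appellSlice_one_succ_sub hb0 hb1 hx'.1 k,
        hx'.appellSlice_succ_sub hb0 hb1 one_ne_zero k,
        thetaSlice_comm (b := b) 1 x' (k + 1)]) k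
  simpa [appellConst, ← sub_eq_add_neg] using h

lemma hasSum_theta_mul_appell (hb0 : 0 < b) (hb1 : b < 1) {x x' u : ℝ} (hx : x ≠ 0)
    (hx' : x' ≠ 0) (hu : u ≠ 0) :
    HasSum (fun k : ℤ ↦ b ^ (k ^ 2 - k) * (u * x * x') ^ k * appellSlice b x x' k)
      (theta b (u * x') * appell b x (u * x)) := by
  have hconv := hasSum_int_convolution (summable_appell hb0 hb1 hx (mul_ne_zero hu hx))
    (summable_theta hb0 hb1 (mul_ne_zero hu hx'))
  rw [mul_comm (theta b _)]
  refine hconv.congr_fun fun k ↦ ?_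
  rw [appellSlice, ← tsum_mul_left]
  refine tsum_congr fun r ↦ ?_
  have hexp : b ^ (k ^ 2 - k) * b ^ (2 * r ^ 2 - 2 * k * r) =
      b ^ (r ^ 2 - r) * b ^ ((k - r) ^ 2 - (k - r)) := by
    rw [← zpow_add₀ hb0.ne', ← zpow_add₀ hb0.ne']; congr 1; ring
  have hpow : (u * x * x') ^ k * x ^ (r - k) * x' ^ (-r) =
      (u * x) ^ r * (u * x') ^ (k - r) := by
    rw [mul_zpow, mul_zpow, mul_zpow, mul_zpow, zpow_sub₀ hx, zpow_neg, zpow_sub₀ hu,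
      zpow_sub₀ hx']
    field_simp
  linear_combination
    ((u * x * x') ^ k * x ^ (r - k) * x' ^ (-r) * poleFactor b x r) * hexp +
    b ^ (r ^ 2 - r) * b ^ ((k - r) ^ 2 - (k - r)) * poleFactor b x r * hpow

theorem theta_mul_appell_sub (hb0 : 0 < b) (hb1 : b < 1) {x x' u : ℝ} (hx : PoleFree b x)
    (hx' : PoleFree b x') (hu : u ≠ 0) :
    theta b (u * x') * appell b x (u * x) - theta b (u * x) * appell b x' (u * x') =
      appellConst b x x' * theta b (u * x * x') := by
  have h := (hasSum_theta_mul_appell hb0 hb1 hx.1 hx'.1 hu).sub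
    (hasSum_theta_mul_appell hb0 hb1 hx'.1 hx.1 hu)
  rw [← h.tsum_eq, theta, ← tsum_mul_left]
  refine tsum_congr fun k ↦ ?_
  rw [mul_right_comm u x' x]
  linear_combination (b ^ (k ^ 2 - k) * (u * x * x') ^ k) * appellSlice_sub_comm hb0 hb1 hx hx' k

theorem theta_mul_appell_one_sub (hb0 : 0 < b) (hb1 : b < 1) {x' u : ℝ} (hx' : PoleFree b x')
    (hu : u ≠ 0) :
    theta b (u * x') * appell b 1 u - theta b u * appell b x' (u * x') =
      appellConst b 1 x' * theta b (u * x') - thetaDeriv b (u * x') := by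
  have hux := mul_ne_zero hu hx'.1
  have h := (hasSum_theta_mul_appell hb0 hb1 one_ne_zero hx'.1 hu).sub
    (hasSum_theta_mul_appell hb0 hb1 hx'.1 one_ne_zero hu)
  simp only [mul_one] at h
  rw [← h.tsum_eq, theta, thetaDeriv, ← tsum_mul_left,
    ← ((summable_theta hb0 hb1 hux).mul_left _).tsum_sub (summable_thetaDeriv hb0 hb1 hux)]
  refine tsum_congr fun k ↦ ?_
  linear_combination (b ^ (k ^ 2 - k) * (u * x') ^ k) * appellSlice_one_sub_comm hb0 hb1 hx' k

end ConvolutionSlices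

section FunctionalEquations

variable {b : ℝ}

lemma theta_sq_mul (hb0 : 0 < b) {y : ℝ} (hy : y ≠ 0) :
    theta b (b ^ 2 * y) = y⁻¹ * theta b y := by
  unfold theta
  rw [← (Equiv.addRight (1 : ℤ)).tsum_eq fun r : ℤ ↦ b ^ (r ^ 2 - r) * y ^ r, ← tsum_mul_left]
  refine tsum_congr fun r ↦ ?_
  rw [Equiv.coe_addRight, mul_zpow, zpow_add_one₀ hy, ← zpow_natCast b 2, ← zpow_mul,
    show (r + 1) ^ 2 - (r + 1) = (r ^ 2 - r) + ((2 : ℕ) : ℤ) * r by push_cast; ring,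
    zpow_add₀ hb0.ne']
  field_simp

lemma thetaDeriv_sq_mul (hb0 : 0 < b) (hb1 : b < 1) {y : ℝ} (hy : y ≠ 0) :
    thetaDeriv b (b ^ 2 * y) = y⁻¹ * (thetaDeriv b y - theta b y) := by
  unfold theta thetaDeriv
  rw [← (summable_thetaDeriv hb0 hb1 hy).tsum_sub (summable_theta hb0 hb1 hy),
    ← (Equiv.addRight (1 : ℤ)).tsum_eq
      fun r : ℤ ↦ b ^ (r ^ 2 - r) * y ^ r * (r : ℝ) - b ^ (r ^ 2 - r) * y ^ r, ← tsum_mul_left]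
  refine tsum_congr fun r ↦ ?_
  rw [Equiv.coe_addRight, mul_zpow, zpow_add_one₀ hy, ← zpow_natCast b 2, ← zpow_mul,
    show (r + 1) ^ 2 - (r + 1) = (r ^ 2 - r) + ((2 : ℕ) : ℤ) * r by push_cast; ring,
    zpow_add₀ hb0.ne']
  push_cast
  field_simp
  ring

lemma theta_inv {y : ℝ} (hy : y ≠ 0) : theta b y⁻¹ = y⁻¹ * theta b y := by
  unfold theta
  rw [← (Equiv.subLeft (1 : ℤ)).tsum_eq, ← tsum_mul_left]
  refine tsum_congr fun r ↦ ?_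
  rw [Equiv.subLeft_apply, show (1 - r) ^ 2 - (1 - r) = r ^ 2 - r by ring, inv_zpow, zpow_sub₀ hy]
  field_simp

lemma thetaDeriv_inv (hb0 : 0 < b) (hb1 : b < 1) {y : ℝ} (hy : y ≠ 0) :
    thetaDeriv b y⁻¹ = y⁻¹ * (theta b y - thetaDeriv b y) := by
  unfold theta thetaDeriv
  rw [← (summable_theta hb0 hb1 hy).tsum_sub (summable_thetaDeriv hb0 hb1 hy),
    ← (Equiv.subLeft (1 : ℤ)).tsum_eq, ← tsum_mul_left]
  refine tsum_congr fun r ↦ ?_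
  rw [Equiv.subLeft_apply, show (1 - r) ^ 2 - (1 - r) = r ^ 2 - r by ring, inv_zpow, zpow_sub₀ hy]
  push_cast
  field_simp

lemma theta_neg_one : theta b (-1) = 0 := by
  have h := theta_inv (b := b) (y := -1) (by norm_num)
  norm_num at h
  linarith

lemma theta_sq_div (hb0 : 0 < b) {y : ℝ} (hy : y ≠ 0) : theta b (b ^ 2 / y) = theta b y := by
  rw [div_eq_mul_inv, theta_sq_mul hb0 (inv_ne_zero hy), theta_inv hy, inv_inv,
    mul_inv_cancel_left₀ hy]

lemma thetaDeriv_sq_div (hb0 : 0 < b) (hb1 : b < 1) {y : ℝ} (hy : y ≠ 0) :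
    thetaDeriv b (b ^ 2 / y) = -thetaDeriv b y := by
  rw [div_eq_mul_inv, thetaDeriv_sq_mul hb0 hb1 (inv_ne_zero hy), thetaDeriv_inv hb0 hb1 hy,
    theta_inv hy, inv_inv, ← mul_sub, mul_inv_cancel_left₀ hy, sub_sub_cancel_left]

lemma one_div_one_sub_eq_inv {w : ℝ} (hw : w ≠ 0) : 1 / (1 - w) = -w⁻¹ * (1 / (1 - w⁻¹)) := by
  rcases eq_or_ne w 1 with rfl | h
  · simp
  · have := sub_ne_zero.2 h
    have := sub_ne_zero.2 h.symm
    field_simp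
    ring

lemma appell_inv (hb0 : 0 < b) {x y : ℝ} (hx : x ≠ 0) (hy : y ≠ 0) :
    appell b x y = -x⁻¹ * appell b x⁻¹ (b ^ 4 / y) := by
  unfold appell
  rw [← (Equiv.neg ℤ).tsum_eq, ← tsum_mul_left]
  refine tsum_congr fun r ↦ ?_
  have hw : x * b ^ (2 * -r) ≠ 0 := mul_ne_zero hx (zpow_ne_zero _ hb0.ne')
  have hwinv : (x * b ^ (2 * -r))⁻¹ = x⁻¹ * b ^ (2 * r) := by
    rw [mul_inv, ← zpow_neg, mul_neg, neg_neg]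
  have hyr : y ^ r ≠ 0 := zpow_ne_zero _ hy
  rw [Equiv.neg_apply, poleFactor, poleFactor, one_div_one_sub_eq_inv hw, hwinv, div_zpow, zpow_neg,
    ← zpow_natCast b 4, ← zpow_mul, show (-r) ^ 2 - -r = (r ^ 2 - r) + 2 * r by ring,
    zpow_add₀ hb0.ne', show ((4 : ℕ) : ℤ) * r = 2 * r + 2 * r by push_cast; ring,
    zpow_add₀ hb0.ne']
  field_simp

lemma appell_one_sub (hb0 : 0 < b) (hb1 : b < 1) {y : ℝ} (hy : y ≠ 0) :
    appell b 1 y - appell b 1 (b ^ 2 * y) = theta b y - 1 := by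
  have hdelta : HasSum (fun r : ℤ ↦ if r = 0 then (1 : ℝ) else 0) 1 := hasSum_ite_eq 0 1
  have hsub := (summable_theta hb0 hb1 hy).tsum_sub hdelta.summable
  rw [hdelta.tsum_eq] at hsub
  have hby : b ^ 2 * y ≠ 0 := mul_ne_zero (pow_ne_zero _ hb0.ne') hy
  rw [theta, ← hsub, appell, appell, ← (summable_appell hb0 hb1 one_ne_zero hy).tsum_sub
    (summable_appell hb0 hb1 one_ne_zero hby)]
  refine tsum_congr fun r ↦ ?_
  have hpole := mul_poleFactor_one hb0 hb1 r
  rw [mul_zpow, ← zpow_natCast b 2, ← zpow_mul]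
  push_cast
  split_ifs at hpole ⊢ with hr
  · simp [hr]
  · linear_combination (b ^ (r ^ 2 - r) * y ^ r) * hpole

lemma appell_one_neg_one (hb0 : 0 < b) (hb1 : b < 1) : appell b 1 (-1) = -1 := by
  have h₁ := appell_one_sub hb0 hb1 (y := -1) (by norm_num)
  have h₂ := appell_one_sub hb0 hb1 (y := b ^ 2 * -1) (by simp [hb0.ne'])
  have h₃ := appell_inv hb0 (x := 1) (y := -1) one_ne_zero (by norm_num)
  rw [theta_neg_one] at h₁
  rw [theta_sq_mul hb0 (by norm_num), theta_neg_one, mul_zero,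
    show b ^ 2 * (b ^ 2 * -1) = b ^ 4 / -1 by ring] at h₂
  rw [inv_one] at h₃
  linarith

/-- The theta function `j(x; b²) = ∑ (-1) ^ r b ^ (r² - r) x ^ r`. -/
noncomputable def jTheta (b x : ℝ) : ℝ :=
  theta b (-x)

/-- The logarithmic Euler derivative `x j'(x) / j(x)` of `jTheta b`. -/
noncomputable def jThetaLogDeriv (b x : ℝ) : ℝ :=
  thetaDeriv b (-x) / theta b (-x)

/-- The constant `-j'(1; b²)`, equal to `(b²; b²)_∞ ^ 3`. -/
noncomputable def kappa (b : ℝ) : ℝ :=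
  -thetaDeriv b (-1)

lemma jTheta_inv {x : ℝ} (hx : x ≠ 0) : jTheta b x⁻¹ = -x⁻¹ * jTheta b x := by
  rw [jTheta, ← inv_neg, theta_inv (neg_ne_zero.2 hx), inv_neg, jTheta]

lemma jTheta_sq_div (hb0 : 0 < b) {x : ℝ} (hx : x ≠ 0) : jTheta b (b ^ 2 / x) = jTheta b x := by
  rw [jTheta, ← div_neg, theta_sq_div hb0 (neg_ne_zero.2 hx), jTheta]

lemma appell_neg_one_mul_jTheta (hb0 : 0 < b) (hb1 : b < 1) {x : ℝ} (hx : PoleFree b x) :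
    appell b x (-1) * jTheta b x = kappa b * x := by
  have hx0 := hx.1
  have h := theta_mul_appell_one_sub hb0 hb1 (u := -1 / x) hx (by simp [hx0])
  rw [div_mul_cancel₀ _ hx0, theta_neg_one, show -1 / x = (-x)⁻¹ by rw [inv_neg]; ring,
    theta_inv (neg_ne_zero.2 hx0)] at h
  rw [jTheta, kappa]
  field_simp at h
  linear_combination h

lemma jTheta_ne_zero (hb0 : 0 < b) (hb1 : b < 1) (hκ : kappa b ≠ 0) {x : ℝ}
    (hx : PoleFree b x) : jTheta b x ≠ 0 := by
  intro h
  have := appell_neg_one_mul_jTheta hb0 hb1 hx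
  rw [h, mul_zero] at this
  exact mul_ne_zero hκ hx.1 this.symm

lemma thetaDeriv_neg (hb0 : 0 < b) (hb1 : b < 1) {x : ℝ} (hx : PoleFree b x) :
    thetaDeriv b (-x) = (appellConst b 1 x + 1) * jTheta b x := by
  have h := theta_mul_appell_one_sub hb0 hb1 (u := -1) hx (by norm_num)
  rw [theta_neg_one, appell_one_neg_one hb0 hb1, neg_one_mul] at h
  rw [jTheta]
  linarith

lemma jThetaLogDeriv_eq (hb0 : 0 < b) (hb1 : b < 1) (hκ : kappa b ≠ 0) {x : ℝ}
    (hx : PoleFree b x) : jThetaLogDeriv b x = appellConst b 1 x + 1 := by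
  rw [jThetaLogDeriv, thetaDeriv_neg hb0 hb1 hx]
  exact mul_div_cancel_right₀ _ (jTheta_ne_zero hb0 hb1 hκ hx)

lemma appellConst_mul_jTheta (hb0 : 0 < b) (hb1 : b < 1) {x x' : ℝ} (hx : PoleFree b x)
    (hx' : PoleFree b x') :
    appellConst b x x' * jTheta b x' * jTheta b x = kappa b * x * jTheta b (x' / x) := by
  have hx0 := hx.1
  have h := theta_mul_appell_sub hb0 hb1 (u := -1 / x) hx hx' (by simp [hx0])
  rw [div_mul_cancel₀ _ hx0, theta_neg_one, neg_one_mul,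
    show -1 / x * x' = -(x' / x) by ring] at h
  have happell := appell_neg_one_mul_jTheta hb0 hb1 hx
  simp only [jTheta] at *
  linear_combination (-theta b (-x)) * h + theta b (-(x' / x)) * happell

/-- The addition formula for logarithmic derivatives of theta functions. It is obtained by
eliminating the Appell–Lerch series from three instances of their determinant identities. -/
theorem jThetaLogDeriv_addition (hb0 : 0 < b) (hb1 : b < 1) (hκ : kappa b ≠ 0) {x x' y : ℝ}
    (hx : PoleFree b x) (hx' : PoleFree b x') (hxy : PoleFree b (x * y))
    (hxy' : PoleFree b (x' * y)) :
    kappa b * x * jTheta b (x' / x) * jTheta b y * jTheta b (x * x' * y) =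
      (jThetaLogDeriv b x' - jThetaLogDeriv b x + jThetaLogDeriv b (x * y) -
        jThetaLogDeriv b (x' * y)) *
        (jTheta b x * jTheta b x' * jTheta b (x * y) * jTheta b (x' * y)) := by
  have hy : -y ≠ 0 := neg_ne_zero.2 (right_ne_zero_of_mul hxy.1)
  have h := theta_mul_appell_sub hb0 hb1 (u := -y) hx hx' hy
  have h_x := theta_mul_appell_one_sub hb0 hb1 (u := -y) hx hy
  have h_x' := theta_mul_appell_one_sub hb0 hb1 (u := -y) hx' hy
  rw [show -y * x * x' = -(x * x' * y) by ring, show -y * x = -(x * y) by ring,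
    show -y * x' = -(x' * y) by ring] at *
  rw [thetaDeriv_neg hb0 hb1 hxy] at h_x
  rw [thetaDeriv_neg hb0 hb1 hxy'] at h_x'
  have hconst := appellConst_mul_jTheta hb0 hb1 hx hx'
  rw [jThetaLogDeriv_eq hb0 hb1 hκ hx, jThetaLogDeriv_eq hb0 hb1 hκ hx',
    jThetaLogDeriv_eq hb0 hb1 hκ hxy, jThetaLogDeriv_eq hb0 hb1 hκ hxy']
  simp only [← jTheta.eq_1] at *
  linear_combination (-jTheta b y * jTheta b (x * x' * y)) * hconst -
    (jTheta b y * jTheta b x * jTheta b x') * h -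
    (jTheta b (x' * y) * jTheta b x * jTheta b x') * h_x +
    (jTheta b (x * y) * jTheta b x * jTheta b x') * h_x'

lemma poleFree_neg (hb0 : 0 < b) {x : ℝ} (hx : 0 < x) : PoleFree b (-x) :=
  ⟨neg_ne_zero.2 hx.ne', fun r h ↦ by linarith [mul_pos hx (zpow_pos hb0 (2 * r))]⟩

lemma poleFree_zpow {q : ℝ} (hq0 : 0 < q) (hq1 : q < 1) {m k : ℤ} (h : ¬2 * m ∣ k) :
    PoleFree (q ^ m) (q ^ k) := by
  refine ⟨zpow_ne_zero _ hq0.ne', fun r hr ↦ h ⟨-r, ?_⟩⟩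
  rw [← zpow_mul, ← zpow_add₀ hq0.ne', zpow_eq_one_iff_right₀ hq0.le hq1.ne] at hr
  linear_combination hr

lemma jThetaLogDeriv_sq_div (hb0 : 0 < b) (hb1 : b < 1) {x : ℝ} (hx : x ≠ 0) :
    jThetaLogDeriv b (b ^ 2 / x) = -jThetaLogDeriv b x := by
  have hx' := neg_ne_zero.2 hx
  rw [jThetaLogDeriv, ← div_neg, theta_sq_div hb0 hx', thetaDeriv_sq_div hb0 hb1 hx', neg_div,
    jThetaLogDeriv]

lemma jThetaLogDeriv_inv (hb0 : 0 < b) (hb1 : b < 1) {x : ℝ} (hx : x ≠ 0)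
    (h : jTheta b x ≠ 0) : jThetaLogDeriv b x⁻¹ = 1 - jThetaLogDeriv b x := by
  have hx' := neg_ne_zero.2 hx
  unfold jThetaLogDeriv jTheta at *
  rw [← inv_neg, theta_inv hx', thetaDeriv_inv hb0 hb1 hx']
  field_simp

end FunctionalEquations

section BaseChange

variable {b : ℝ}

lemma summable_int_convolution {f g : ℤ → ℝ} (hf : Summable f) (hg : Summable g) (k : ℤ) :
    Summable fun r ↦ f r * g (k - r) := by
  have hfg : Summable fun z : ℤ × ℤ ↦ f z.1 * g z.2 :=
    summable_mul_of_summable_norm hf.norm hg.norm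
  exact ((antidiagonalShear.summable_iff (f := fun z ↦ f z.1 * g z.2)).2 hfg).prod_factor k

lemma hasSum_int_convolution_mul_cast {f g : ℤ → ℝ} (hf : Summable f) (hg : Summable g)
    (hf' : Summable fun r : ℤ ↦ f r * r) (hg' : Summable fun r : ℤ ↦ g r * r) :
    HasSum (fun k : ℤ ↦ (∑' r, f r * g (k - r)) * k)
      ((∑' r, f r * (r : ℝ)) * (∑' r, g r) + (∑' r, f r) * ∑' r, g r * (r : ℝ)) := by
  refine ((hasSum_int_convolution hf' hg).add (hasSum_int_convolution hf hg')).congr_fun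
    fun k ↦ ?_
  rw [← (summable_int_convolution hf' hg k).tsum_add (summable_int_convolution hf hg' k),
    ← tsum_mul_right]
  refine tsum_congr fun r ↦ ?_
  push_cast
  ring

lemma tsum_theta_sq_reindex (hb0 : 0 < b) (k : ℤ) :
    ∑' r : ℤ, b ^ ((2 * r - k) ^ 2 - (2 * r - k)) = theta (b ^ 4) (b ^ 2) := by
  unfold theta
  rcases Int.even_or_odd' k with ⟨j, rfl | rfl⟩
  · rw [← (Equiv.addRight j).tsum_eq]
    refine tsum_congr fun r ↦ ?_
    rw [Equiv.coe_addRight, ← zpow_natCast b 2, ← zpow_natCast b 4, ← zpow_mul, ← zpow_mul,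
      ← zpow_add₀ hb0.ne']
    congr 1; push_cast; ring
  · rw [← (Equiv.subLeft (1 + j)).tsum_eq]
    refine tsum_congr fun r ↦ ?_
    rw [Equiv.subLeft_apply, ← zpow_natCast b 2, ← zpow_natCast b 4, ← zpow_mul, ← zpow_mul,
      ← zpow_add₀ hb0.ne']
    congr 1; push_cast; ring

lemma tsum_theta_sq_base_convolution (hb0 : 0 < b) {y : ℝ} (hy : y ≠ 0) (k : ℤ) :
    ∑' r : ℤ, ((b ^ 2) ^ (r ^ 2 - r) * y ^ r) *
        ((b ^ 2) ^ ((k - r) ^ 2 - (k - r)) * (b ^ 2 * y) ^ (k - r)) =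
      theta (b ^ 4) (b ^ 2) * (b ^ (k ^ 2 - k) * y ^ k) := by
  rw [← tsum_theta_sq_reindex hb0 k, ← tsum_mul_right]
  refine tsum_congr fun r ↦ ?_
  have hy : y ^ k = y ^ r * y ^ (k - r) := by rw [← zpow_add₀ hy, add_sub_cancel]
  have hexp : (b ^ 2) ^ (r ^ 2 - r) * (b ^ 2) ^ ((k - r) ^ 2 - (k - r)) * (b ^ 2) ^ (k - r) =
      b ^ (k ^ 2 - k) * b ^ ((2 * r - k) ^ 2 - (2 * r - k)) := by
    rw [← zpow_natCast b 2]
    simp only [← zpow_mul, ← zpow_add₀ hb0.ne']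
    congr 1; push_cast; ring
  rw [mul_zpow, hy]
  linear_combination (y ^ r * y ^ (k - r)) * hexp

lemma theta_sq_base_mul (hb0 : 0 < b) (hb1 : b < 1) {y : ℝ} (hy : y ≠ 0) :
    theta (b ^ 2) y * theta (b ^ 2) (b ^ 2 * y) = theta (b ^ 4) (b ^ 2) * theta b y := by
  have h0 : 0 < b ^ 2 := by positivity
  have h1 : b ^ 2 < 1 := pow_lt_one₀ hb0.le hb1 two_ne_zero
  have h := hasSum_int_convolution (summable_theta h0 h1 hy)
    (summable_theta h0 h1 (mul_ne_zero h0.ne' hy))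
  simp only [tsum_theta_sq_base_convolution hb0 hy] at h
  exact h.tsum_eq.symm.trans tsum_mul_left

lemma thetaDeriv_sq_base_mul (hb0 : 0 < b) (hb1 : b < 1) {y : ℝ} (hy : y ≠ 0) :
    thetaDeriv (b ^ 2) y * theta (b ^ 2) (b ^ 2 * y) +
        theta (b ^ 2) y * thetaDeriv (b ^ 2) (b ^ 2 * y) =
      theta (b ^ 4) (b ^ 2) * thetaDeriv b y := by
  have h0 : 0 < b ^ 2 := by positivity
  have h1 : b ^ 2 < 1 := pow_lt_one₀ hb0.le hb1 two_ne_zero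
  have hy' := mul_ne_zero h0.ne' hy
  have h := hasSum_int_convolution_mul_cast (summable_theta h0 h1 hy) (summable_theta h0 h1 hy')
    (summable_thetaDeriv h0 h1 hy) (summable_thetaDeriv h0 h1 hy')
  simp only [tsum_theta_sq_base_convolution hb0 hy, mul_assoc (theta _ _)] at h
  exact h.tsum_eq.symm.trans tsum_mul_left

/-- The alternating theta series `∑ (-1) ^ r b ^ (2 r²)`. -/
noncomputable def thetaAlt (b : ℝ) : ℝ :=
  ∑' r : ℤ, b ^ (2 * r ^ 2) * (-1) ^ r

lemma neg_one_zpow_sub (m r : ℤ) : (-1 : ℝ) ^ (m - r) = (-1) ^ m * (-1) ^ r := by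
  rw [zpow_sub₀ (by norm_num), div_eq_mul_inv, ← inv_zpow, inv_neg_one]

lemma tsum_theta_neg_convolution (hb0 : 0 < b) {y : ℝ} (hy : y ≠ 0) (k : ℤ) :
    ∑' r : ℤ, (b ^ (r ^ 2 - r) * y ^ r) * (b ^ ((k - r) ^ 2 - (k - r)) * (-y) ^ (k - r)) =
      y ^ k * b ^ (k ^ 2 - k) * ∑' r : ℤ, b ^ (2 * r ^ 2 - 2 * k * r) * (-1) ^ (k - r) := by
  rw [← tsum_mul_left]
  refine tsum_congr fun r ↦ ?_
  have hy : y ^ k = y ^ r * y ^ (k - r) := by rw [← zpow_add₀ hy, add_sub_cancel]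
  have hexp : b ^ (r ^ 2 - r) * b ^ ((k - r) ^ 2 - (k - r)) =
      b ^ (k ^ 2 - k) * b ^ (2 * r ^ 2 - 2 * k * r) := by
    rw [← zpow_add₀ hb0.ne', ← zpow_add₀ hb0.ne']; congr 1; ring
  rw [neg_eq_neg_one_mul y, mul_zpow, hy]
  linear_combination (y ^ r * y ^ (k - r) * (-1) ^ (k - r)) * hexp

lemma tsum_theta_neg_convolution_even (hb0 : 0 < b) {y : ℝ} (hy : y ≠ 0) (j : ℤ) :
    ∑' r : ℤ, (b ^ (r ^ 2 - r) * y ^ r) *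
        (b ^ ((2 * j - r) ^ 2 - (2 * j - r)) * (-y) ^ (2 * j - r)) =
      thetaAlt b * ((b ^ 2) ^ (j ^ 2 - j) * (-y ^ 2) ^ j) := by
  rw [tsum_theta_neg_convolution hb0 hy, thetaAlt, ← (Equiv.addRight j).tsum_eq, ← tsum_mul_left,
    ← tsum_mul_right]
  refine tsum_congr fun r ↦ ?_
  have hexp : b ^ ((2 * j) ^ 2 - 2 * j) * b ^ (2 * (r + j) ^ 2 - 2 * (2 * j) * (r + j)) =
      b ^ (2 * r ^ 2) * (b ^ 2) ^ (j ^ 2 - j) := by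
    rw [← zpow_natCast b 2, ← zpow_mul, ← zpow_add₀ hb0.ne', ← zpow_add₀ hb0.ne']
    congr 1; push_cast; ring
  rw [Equiv.coe_addRight, show 2 * j - (r + j) = j - r by ring, neg_one_zpow_sub,
    neg_eq_neg_one_mul (y ^ 2), mul_zpow, ← zpow_natCast y 2, ← zpow_mul, Nat.cast_ofNat]
  linear_combination (y ^ (2 * j) * ((-1) ^ j * (-1) ^ r)) * hexp

lemma tsum_theta_neg_convolution_odd (hb0 : 0 < b) {y : ℝ} (hy : y ≠ 0) (j : ℤ) :
    ∑' r : ℤ, (b ^ (r ^ 2 - r) * y ^ r) *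
      (b ^ ((2 * j + 1 - r) ^ 2 - (2 * j + 1 - r)) * (-y) ^ (2 * j + 1 - r)) = 0 := by
  rw [tsum_theta_neg_convolution hb0 hy]
  set S := ∑' r : ℤ, b ^ (2 * r ^ 2 - 2 * (2 * j + 1) * r) * (-1 : ℝ) ^ (2 * j + 1 - r) with hS
  have hneg : S = -S := by
    conv_lhs => rw [hS, ← (Equiv.subLeft (2 * j + 1)).tsum_eq]
    rw [hS, ← tsum_neg]
    refine tsum_congr fun r ↦ ?_
    have hodd : (-1 : ℝ) ^ (2 * j + 1) = -1 := (odd_two_mul_add_one j).neg_one_zpow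
    rw [Equiv.subLeft_apply, sub_sub_cancel, neg_one_zpow_sub, hodd,
      show 2 * (2 * j + 1 - r) ^ 2 - 2 * (2 * j + 1) * (2 * j + 1 - r) =
        2 * r ^ 2 - 2 * (2 * j + 1) * r by ring]
    ring
  rw [self_eq_neg.1 hneg, mul_zero]

lemma hasSum_even_iff {f : ℤ → ℝ} {a : ℝ} (hodd : ∀ j, f (2 * j + 1) = 0) :
    HasSum (fun j ↦ f (2 * j)) a ↔ HasSum f a := by
  refine (mul_right_injective₀ (two_ne_zero (α := ℤ))).hasSum_iff fun k hk ↦ ?_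
  obtain ⟨j, rfl | rfl⟩ := Int.even_or_odd' k
  · exact absurd ⟨j, rfl⟩ hk
  · exact hodd j

lemma theta_mul_theta_neg (hb0 : 0 < b) (hb1 : b < 1) {y : ℝ} (hy : y ≠ 0) :
    theta b y * theta b (-y) = thetaAlt b * theta (b ^ 2) (-y ^ 2) := by
  have h := hasSum_int_convolution (summable_theta hb0 hb1 hy)
    (summable_theta hb0 hb1 (neg_ne_zero.2 hy))
  rw [← hasSum_even_iff (tsum_theta_neg_convolution_odd hb0 hy)] at h
  simp only [tsum_theta_neg_convolution_even hb0 hy] at h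
  exact h.tsum_eq.symm.trans tsum_mul_left

lemma thetaDeriv_mul_theta_neg (hb0 : 0 < b) (hb1 : b < 1) {y : ℝ} (hy : y ≠ 0) :
    thetaDeriv b y * theta b (-y) + theta b y * thetaDeriv b (-y) =
      2 * thetaAlt b * thetaDeriv (b ^ 2) (-y ^ 2) := by
  have hy' := neg_ne_zero.2 hy
  have h := hasSum_int_convolution_mul_cast (summable_theta hb0 hb1 hy)
    (summable_theta hb0 hb1 hy') (summable_thetaDeriv hb0 hb1 hy) (summable_thetaDeriv hb0 hb1 hy')
  rw [← hasSum_even_iff fun j ↦ by rw [tsum_theta_neg_convolution_odd hb0 hy, zero_mul]] at h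
  simp only [tsum_theta_neg_convolution_even hb0 hy] at h
  refine h.tsum_eq.symm.trans ?_
  rw [thetaDeriv, ← tsum_mul_left]
  refine tsum_congr fun j ↦ ?_
  push_cast
  ring

lemma jThetaLogDeriv_sq_base_add (hb0 : 0 < b) (hb1 : b < 1) {x : ℝ} (hx : x ≠ 0)
    (h₁ : jTheta (b ^ 2) x ≠ 0) (h₂ : jTheta (b ^ 2) (b ^ 2 * x) ≠ 0) :
    jThetaLogDeriv (b ^ 2) x + jThetaLogDeriv (b ^ 2) (b ^ 2 * x) = jThetaLogDeriv b x := by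
  have hx' := neg_ne_zero.2 hx
  unfold jThetaLogDeriv jTheta at *
  rw [← mul_neg] at *
  have hmul := theta_sq_base_mul hb0 hb1 hx'
  have hne : theta (b ^ 4) (b ^ 2) * theta b (-x) ≠ 0 := hmul ▸ mul_ne_zero h₁ h₂
  rw [div_add_div _ _ h₁ h₂, hmul, thetaDeriv_sq_base_mul hb0 hb1 hx',
    mul_div_mul_left _ _ (left_ne_zero_of_mul hne)]

lemma jThetaLogDeriv_add_neg (hb0 : 0 < b) (hb1 : b < 1) {x : ℝ} (hx : x ≠ 0)
    (h₁ : jTheta b x ≠ 0) (h₂ : jTheta b (-x) ≠ 0) :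
    jThetaLogDeriv b x + jThetaLogDeriv b (-x) = 2 * jThetaLogDeriv (b ^ 2) (x ^ 2) := by
  have hx' := neg_ne_zero.2 hx
  unfold jThetaLogDeriv jTheta at *
  have hmul := theta_mul_theta_neg hb0 hb1 hx'
  have hderiv := thetaDeriv_mul_theta_neg hb0 hb1 hx'
  rw [neg_sq] at hmul hderiv
  have hne : thetaAlt b * theta (b ^ 2) (-x ^ 2) ≠ 0 := hmul ▸ mul_ne_zero h₁ h₂
  rw [div_add_div _ _ h₁ h₂, hmul, hderiv, mul_assoc, mul_div_assoc,
    mul_div_mul_left _ _ (left_ne_zero_of_mul hne)]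

end BaseChange

/-! ### The Jacobi triple product -/

section QPochhammer

variable {p : ℝ}

/-- The infinite `q`-Pochhammer symbol `(a; p)_∞`. -/
noncomputable def qPochInf (a p : ℝ) : ℝ :=
  ∏' n : ℕ, (1 - a * p ^ n)

/-- The finite `q`-Pochhammer symbol `(a; p)_n`. -/
noncomputable def qPoch (a p : ℝ) (n : ℕ) : ℝ :=
  ∏ i ∈ Finset.range n, (1 - a * p ^ i)

lemma qPoch_succ (a p : ℝ) (n : ℕ) : qPoch a p (n + 1) = qPoch a p n * (1 - a * p ^ n) :=
  Finset.prod_range_succ _ _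

lemma summable_neg_mul_pow (hp0 : 0 < p) (hp1 : p < 1) (a : ℝ) :
    Summable fun n : ℕ ↦ -(a * p ^ n) :=
  ((summable_geometric_of_lt_one hp0.le hp1).mul_left a).neg

lemma tendsto_qPoch (hp0 : 0 < p) (hp1 : p < 1) (a : ℝ) :
    Tendsto (qPoch a p) atTop (𝓝 (qPochInf a p)) := by
  have h : Multipliable fun n : ℕ ↦ 1 - a * p ^ n := by
    simpa only [sub_eq_add_neg] using
      Real.multipliable_one_add_of_summable (summable_neg_mul_pow hp0 hp1 a)
  exact h.tendsto_prod_tprod_nat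

lemma qPochInf_ne_zero (hp0 : 0 < p) (hp1 : p < 1) {a : ℝ} (h : ∀ n : ℕ, a * p ^ n ≠ 1) :
    qPochInf a p ≠ 0 := by
  have hne := tprod_one_add_ne_zero_of_summable (f := fun n : ℕ ↦ -(a * p ^ n))
    (fun n ↦ by rw [← sub_eq_add_neg]; exact sub_ne_zero.2 (h n).symm)
    (summable_neg_mul_pow hp0 hp1 a).norm
  simpa only [qPochInf, sub_eq_add_neg] using hne

lemma qPochInf_mul_neg (hp0 : 0 < p) (hp1 : p < 1) (a : ℝ) :
    qPochInf a p * qPochInf (-a) p = qPochInf (a ^ 2) (p ^ 2) := by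
  have h := (tendsto_qPoch hp0 hp1 a).mul (tendsto_qPoch hp0 hp1 (-a))
  refine tendsto_nhds_unique (h.congr fun n ↦ ?_)
    (tendsto_qPoch (by positivity) (pow_lt_one₀ hp0.le hp1 two_ne_zero) (a ^ 2))
  rw [qPoch, qPoch, qPoch, ← Finset.prod_mul_distrib]
  refine Finset.prod_congr rfl fun i _ ↦ ?_
  ring

lemma qPoch_mul_left (a p : ℝ) (m n : ℕ) :
    qPoch a p (m * n) = ∏ j ∈ Finset.range m, qPoch (a * p ^ j) (p ^ m) n := by
  induction n with
  | zero => simp [qPoch]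
  | succ n ih =>
    simp only [qPoch_succ, Finset.prod_mul_distrib, ← ih]
    rw [qPoch, qPoch, Nat.mul_succ, Finset.prod_range_add]
    congr 1
    refine Finset.prod_congr rfl fun j _ ↦ ?_
    ring

lemma qPochInf_eq_prod (hp0 : 0 < p) (hp1 : p < 1) (a : ℝ) {m : ℕ} (hm : 0 < m) :
    qPochInf a p = ∏ j ∈ Finset.range m, qPochInf (a * p ^ j) (p ^ m) := by
  have h := (tendsto_qPoch hp0 hp1 a).comp (tendsto_id.nsmul_atTop (α := ℕ) hm)
  refine tendsto_nhds_unique h (Tendsto.congr (fun n ↦ (qPoch_mul_left a p m n).symm) ?_)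
  exact tendsto_finsetProd _ fun j _ ↦
    tendsto_qPoch (by positivity) (pow_lt_one₀ hp0.le hp1 hm.ne') _

lemma qPochInf_eq_mul (hp0 : 0 < p) (hp1 : p < 1) (a : ℝ) :
    qPochInf a p = (1 - a) * qPochInf (a * p) p := by
  have h := (tendsto_qPoch hp0 hp1 (a * p)).const_mul (1 - a)
  refine tendsto_nhds_unique ((tendsto_qPoch hp0 hp1 a).comp (tendsto_add_atTop_nat 1))
    (h.congr fun n ↦ ?_)
  rw [Function.comp_apply, qPoch, qPoch, Finset.prod_range_succ', pow_zero, mul_one, mul_comm]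
  simp only [pow_succ', mul_assoc]

lemma qPoch_self_pos (hp0 : 0 < p) (hp1 : p < 1) (n : ℕ) : 0 < qPoch p p n := by
  refine Finset.prod_pos fun i _ ↦ ?_
  rw [← pow_succ', sub_pos]
  exact pow_lt_one₀ hp0.le hp1 i.succ_ne_zero

lemma qPoch_self_antitone (hp0 : 0 < p) (hp1 : p < 1) : Antitone (qPoch p p) := by
  refine antitone_nat_of_succ_le fun n ↦ ?_
  rw [qPoch_succ]
  exact mul_le_of_le_one_right (qPoch_self_pos hp0 hp1 n).le (sub_le_self _ (by positivity))

lemma qPochInf_self_pos (hp0 : 0 < p) (hp1 : p < 1) : 0 < qPochInf p p := by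
  refine (qPochInf_ne_zero hp0 hp1 fun n ↦ ?_).symm.lt_of_le
    (ge_of_tendsto' (tendsto_qPoch hp0 hp1 p) fun n ↦ (qPoch_self_pos hp0 hp1 n).le)
  rw [← pow_succ']
  exact (pow_lt_one₀ hp0.le hp1 n.succ_ne_zero).ne

/-- The reciprocal `1 / (p; p)_m`, extended by `0` to negative `m` as is customary. -/
noncomputable def invQPoch (p : ℝ) (m : ℤ) : ℝ :=
  if m < 0 then 0 else (qPoch p p m.toNat)⁻¹

lemma invQPoch_natCast (p : ℝ) (n : ℕ) : invQPoch p n = (qPoch p p n)⁻¹ := by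
  rw [invQPoch, if_neg (by lia), Int.toNat_natCast]

lemma invQPoch_of_neg (p : ℝ) {m : ℤ} (hm : m < 0) : invQPoch p m = 0 :=
  if_pos hm

lemma invQPoch_sub_one (hp0 : 0 < p) (hp1 : p < 1) (m : ℤ) :
    invQPoch p (m - 1) = (1 - p ^ m) * invQPoch p m := by
  rcases lt_trichotomy m 0 with hm | rfl | hm
  · rw [invQPoch_of_neg p hm, invQPoch_of_neg p (by lia), mul_zero]
  · rw [invQPoch_of_neg p (by lia), zpow_zero, sub_self, zero_mul]
  · obtain ⟨n, rfl⟩ : ∃ n : ℕ, m = (n + 1 : ℕ) := ⟨(m - 1).toNat, by lia⟩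
    have hne := (qPoch_self_pos hp0 hp1 (n + 1)).ne'
    rw [show ((n + 1 : ℕ) : ℤ) - 1 = n by lia, invQPoch_natCast, invQPoch_natCast, zpow_natCast]
    rw [qPoch_succ, ← pow_succ'] at *
    have := left_ne_zero_of_mul hne
    have := right_ne_zero_of_mul hne
    field_simp

lemma invQPoch_nonneg (hp0 : 0 < p) (hp1 : p < 1) (m : ℤ) : 0 ≤ invQPoch p m := by
  unfold invQPoch
  split_ifs
  · rfl
  · exact (inv_pos.2 (qPoch_self_pos hp0 hp1 _)).le

lemma invQPoch_le (hp0 : 0 < p) (hp1 : p < 1) (m : ℤ) : invQPoch p m ≤ (qPochInf p p)⁻¹ := by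
  have hpos := qPochInf_self_pos hp0 hp1
  unfold invQPoch
  split_ifs
  · positivity
  · exact inv_anti₀ hpos
      ((qPoch_self_antitone hp0 hp1).le_of_tendsto (tendsto_qPoch hp0 hp1 p) _)

lemma tendsto_invQPoch (hp0 : 0 < p) (hp1 : p < 1) :
    Tendsto (invQPoch p) atTop (𝓝 (qPochInf p p)⁻¹) := by
  have htoNat : Tendsto Int.toNat atTop atTop :=
    tendsto_atTop.2 fun N ↦ (eventually_ge_atTop (N : ℤ)).mono fun r hr ↦ by lia
  refine (((tendsto_qPoch hp0 hp1 p).comp htoNat).inv₀ (qPochInf_self_pos hp0 hp1).ne').congr' ?_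
  filter_upwards [eventually_ge_atTop 0] with m hm
  rw [invQPoch, if_neg hm.not_gt, Function.comp_apply]

/-- The central `p`-binomial coefficient `(p; p)_{2n} / ((p; p)_{n - k} (p; p)_{n + k})`. -/
noncomputable def tripleCoeff (p : ℝ) (n : ℕ) (k : ℤ) : ℝ :=
  qPoch p p (2 * n) * invQPoch p (n - k) * invQPoch p (n + k)

lemma tripleCoeff_zero (p : ℝ) (k : ℤ) : tripleCoeff p 0 k = if k = 0 then 1 else 0 := by
  unfold tripleCoeff invQPoch
  rcases lt_trichotomy k 0 with h | rfl | h
  · simp [h, h.ne]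
  · simp [qPoch]
  · simp [h, h.ne']

lemma tripleCoeff_succ (hp0 : 0 < p) (hp1 : p < 1) (n : ℕ) (k : ℤ) :
    tripleCoeff p (n + 1) k = (1 + p ^ (2 * n + 1)) * tripleCoeff p n k +
      p ^ ((n : ℤ) + 1 - k) * tripleCoeff p n (k - 1) +
      p ^ ((n : ℤ) + 1 + k) * tripleCoeff p n (k + 1) := by
  have hp := hp0.ne'
  have hsub := invQPoch_sub_one hp0 hp1 (n + 1 - k)
  have hsub' := invQPoch_sub_one hp0 hp1 (n + 1 - k - 1)
  have hadd := invQPoch_sub_one hp0 hp1 (n + 1 + k)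
  have hadd' := invQPoch_sub_one hp0 hp1 (n + 1 + k - 1)
  rw [hsub, zpow_sub_one₀ hp] at hsub'
  rw [hadd, zpow_sub_one₀ hp] at hadd'
  have hpow : p ^ (2 * n + 1) = p ^ ((n : ℤ) + 1 - k) * p ^ ((n : ℤ) + 1 + k) * p⁻¹ := by
    rw [← zpow_add₀ hp, ← zpow_sub_one₀ hp, ← zpow_natCast]
    congr 1; push_cast; ring
  have hPoch : qPoch p p (2 * (n + 1)) =
      qPoch p p (2 * n) * (1 - p ^ (2 * n + 1)) * (1 - p ^ (2 * n + 1) * p) := by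
    rw [show 2 * (n + 1) = 2 * n + 1 + 1 by ring, qPoch_succ, qPoch_succ]
    ring
  unfold tripleCoeff
  rw [hPoch, hpow]
  push_cast
  rw [show (n : ℤ) - k = n + 1 - k - 1 by ring, show (n : ℤ) + k = n + 1 + k - 1 by ring,
    show (n : ℤ) - (k - 1) = n + 1 - k by ring, show (n : ℤ) + (k - 1) = n + 1 + k - 1 - 1 by ring,
    show (n : ℤ) - (k + 1) = n + 1 - k - 1 - 1 by ring, show (n : ℤ) + (k + 1) = n + 1 + k by ring,
    hsub, hsub', hadd, hadd']
  generalize p ^ ((n : ℤ) + 1 - k) = α, p ^ ((n : ℤ) + 1 + k) = β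
  field_simp
  ring

lemma abs_tripleCoeff_le (hp0 : 0 < p) (hp1 : p < 1) (n : ℕ) (k : ℤ) :
    |tripleCoeff p n k| ≤ (qPochInf p p)⁻¹ * (qPochInf p p)⁻¹ := by
  have hle_one : qPoch p p (2 * n) ≤ 1 := by
    simpa [qPoch] using qPoch_self_antitone hp0 hp1 (Nat.zero_le (2 * n))
  have hpos := qPoch_self_pos hp0 hp1 (2 * n)
  have hsub := invQPoch_nonneg hp0 hp1 (n - k)
  have hadd := invQPoch_nonneg hp0 hp1 (n + k)
  have hinf := (qPochInf_self_pos hp0 hp1).le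
  rw [tripleCoeff, abs_of_nonneg (by positivity)]
  calc qPoch p p (2 * n) * invQPoch p (n - k) * invQPoch p (n + k)
      ≤ 1 * (qPochInf p p)⁻¹ * (qPochInf p p)⁻¹ := by gcongr <;> exact invQPoch_le hp0 hp1 _
    _ = (qPochInf p p)⁻¹ * (qPochInf p p)⁻¹ := by rw [one_mul]

lemma tendsto_tripleCoeff (hp0 : 0 < p) (hp1 : p < 1) (k : ℤ) :
    Tendsto (fun n ↦ tripleCoeff p n k) atTop (𝓝 (qPochInf p p)⁻¹) := by
  have h2n : Tendsto (fun n ↦ qPoch p p (2 * n)) atTop (𝓝 (qPochInf p p)) :=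
    (tendsto_qPoch hp0 hp1 p).comp (tendsto_id.const_mul_atTop' two_pos)
  have hsub : Tendsto (fun n : ℕ ↦ (n : ℤ) - k) atTop atTop :=
    tendsto_atTop_add_const_right _ (-k) tendsto_natCast_atTop_atTop
  have hadd : Tendsto (fun n : ℕ ↦ (n : ℤ) + k) atTop atTop :=
    tendsto_atTop_add_const_right _ k tendsto_natCast_atTop_atTop
  have hinv := tendsto_invQPoch hp0 hp1
  have h := (h2n.mul (hinv.comp hsub)).mul (hinv.comp hadd)
  rwa [mul_inv_cancel₀ (qPochInf_self_pos hp0 hp1).ne', one_mul] at h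

end QPochhammer

section TripleProduct

variable {b : ℝ}

/-- The coefficient-times-monomial of index `k` in the expansion of `tripleProd b y n`. -/
noncomputable def tripleTerm (b y : ℝ) (n : ℕ) (k : ℤ) : ℝ :=
  b ^ (k ^ 2 - k) * y ^ k * tripleCoeff (b ^ 2) n k

/-- The left-hand side `(-y; b²)_n (-b² / y; b²)_n` of the finite triple product identity. -/
noncomputable def tripleProd (b y : ℝ) (n : ℕ) : ℝ :=
  ∏ i ∈ Finset.range n, (1 + y * (b ^ 2) ^ i) * (1 + (b ^ 2) ^ (i + 1) / y)

lemma tripleProd_succ (b y : ℝ) (n : ℕ) : tripleProd b y (n + 1) =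
    tripleProd b y n * ((1 + y * (b ^ 2) ^ n) * (1 + (b ^ 2) ^ (n + 1) / y)) :=
  Finset.prod_range_succ _ _

lemma tripleProd_neg_one_succ (b : ℝ) (n : ℕ) : tripleProd b (-1) (n + 1) = 0 := by
  simp [tripleProd, Finset.prod_range_succ']

lemma tripleTerm_zero (b y : ℝ) (k : ℤ) : tripleTerm b y 0 k = if k = 0 then 1 else 0 := by
  rw [tripleTerm, tripleCoeff_zero]
  split_ifs with hk
  · simp [hk]
  · rw [mul_zero]

lemma tripleTerm_succ (hb0 : 0 < b) (hb1 : b < 1) {y : ℝ} (hy : y ≠ 0) (n : ℕ) (k : ℤ) :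
    tripleTerm b y (n + 1) k = (1 + (b ^ 2) ^ (2 * n + 1)) * tripleTerm b y n k +
      y * (b ^ 2) ^ n * tripleTerm b y n (k - 1) +
      (b ^ 2) ^ (n + 1) / y * tripleTerm b y n (k + 1) := by
  have hdown : b ^ (k ^ 2 - k) * (b ^ 2) ^ ((n : ℤ) + 1 - k) =
      b ^ ((k - 1) ^ 2 - (k - 1)) * (b ^ 2) ^ n := by
    rw [← zpow_natCast (b ^ 2) n, ← zpow_natCast b 2, ← zpow_mul, ← zpow_mul,
      ← zpow_add₀ hb0.ne', ← zpow_add₀ hb0.ne']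
    congr 1; push_cast; ring
  have hup : b ^ (k ^ 2 - k) * (b ^ 2) ^ ((n : ℤ) + 1 + k) =
      b ^ ((k + 1) ^ 2 - (k + 1)) * (b ^ 2) ^ (n + 1) := by
    rw [← zpow_natCast (b ^ 2) (n + 1), ← zpow_natCast b 2, ← zpow_mul, ← zpow_mul,
      ← zpow_add₀ hb0.ne', ← zpow_add₀ hb0.ne']
    congr 1; push_cast; ring
  have hy_down : y ^ k = y * y ^ (k - 1) := by rw [zpow_sub_one₀ hy]; field_simp
  have hy_up : y ^ (k + 1) / y = y ^ k := by rw [zpow_add_one₀ hy]; field_simp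
  unfold tripleTerm
  rw [tripleCoeff_succ (by positivity) (pow_lt_one₀ hb0.le hb1 two_ne_zero)]
  linear_combination y ^ k * tripleCoeff (b ^ 2) n (k - 1) * hdown +
    b ^ ((k - 1) ^ 2 - (k - 1)) * (b ^ 2) ^ n * tripleCoeff (b ^ 2) n (k - 1) * hy_down +
    y ^ k * tripleCoeff (b ^ 2) n (k + 1) * hup -
    b ^ ((k + 1) ^ 2 - (k + 1)) * (b ^ 2) ^ (n + 1) * tripleCoeff (b ^ 2) n (k + 1) * hy_up

lemma hasSum_sub_one {f : ℤ → ℝ} {a : ℝ} (h : HasSum f a) : HasSum (fun k ↦ f (k - 1)) a :=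
  (Equiv.subRight (1 : ℤ)).hasSum_iff.2 h

lemma hasSum_add_one {f : ℤ → ℝ} {a : ℝ} (h : HasSum f a) : HasSum (fun k ↦ f (k + 1)) a :=
  (Equiv.addRight (1 : ℤ)).hasSum_iff.2 h

theorem hasSum_tripleTerm (hb0 : 0 < b) (hb1 : b < 1) {y : ℝ} (hy : y ≠ 0) (n : ℕ) :
    HasSum (tripleTerm b y n) (tripleProd b y n) := by
  induction n with
  | zero =>
    rw [funext (tripleTerm_zero b y), tripleProd, Finset.prod_range_zero]
    exact hasSum_ite_eq 0 1
  | succ n ih =>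
    have h := ((ih.mul_left (1 + (b ^ 2) ^ (2 * n + 1))).add
      ((hasSum_sub_one ih).mul_left (y * (b ^ 2) ^ n))).add
      ((hasSum_add_one ih).mul_left ((b ^ 2) ^ (n + 1) / y))
    have hprod : tripleProd b y (n + 1) = (1 + (b ^ 2) ^ (2 * n + 1)) * tripleProd b y n +
        y * (b ^ 2) ^ n * tripleProd b y n + (b ^ 2) ^ (n + 1) / y * tripleProd b y n := by
      rw [tripleProd_succ]
      field_simp
      ring
    exact hprod ▸ h.congr_fun (tripleTerm_succ hb0 hb1 hy n)

lemma hasSum_tripleTerm_neg_one_succ_mul (hb0 : 0 < b) (hb1 : b < 1) {n : ℕ} {D : ℝ}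
    (h : HasSum (fun k : ℤ ↦ tripleTerm b (-1) n k * k) D) :
    HasSum (fun k : ℤ ↦ tripleTerm b (-1) (n + 1) k * k)
      ((1 - (b ^ 2) ^ n) * (1 - (b ^ 2) ^ (n + 1)) * D -
        (1 - b ^ 2) * (b ^ 2) ^ n * tripleProd b (-1) n) := by
  have hy : (-1 : ℝ) ≠ 0 := by norm_num
  have hsum := hasSum_tripleTerm hb0 hb1 hy n
  have hrec := ((h.mul_left (1 + (b ^ 2) ^ (2 * n + 1))).add
    (((hasSum_sub_one h).add (hasSum_sub_one hsum)).mul_left (-1 * (b ^ 2) ^ n))).add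
    (((hasSum_add_one h).sub (hasSum_add_one hsum)).mul_left ((b ^ 2) ^ (n + 1) / -1))
  have hval : (1 - (b ^ 2) ^ n) * (1 - (b ^ 2) ^ (n + 1)) * D -
      (1 - b ^ 2) * (b ^ 2) ^ n * tripleProd b (-1) n =
      (1 + (b ^ 2) ^ (2 * n + 1)) * D + -1 * (b ^ 2) ^ n * (D + tripleProd b (-1) n) +
        (b ^ 2) ^ (n + 1) / -1 * (D - tripleProd b (-1) n) := by ring
  rw [hval]
  refine hrec.congr_fun fun k ↦ ?_
  rw [tripleTerm_succ hb0 hb1 hy]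
  push_cast
  ring

lemma hasSum_tripleTerm_neg_one_mul (hb0 : 0 < b) (hb1 : b < 1) (n : ℕ) :
    HasSum (fun k : ℤ ↦ tripleTerm b (-1) (n + 1) k * k)
      (-qPoch (b ^ 2) (b ^ 2) n * qPoch (b ^ 2) (b ^ 2) (n + 1)) := by
  induction n with
  | zero =>
    have h0 : HasSum (fun k : ℤ ↦ tripleTerm b (-1) 0 k * k) 0 := by
      convert hasSum_zero using 2 with k
      rw [tripleTerm_zero]
      split_ifs with hk <;> simp [hk]
    have h := hasSum_tripleTerm_neg_one_succ_mul hb0 hb1 h0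
    convert h using 1
    simp [qPoch, tripleProd]
  | succ n ih =>
    have h := hasSum_tripleTerm_neg_one_succ_mul hb0 hb1 ih
    convert h using 1
    rw [tripleProd_neg_one_succ, qPoch_succ _ _ (n + 1), qPoch_succ]
    ring

/-- The Jacobi triple product identity. -/
theorem jTheta_eq_prod (hb0 : 0 < b) (hb1 : b < 1) {x : ℝ} (hx : x ≠ 0) :
    jTheta b x =
      qPochInf x (b ^ 2) * qPochInf (b ^ 2 / x) (b ^ 2) * qPochInf (b ^ 2) (b ^ 2) := by
  have hp0 : 0 < b ^ 2 := by positivity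
  have hp1 : b ^ 2 < 1 := pow_lt_one₀ hb0.le hb1 two_ne_zero
  set E := qPochInf (b ^ 2) (b ^ 2)
  have hE : E ≠ 0 := (qPochInf_self_pos hp0 hp1).ne'
  have hy : -x ≠ 0 := neg_ne_zero.2 hx
  have hlim : Tendsto (fun n ↦ ∑' k, tripleTerm b (-x) n k) atTop
      (𝓝 (∑' k : ℤ, b ^ (k ^ 2 - k) * (-x) ^ k * E⁻¹)) := by
    refine tendsto_tsum_of_dominated_convergence
      ((summable_theta hb0 hb1 hy).norm.mul_right (E⁻¹ * E⁻¹))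
      (fun k ↦ (tendsto_tripleCoeff hp0 hp1 k).const_mul _) (Eventually.of_forall fun n k ↦ ?_)
    rw [tripleTerm, norm_mul]
    gcongr
    exact abs_tripleCoeff_le hp0 hp1 n k
  simp only [(hasSum_tripleTerm hb0 hb1 hy _).tsum_eq, tsum_mul_right] at hlim
  have hprod := (tendsto_qPoch hp0 hp1 x).mul (tendsto_qPoch hp0 hp1 (b ^ 2 / x))
  have h := tendsto_nhds_unique hlim (hprod.congr fun n ↦ by
    rw [qPoch, qPoch, tripleProd, ← Finset.prod_mul_distrib]
    refine Finset.prod_congr rfl fun i _ ↦ ?_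
    rw [pow_succ]; field_simp; ring)
  rw [← h, jTheta, theta, inv_mul_cancel_right₀ hE]

theorem kappa_eq (hb0 : 0 < b) (hb1 : b < 1) : kappa b = qPochInf (b ^ 2) (b ^ 2) ^ 3 := by
  have hp0 : 0 < b ^ 2 := by positivity
  have hp1 : b ^ 2 < 1 := pow_lt_one₀ hb0.le hb1 two_ne_zero
  set E := qPochInf (b ^ 2) (b ^ 2)
  have hE : E ≠ 0 := (qPochInf_self_pos hp0 hp1).ne'
  have hlim : Tendsto (fun n ↦ ∑' k : ℤ, tripleTerm b (-1) (n + 1) k * k) atTop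
      (𝓝 (∑' k : ℤ, b ^ (k ^ 2 - k) * (-1) ^ k * E⁻¹ * k)) := by
    refine tendsto_tsum_of_dominated_convergence
      ((summable_thetaDeriv hb0 hb1 (y := -1) (by norm_num)).norm.mul_right (E⁻¹ * E⁻¹))
      (fun k ↦ (((tendsto_tripleCoeff hp0 hp1 k).comp
        (tendsto_add_atTop_nat 1)).const_mul _).mul_const _)
      (Eventually.of_forall fun n k ↦ ?_)
    rw [tripleTerm, norm_mul, norm_mul, mul_right_comm, ← norm_mul (_ * _) (k : ℝ)]
    gcongr
    exact abs_tripleCoeff_le hp0 hp1 (n + 1) k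
  simp only [(hasSum_tripleTerm_neg_one_mul hb0 hb1 _).tsum_eq, mul_right_comm _ E⁻¹,
    tsum_mul_right] at hlim
  have hPoch := tendsto_qPoch hp0 hp1 (b ^ 2)
  have h := tendsto_nhds_unique hlim (hPoch.neg.mul (hPoch.comp (tendsto_add_atTop_nat 1)))
  rw [← thetaDeriv] at h
  rw [kappa]
  field_simp at h
  linear_combination -h

lemma kappa_ne_zero (hb0 : 0 < b) (hb1 : b < 1) : kappa b ≠ 0 := by
  rw [kappa_eq hb0 hb1]
  exact pow_ne_zero _
    (qPochInf_self_pos (by positivity) (pow_lt_one₀ hb0.le hb1 two_ne_zero)).ne'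

end TripleProduct

section ThetaProducts

variable {b q t : ℝ}

lemma jTheta_neg_ne_zero (hb0 : 0 < b) (hb1 : b < 1) {x : ℝ} (hx : 0 < x) : jTheta b (-x) ≠ 0 :=
  jTheta_ne_zero hb0 hb1 (kappa_ne_zero hb0 hb1) (poleFree_neg hb0 hx)

lemma theta_ne_zero (hb0 : 0 < b) (hb1 : b < 1) {x : ℝ} (hx : 0 < x) : theta b x ≠ 0 := by
  simpa only [jTheta, neg_neg] using jTheta_neg_ne_zero hb0 hb1 hx

lemma poleFree_pow (hq0 : 0 < q) (hq1 : q < 1) {m k : ℕ} (hk : ¬2 * m ∣ k) :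
    PoleFree (q ^ m) (q ^ k) := by
  have h : PoleFree (q ^ (m : ℤ)) (q ^ (k : ℤ)) := poleFree_zpow hq0 hq1 (by exact_mod_cast hk)
  exact_mod_cast h

lemma jTheta_pow_ne_zero (hq0 : 0 < q) (hq1 : q < 1) {m k : ℕ} (hm : m ≠ 0) (hk : ¬2 * m ∣ k) :
    jTheta (q ^ m) (q ^ k) ≠ 0 :=
  have hb0 : 0 < q ^ m := by positivity
  have hb1 : q ^ m < 1 := pow_lt_one₀ hq0.le hq1 hm
  jTheta_ne_zero hb0 hb1 (kappa_ne_zero hb0 hb1) (poleFree_pow hq0 hq1 hk)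

lemma jTheta_eq_prod_of_mul_eq (hb0 : 0 < b) (hb1 : b < 1) {x z p : ℝ} (hx : x ≠ 0)
    (hp : b ^ 2 = p) (hz : z * x = p) :
    jTheta b x = qPochInf x p * qPochInf z p * qPochInf p p := by
  rw [jTheta_eq_prod hb0 hb1 hx, hp, ← hz, mul_div_cancel_right₀ z hx]

lemma qPochInf_sq_base (hb0 : 0 < b) (hb1 : b < 1) (a : ℝ) :
    qPochInf a b = qPochInf a (b ^ 2) * qPochInf (a * b) (b ^ 2) := by
  simpa [Finset.prod_range_succ] using qPochInf_eq_prod hb0 hb1 a (m := 2) (by norm_num)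

lemma qPochInf_cube_base (hb0 : 0 < b) (hb1 : b < 1) (a : ℝ) :
    qPochInf a b =
      qPochInf a (b ^ 3) * qPochInf (a * b) (b ^ 3) * qPochInf (a * b ^ 2) (b ^ 3) := by
  simpa [Finset.prod_range_succ] using qPochInf_eq_prod hb0 hb1 a (m := 3) (by norm_num)

/-- Euler's identity. -/
lemma qPochInf_neg_self_mul (hb0 : 0 < b) (hb1 : b < 1) :
    qPochInf (-b) b * qPochInf b (b ^ 2) = 1 := by
  have h0 : 0 < b ^ 2 := by positivity
  have hne := (qPochInf_self_pos h0 (pow_lt_one₀ hb0.le hb1 two_ne_zero)).ne'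
  have hsplit := qPochInf_sq_base hb0 hb1 b
  have hmul := qPochInf_mul_neg hb0 hb1 b
  rw [← pow_two] at hsplit
  refine mul_right_cancel₀ hne ?_
  rw [one_mul, mul_assoc, ← hsplit, mul_comm, hmul]

lemma jTheta_self (hb0 : 0 < b) (hb1 : b < 1) :
    jTheta b b = qPochInf b (b ^ 2) ^ 2 * qPochInf (b ^ 2) (b ^ 2) := by
  rw [jTheta_eq_prod_of_mul_eq hb0 hb1 hb0.ne' rfl (pow_two b).symm, ← pow_two]

lemma jTheta_neg_self (hb0 : 0 < b) (hb1 : b < 1) :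
    jTheta b (-b) = qPochInf (-b) (b ^ 2) ^ 2 * qPochInf (b ^ 2) (b ^ 2) := by
  rw [jTheta_eq_prod_of_mul_eq hb0 hb1 (neg_ne_zero.2 hb0.ne') rfl (z := -b) (by ring), ← pow_two]

lemma theta_sq_base_self (hb0 : 0 < b) (hb1 : b < 1) :
    theta (b ^ 2) b = qPochInf (-b) (b ^ 2) * qPochInf (b ^ 4) (b ^ 4) := by
  have h0 : 0 < b ^ 2 := by positivity
  have h1 : b ^ 2 < 1 := pow_lt_one₀ hb0.le hb1 two_ne_zero
  have h := jTheta_eq_prod_of_mul_eq h0 h1 (neg_ne_zero.2 hb0.ne') (p := b ^ 4) (z := -b * b ^ 2)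
    (by ring) (by ring)
  rw [jTheta, neg_neg] at h
  rw [h, qPochInf_sq_base h0 h1, ← pow_mul]

lemma qPochInf_self_mul_theta_sq_base (hb0 : 0 < b) (hb1 : b < 1) :
    qPochInf b (b ^ 2) * theta (b ^ 2) b = qPochInf (b ^ 2) (b ^ 2) := by
  have h0 : 0 < b ^ 2 := by positivity
  have h1 : b ^ 2 < 1 := pow_lt_one₀ hb0.le hb1 two_ne_zero
  rw [theta_sq_base_self hb0 hb1, ← mul_assoc, qPochInf_mul_neg h0 h1, qPochInf_sq_base h0 h1,
    ← pow_mul, ← pow_add]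

lemma theta_sq_base_sq_mul_jTheta_self (hb0 : 0 < b) (hb1 : b < 1) :
    theta (b ^ 2) b ^ 2 * jTheta b b = kappa b := by
  rw [jTheta_self hb0 hb1, kappa_eq hb0 hb1, ← qPochInf_self_mul_theta_sq_base hb0 hb1]
  ring

lemma theta_mul_jTheta_sq_base_sq (hb0 : 0 < b) (hb1 : b < 1) :
    theta (b ^ 4) (b ^ 2) * jTheta (b ^ 2) (b ^ 2) ^ 2 = kappa b := by
  have h0 : 0 < b ^ 2 := by positivity
  have h1 : b ^ 2 < 1 := pow_lt_one₀ hb0.le hb1 two_ne_zero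
  have h := qPochInf_self_mul_theta_sq_base h0 h1
  have hsplit := qPochInf_sq_base h0 h1 (b ^ 2)
  rw [← pow_mul, ← pow_add] at hsplit
  rw [← pow_mul] at h
  rw [jTheta_self h0 h1, kappa_eq hb0 hb1, hsplit, ← pow_mul]
  linear_combination qPochInf (b ^ 2) (b ^ 4) ^ 3 * qPochInf (b ^ 4) (b ^ 4) ^ 2 * h

lemma jTheta_self_mul_neg_one_mul_neg_self (hb0 : 0 < b) (hb1 : b < 1) :
    jTheta b b * jTheta b (-1) * jTheta b (-b) = 2 * kappa b := by
  have h0 : 0 < b ^ 2 := by positivity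
  have h1 : b ^ 2 < 1 := pow_lt_one₀ hb0.le hb1 two_ne_zero
  have hneg_one : jTheta b (-1) = 2 * qPochInf (-b ^ 2) (b ^ 2) ^ 2 * qPochInf (b ^ 2) (b ^ 2) := by
    rw [jTheta_eq_prod_of_mul_eq hb0 hb1 (by norm_num) rfl (z := -b ^ 2) (by ring),
      qPochInf_eq_mul h0 h1 (-1), neg_one_mul]
    ring
  have hmul := qPochInf_mul_neg h0 h1 b
  have heuler := qPochInf_neg_self_mul h0 h1
  rw [← hmul] at heuler
  rw [jTheta_self hb0 hb1, jTheta_neg_self hb0 hb1, hneg_one, kappa_eq hb0 hb1]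
  generalize qPochInf b (b ^ 2) = α, qPochInf (-b) (b ^ 2) = β, qPochInf (b ^ 2) (b ^ 2) = E,
    qPochInf (-b ^ 2) (b ^ 2) = γ at *
  linear_combination 2 * E ^ 3 * (γ * (α * β) + 1) * heuler

lemma kappa_mul_jTheta_mul_jTheta_neg (hb0 : 0 < b) (hb1 : b < 1) {x : ℝ} (hx : x ≠ 0) :
    kappa (b ^ 2) * jTheta b (-x) * jTheta b x * jTheta b (-b) =
      kappa b * jTheta (b ^ 2) (x ^ 2) * theta (b ^ 2) b ^ 2 := by
  have h0 : 0 < b ^ 2 := by positivity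
  have h1 : b ^ 2 < 1 := pow_lt_one₀ hb0.le hb1 two_ne_zero
  rw [kappa_eq hb0 hb1, kappa_eq h0 h1, jTheta_neg_self hb0 hb1, theta_sq_base_self hb0 hb1,
    jTheta_eq_prod hb0 hb1 hx, jTheta_eq_prod hb0 hb1 (neg_ne_zero.2 hx), div_neg,
    jTheta_eq_prod h0 h1 (pow_ne_zero 2 hx), ← div_pow, ← qPochInf_mul_neg h0 h1 x,
    ← qPochInf_mul_neg h0 h1 (b ^ 2 / x), ← pow_mul]
  ring

/-! ### Products of level six -/

lemma qPochInf_level_six (hq0 : 0 < q) (hq1 : q < 1) :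
    qPochInf q (q ^ 6) * qPochInf (q ^ 5) (q ^ 6) *
      (qPochInf (-q) (q ^ 6) * qPochInf (-q ^ 2) (q ^ 6) * qPochInf (-q ^ 4) (q ^ 6) *
        qPochInf (-q ^ 5) (q ^ 6)) = 1 := by
  have h0 : 0 < q ^ 6 := by positivity
  have h1 : q ^ 6 < 1 := pow_lt_one₀ hq0.le hq1 (by norm_num)
  have hne {k : ℕ} (hk : k ≠ 0) : qPochInf (q ^ k) (q ^ 6) ≠ 0 :=
    qPochInf_ne_zero h0 h1 fun i ↦ by
      rw [← pow_mul, ← pow_add]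
      exact (pow_lt_one₀ hq0.le hq1 (by lia)).ne
  have hmul (k : ℕ) : qPochInf (q ^ k) (q ^ 6) * qPochInf (-q ^ k) (q ^ 6) =
      qPochInf (q ^ (k * 2)) (q ^ 12) := by
    rw [qPochInf_mul_neg h0 h1, ← pow_mul, ← pow_mul]
  have hsplit (k : ℕ) : qPochInf (q ^ k) (q ^ 6) =
      qPochInf (q ^ k) (q ^ 12) * qPochInf (q ^ (k + 6)) (q ^ 12) := by
    rw [qPochInf_sq_base h0 h1, ← pow_mul, ← pow_add]
  have h₁ := hmul 1
  have h₂ := hmul 2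
  have h₄ := hmul 4
  have h₅ := hmul 5
  have hsplit₂ := hsplit 2
  have hsplit₄ := hsplit 4
  rw [pow_one] at h₁
  norm_num only at h₁ h₂ h₄ h₅ hsplit₂ hsplit₄
  refine mul_right_cancel₀ (mul_ne_zero (hne two_ne_zero) (hne four_ne_zero)) ?_
  calc _ = qPochInf q (q ^ 6) * qPochInf (-q) (q ^ 6) *
        (qPochInf (q ^ 2) (q ^ 6) * qPochInf (-q ^ 2) (q ^ 6)) *
        (qPochInf (q ^ 4) (q ^ 6) * qPochInf (-q ^ 4) (q ^ 6)) *
        (qPochInf (q ^ 5) (q ^ 6) * qPochInf (-q ^ 5) (q ^ 6)) := by ring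
    _ = _ := by
      rw [h₁, h₂, h₄, h₅, hsplit₂, hsplit₄]
      ring

lemma jTheta_pow_three (hq0 : 0 < q) (hq1 : q < 1) :
    jTheta (q ^ 3) q =
      qPochInf q (q ^ 6) * qPochInf (q ^ 5) (q ^ 6) * qPochInf (q ^ 6) (q ^ 6) :=
  jTheta_eq_prod_of_mul_eq (by positivity) (pow_lt_one₀ hq0.le hq1 (by norm_num)) hq0.ne'
    (by ring) (by ring)

lemma jTheta_sqrt_cube (ht0 : 0 < t) (ht1 : t < 1) (htq : t ^ 2 = q) {x : ℝ} (hx : x ≠ 0) :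
    jTheta (t ^ 3) x = qPochInf x (q ^ 6) * qPochInf (x * q ^ 3) (q ^ 6) *
      (qPochInf (q ^ 3 / x) (q ^ 6) * qPochInf (q ^ 3 / x * q ^ 3) (q ^ 6)) *
      (qPochInf (q ^ 3) (q ^ 6) * qPochInf (q ^ 6) (q ^ 6)) := by
  have hq0 : 0 < q := htq ▸ by positivity
  have hq1 : q < 1 := htq ▸ pow_lt_one₀ ht0.le ht1 two_ne_zero
  have h0 : 0 < q ^ 3 := by positivity
  have h1 : q ^ 3 < 1 := pow_lt_one₀ hq0.le hq1 three_ne_zero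
  rw [jTheta_eq_prod_of_mul_eq (by positivity) (pow_lt_one₀ ht0.le ht1 three_ne_zero) hx
    (p := q ^ 3) (by rw [← htq]; ring) (div_mul_cancel₀ _ hx)]
  simp only [qPochInf_sq_base h0 h1, ← pow_mul, ← pow_add]

lemma jTheta_sqrt_cube_self (ht0 : 0 < t) (ht1 : t < 1) (htq : t ^ 2 = q) :
    jTheta (t ^ 3) q = qPochInf q (q ^ 6) * qPochInf (q ^ 4) (q ^ 6) *
      (qPochInf (q ^ 2) (q ^ 6) * qPochInf (q ^ 5) (q ^ 6)) *
      (qPochInf (q ^ 3) (q ^ 6) * qPochInf (q ^ 6) (q ^ 6)) := by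
  have hq : q ≠ 0 := htq ▸ by positivity
  rw [jTheta_sqrt_cube ht0 ht1 htq hq, ← pow_succ', show q ^ 3 / q = q ^ 2 by field_simp, ← pow_add]

lemma jTheta_sqrt_cube_neg (ht0 : 0 < t) (ht1 : t < 1) (htq : t ^ 2 = q) :
    jTheta (t ^ 3) (-q) = qPochInf (-q) (q ^ 6) * qPochInf (-q ^ 4) (q ^ 6) *
      (qPochInf (-q ^ 2) (q ^ 6) * qPochInf (-q ^ 5) (q ^ 6)) *
      (qPochInf (q ^ 3) (q ^ 6) * qPochInf (q ^ 6) (q ^ 6)) := by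
  have hq : q ≠ 0 := htq ▸ by positivity
  rw [jTheta_sqrt_cube ht0 ht1 htq (neg_ne_zero.2 hq), show q ^ 3 / -q = -q ^ 2 by field_simp,
    neg_mul, neg_mul, ← pow_succ', ← pow_add]

lemma jTheta_sqrt_cube_neg_mul (ht0 : 0 < t) (ht1 : t < 1) (htq : t ^ 2 = q) :
    jTheta (t ^ 3) (-q) * jTheta q q = jTheta (t ^ 3) q * jTheta (q ^ 3) (q ^ 3) := by
  have hq0 : 0 < q := htq ▸ by positivity
  have hq1 : q < 1 := htq ▸ pow_lt_one₀ ht0.le ht1 two_ne_zero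
  have h0 : 0 < q ^ 2 := by positivity
  have h1 : q ^ 2 < 1 := pow_lt_one₀ hq0.le hq1 two_ne_zero
  have hodd : qPochInf q (q ^ 2) =
      qPochInf q (q ^ 6) * qPochInf (q ^ 3) (q ^ 6) * qPochInf (q ^ 5) (q ^ 6) := by
    rw [qPochInf_cube_base h0 h1]
    congr 1 <;> ring_nf
  have heven : qPochInf (q ^ 2) (q ^ 2) =
      qPochInf (q ^ 2) (q ^ 6) * qPochInf (q ^ 4) (q ^ 6) * qPochInf (q ^ 6) (q ^ 6) := by
    rw [qPochInf_cube_base h0 h1]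
    congr 1 <;> ring_nf
  rw [jTheta_self (by positivity) (pow_lt_one₀ hq0.le hq1 three_ne_zero), jTheta_self hq0 hq1,
    hodd, heven, jTheta_sqrt_cube_self ht0 ht1 htq, jTheta_sqrt_cube_neg ht0 ht1 htq, ← pow_mul]
  linear_combination qPochInf q (q ^ 6) * qPochInf (q ^ 2) (q ^ 6) * qPochInf (q ^ 3) (q ^ 6) ^ 3 *
    qPochInf (q ^ 4) (q ^ 6) * qPochInf (q ^ 5) (q ^ 6) * qPochInf (q ^ 6) (q ^ 6) ^ 2 *
    qPochInf_level_six hq0 hq1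

lemma jTheta_pow_six_pow_four (hq0 : 0 < q) (hq1 : q < 1) :
    jTheta (q ^ 6) (q ^ 4) = qPochInf (q ^ 2) (q ^ 6) * qPochInf (-q ^ 2) (q ^ 6) *
      (qPochInf (q ^ 4) (q ^ 6) * qPochInf (-q ^ 4) (q ^ 6)) * qPochInf (q ^ 12) (q ^ 12) := by
  have h0 : 0 < q ^ 6 := by positivity
  have h1 : q ^ 6 < 1 := pow_lt_one₀ hq0.le hq1 (by norm_num)
  rw [qPochInf_mul_neg h0 h1, qPochInf_mul_neg h0 h1]
  simp only [← pow_mul]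
  exact jTheta_eq_prod_of_mul_eq h0 h1 (by positivity) (by ring) (by ring)

lemma jTheta_pow_six_pow_two_mul (hq0 : 0 < q) (hq1 : q < 1) :
    jTheta (q ^ 6) (q ^ 2) * jTheta (q ^ 6) (q ^ 4) =
      qPochInf (q ^ 2) (q ^ 6) * qPochInf (q ^ 4) (q ^ 6) * qPochInf (q ^ 12) (q ^ 12) ^ 2 := by
  have h0 : 0 < q ^ 6 := by positivity
  have h1 : q ^ 6 < 1 := pow_lt_one₀ hq0.le hq1 (by norm_num)
  rw [jTheta_eq_prod_of_mul_eq h0 h1 (x := q ^ 2) (z := q ^ 10) (p := q ^ 12) (by positivity)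
      (by ring) (by ring),
    jTheta_eq_prod_of_mul_eq h0 h1 (x := q ^ 4) (z := q ^ 8) (p := q ^ 12) (by positivity)
      (by ring) (by ring), qPochInf_sq_base h0 h1 (q ^ 2), qPochInf_sq_base h0 h1 (q ^ 4)]
  ring_nf

lemma kappa_pow_six_mul_jTheta (ht0 : 0 < t) (ht1 : t < 1) (htq : t ^ 2 = q) :
    kappa (q ^ 6) * jTheta (q ^ 6) (q ^ 6) * jTheta (t ^ 3) q =
      jTheta (t ^ 3) (-q) * jTheta (q ^ 3) q ^ 2 * jTheta (q ^ 6) (q ^ 2) *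
        jTheta (q ^ 6) (q ^ 4) := by
  have hq0 : 0 < q := htq ▸ by positivity
  have hq1 : q < 1 := htq ▸ pow_lt_one₀ ht0.le ht1 two_ne_zero
  have h0 : 0 < q ^ 6 := by positivity
  have h1 : q ^ 6 < 1 := pow_lt_one₀ hq0.le hq1 (by norm_num)
  have hsplit := qPochInf_sq_base h0 h1 (q ^ 6)
  rw [← pow_mul, ← pow_add] at hsplit
  rw [mul_assoc _ (jTheta (q ^ 6) (q ^ 2)), jTheta_pow_six_pow_two_mul hq0 hq1, kappa_eq h0 h1,
    jTheta_self h0 h1, jTheta_pow_three hq0 hq1, jTheta_sqrt_cube_self ht0 ht1 htq,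
    jTheta_sqrt_cube_neg ht0 ht1 htq, ← pow_mul]
  norm_num only at hsplit ⊢
  have h6 := qPochInf_level_six hq0 hq1
  generalize qPochInf (q ^ 6) (q ^ 12) = δ, qPochInf (q ^ 12) (q ^ 12) = E,
    qPochInf q (q ^ 6) = α₁, qPochInf (q ^ 2) (q ^ 6) = α₂, qPochInf (q ^ 3) (q ^ 6) = α₃,
    qPochInf (q ^ 4) (q ^ 6) = α₄, qPochInf (q ^ 5) (q ^ 6) = α₅,
    qPochInf (q ^ 6) (q ^ 6) = α₆ at *
  linear_combination -E ^ 2 * α₁ * α₂ * α₃ * α₄ * α₅ * α₆ * (α₆ + δ * E) * hsplit -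
    E ^ 2 * α₁ * α₂ * α₃ * α₄ * α₅ * α₆ ^ 3 * h6

lemma theta_pow_six_mul (hq0 : 0 < q) (hq1 : q < 1) :
    theta (q ^ 6) q * theta (q ^ 6) (q ^ 5) =
      qPochInf (-q) (q ^ 6) * qPochInf (-q ^ 5) (q ^ 6) * qPochInf (q ^ 12) (q ^ 12) ^ 2 := by
  have h0 : 0 < q ^ 6 := by positivity
  have h1 : q ^ 6 < 1 := pow_lt_one₀ hq0.le hq1 (by norm_num)
  have h₁ := jTheta_eq_prod_of_mul_eq h0 h1 (x := -q) (z := -q ^ 11) (p := q ^ 12)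
    (neg_ne_zero.2 hq0.ne') (by ring) (by ring)
  have h₅ := jTheta_eq_prod_of_mul_eq h0 h1 (x := -q ^ 5) (z := -q ^ 7) (p := q ^ 12)
    (neg_ne_zero.2 (by positivity)) (by ring) (by ring)
  rw [jTheta, neg_neg] at h₁ h₅
  rw [h₁, h₅, qPochInf_sq_base h0 h1 (-q), qPochInf_sq_base h0 h1 (-q ^ 5), neg_mul, neg_mul]
  ring_nf

lemma kappa_sqrt_cube_mul_theta (ht0 : 0 < t) (ht1 : t < 1) (htq : t ^ 2 = q) :
    kappa (t ^ 3) * theta (q ^ 6) q * theta (q ^ 6) (q ^ 5) * jTheta (q ^ 6) (q ^ 4) =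
      kappa (q ^ 6) * jTheta (t ^ 3) q * jTheta (t ^ 3) (-q) ^ 2 := by
  have hq0 : 0 < q := htq ▸ by positivity
  have hq1 : q < 1 := htq ▸ pow_lt_one₀ ht0.le ht1 two_ne_zero
  have h0 : 0 < q ^ 6 := by positivity
  have h1 : q ^ 6 < 1 := pow_lt_one₀ hq0.le hq1 (by norm_num)
  have h3 : qPochInf (q ^ 3) (q ^ 3) = qPochInf (q ^ 3) (q ^ 6) * qPochInf (q ^ 6) (q ^ 6) := by
    rw [qPochInf_sq_base (by positivity) (pow_lt_one₀ hq0.le hq1 three_ne_zero), ← pow_mul,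
      ← pow_add]
  rw [mul_assoc (kappa (t ^ 3)), theta_pow_six_mul hq0 hq1, jTheta_pow_six_pow_four hq0 hq1,
    kappa_eq h0 h1, kappa_eq (by positivity) (pow_lt_one₀ ht0.le ht1 three_ne_zero),
    jTheta_sqrt_cube_self ht0 ht1 htq, jTheta_sqrt_cube_neg ht0 ht1 htq, pow_right_comm, htq, h3,
    ← pow_mul]
  have h6 := qPochInf_level_six hq0 hq1
  generalize qPochInf (q ^ 12) (q ^ 12) = E,
    qPochInf q (q ^ 6) = α₁, qPochInf (q ^ 2) (q ^ 6) = α₂, qPochInf (q ^ 3) (q ^ 6) = α₃,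
    qPochInf (q ^ 4) (q ^ 6) = α₄, qPochInf (q ^ 5) (q ^ 6) = α₅,
    qPochInf (q ^ 6) (q ^ 6) = α₆, qPochInf (-q) (q ^ 6) = β₁, qPochInf (-q ^ 2) (q ^ 6) = β₂,
    qPochInf (-q ^ 4) (q ^ 6) = β₄, qPochInf (-q ^ 5) (q ^ 6) = β₅ at *
  linear_combination -(α₃ * α₆) ^ 3 * E ^ 3 * β₁ * β₅ * β₂ * β₄ * α₂ * α₄ * h6

end ThetaProducts

section ModulusTwelve

lemma tsum_int_eq_sum_fin {E : Type*} [NormedAddCommGroup E] [CompleteSpace E] (n : ℕ) [NeZero n]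
    {f : ℤ → E} (hf : Summable f) : ∑' r, f r = ∑ j : Fin n, ∑' m : ℤ, f (m * n + (j : ℕ)) := by
  let e : Fin n × ℤ ≃ ℤ := (Equiv.prodComm (Fin n) ℤ).trans (Int.divModEquiv n).symm
  rw [← e.tsum_eq, Summable.tsum_prod (f := fun c ↦ f (e c)) (e.summable_iff.2 hf),
    tsum_fintype]
  rfl

variable {b q t : ℝ}

lemma thetaTerm_two_mul (hb0 : 0 < b) (y : ℝ) (m : ℤ) :
    b ^ ((m * 2) ^ 2 - m * 2) * y ^ (m * 2) = (b ^ 4) ^ (m ^ 2 - m) * (b ^ 2 * y ^ 2) ^ m := by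
  rw [mul_zpow, ← zpow_natCast y, ← zpow_natCast b 2, ← zpow_natCast b 4, ← zpow_mul, ← zpow_mul,
    ← zpow_mul, ← mul_assoc, ← zpow_add₀ hb0.ne']
  push_cast
  congr 2 <;> ring

lemma thetaTerm_two_mul_add_one (hb0 : 0 < b) {y : ℝ} (hy : y ≠ 0) (m : ℤ) :
    b ^ ((m * 2 + 1) ^ 2 - (m * 2 + 1)) * y ^ (m * 2 + 1) =
      y * ((b ^ 4) ^ (m ^ 2 - m) * (b ^ 6 * y ^ 2) ^ m) := by
  rw [zpow_add_one₀ hy, mul_zpow, ← zpow_natCast y, ← zpow_natCast b 6, ← zpow_natCast b 4,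
    ← zpow_mul, ← zpow_mul, ← zpow_mul, ← mul_assoc (b ^ _) (b ^ _), ← zpow_add₀ hb0.ne']
  push_cast
  ring_nf

lemma theta_eq_add (hb0 : 0 < b) (hb1 : b < 1) {y : ℝ} (hy : y ≠ 0) :
    theta b y = theta (b ^ 4) (b ^ 2 * y ^ 2) + y * theta (b ^ 4) (b ^ 6 * y ^ 2) := by
  rw [theta, tsum_int_eq_sum_fin 2 (summable_theta hb0 hb1 hy), Fin.sum_univ_two, theta, theta,
    ← tsum_mul_left]
  simp only [Fin.val_zero, Fin.val_one, Nat.cast_zero, Nat.cast_one, Nat.cast_ofNat, add_zero,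
    thetaTerm_two_mul hb0, thetaTerm_two_mul_add_one hb0 hy]

lemma thetaDeriv_eq_add (hb0 : 0 < b) (hb1 : b < 1) {y : ℝ} (hy : y ≠ 0) :
    thetaDeriv b y = 2 * thetaDeriv (b ^ 4) (b ^ 2 * y ^ 2) +
      y * (2 * thetaDeriv (b ^ 4) (b ^ 6 * y ^ 2) + theta (b ^ 4) (b ^ 6 * y ^ 2)) := by
  have h40 : 0 < b ^ 4 := by positivity
  have h41 : b ^ 4 < 1 := pow_lt_one₀ hb0.le hb1 (by norm_num)
  have hy6 : b ^ 6 * y ^ 2 ≠ 0 := by positivity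
  have h := ((summable_thetaDeriv h40 h41 hy6).mul_left 2).tsum_add (summable_theta h40 h41 hy6)
  rw [tsum_mul_left] at h
  rw [thetaDeriv, tsum_int_eq_sum_fin 2 (summable_thetaDeriv hb0 hb1 hy), Fin.sum_univ_two,
    thetaDeriv, thetaDeriv, theta, ← h, ← tsum_mul_left, ← tsum_mul_left]
  simp only [Fin.val_zero, Fin.val_one, Nat.cast_zero, Nat.cast_one, Nat.cast_ofNat, add_zero,
    thetaTerm_two_mul hb0, thetaTerm_two_mul_add_one hb0 hy]
  push_cast
  congr 1 <;> exact tsum_congr fun m ↦ by ring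

/-- The theta series in `q ^ k` with exponents `6 * r ^ 2 + (k - 6) * r`, usually written
`j(-q^k; q^12)`. -/
noncomputable def theta12 (q : ℝ) (k : ℤ) : ℝ :=
  theta (q ^ 6) (q ^ k)

/-- The Euler derivative of `theta (q ^ 6)` at `q ^ k`. -/
noncomputable def thetaDeriv12 (q : ℝ) (k : ℤ) : ℝ :=
  thetaDeriv (q ^ 6) (q ^ k)

/-- The Appell–Lerch series with terms `q ^ (6 * r ^ 2 + (k - 6) * r) / (1 - q ^ (12 * r + d))`. -/
noncomputable def appell12 (q : ℝ) (d k : ℤ) : ℝ :=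
  appell (q ^ 6) (q ^ d) (q ^ k)

/-- The connection constant `appellConst` between the Appell–Lerch series `appell12` at `d`
and `d'`. -/
noncomputable def appellConst12 (q : ℝ) (d d' : ℤ) : ℝ :=
  appellConst (q ^ 6) (q ^ d) (q ^ d')

/-- The level-six Lerch series in which the 3-dissection of the rank series is expressed. -/
noncomputable def lerch (q : ℝ) (c d : ℤ) : ℝ :=
  ∑' n : ℤ, q ^ (6 * n ^ 2 + c * n) / (1 + q ^ (6 * n + d))

lemma pow_six_pos_lt_one (hq0 : 0 < q) (hq1 : q < 1) : 0 < q ^ 6 ∧ q ^ 6 < 1 :=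
  ⟨by positivity, pow_lt_one₀ hq0.le hq1 (by norm_num)⟩

lemma zpow_twelve_add (hq0 : 0 < q) (k : ℤ) : q ^ (12 + k) = (q ^ 6) ^ 2 * q ^ k := by
  rw [zpow_add₀ hq0.ne', ← pow_mul]
  norm_cast

lemma zpow_twelve_sub (hq0 : 0 < q) (k : ℤ) : q ^ (12 - k) = (q ^ 6) ^ 2 / q ^ k := by
  rw [zpow_sub₀ hq0.ne', ← pow_mul]
  norm_cast

lemma theta12_natCast (k : ℕ) : theta12 q k = theta (q ^ 6) (q ^ k) := by
  rw [theta12, zpow_natCast]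

lemma theta12_twelve_add (hq0 : 0 < q) (k : ℤ) :
    theta12 q (12 + k) = q ^ (-k) * theta12 q k := by
  rw [theta12, zpow_twelve_add hq0, theta_sq_mul (by positivity) (by positivity), zpow_neg, theta12]

lemma theta12_twelve_sub (hq0 : 0 < q) (k : ℤ) : theta12 q (12 - k) = theta12 q k := by
  rw [theta12, zpow_twelve_sub hq0, theta_sq_div (by positivity) (by positivity), theta12]

lemma thetaDeriv12_twelve_add (hq0 : 0 < q) (hq1 : q < 1) (k : ℤ) :
    thetaDeriv12 q (12 + k) = q ^ (-k) * (thetaDeriv12 q k - theta12 q k) := by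
  rw [thetaDeriv12, zpow_twelve_add hq0, zpow_neg, theta12, thetaDeriv12,
    thetaDeriv_sq_mul (by positivity) (pow_six_pos_lt_one hq0 hq1).2 (by positivity)]

lemma thetaDeriv12_twelve_sub (hq0 : 0 < q) (hq1 : q < 1) (k : ℤ) :
    thetaDeriv12 q (12 - k) = -thetaDeriv12 q k := by
  rw [thetaDeriv12, zpow_twelve_sub hq0, thetaDeriv12,
    thetaDeriv_sq_div (by positivity) (pow_six_pos_lt_one hq0 hq1).2 (by positivity)]

lemma appell12_neg (hq0 : 0 < q) (d k : ℤ) :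
    appell12 q d k = -q ^ (-d) * appell12 q (-d) (24 - k) := by
  rw [appell12, appell_inv (by positivity) (by positivity) (by positivity), appell12, zpow_neg,
    zpow_sub₀ hq0.ne', ← pow_mul]
  norm_cast

lemma poleFree_pow_six (hq0 : 0 < q) (hq1 : q < 1) {d : ℤ} (hd : ¬12 ∣ d) :
    PoleFree (q ^ 6) (q ^ d) := by
  have h : PoleFree (q ^ (6 : ℤ)) (q ^ d) := poleFree_zpow hq0 hq1 hd
  exact_mod_cast h

lemma theta12_mul_appell12_sub (hq0 : 0 < q) (hq1 : q < 1) {d d' : ℤ} (e : ℤ) (hd : ¬12 ∣ d)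
    (hd' : ¬12 ∣ d') :
    theta12 q (e + d') * appell12 q d (e + d) - theta12 q (e + d) * appell12 q d' (e + d') =
      appellConst12 q d d' * theta12 q (e + d + d') := by
  obtain ⟨h0, h1⟩ := pow_six_pos_lt_one hq0 hq1
  simp only [theta12, appell12, appellConst12, zpow_add₀ hq0.ne']
  exact theta_mul_appell_sub h0 h1 (poleFree_pow_six hq0 hq1 hd) (poleFree_pow_six hq0 hq1 hd')
    (by positivity)

lemma theta12_mul_appell12_zero_sub (hq0 : 0 < q) (hq1 : q < 1) {d' : ℤ} (e : ℤ) (hd' : ¬12 ∣ d') :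
    theta12 q (e + d') * appell12 q 0 e - theta12 q e * appell12 q d' (e + d') =
      appellConst12 q 0 d' * theta12 q (e + d') - thetaDeriv12 q (e + d') := by
  obtain ⟨h0, h1⟩ := pow_six_pos_lt_one hq0 hq1
  simp only [theta12, thetaDeriv12, appell12, appellConst12, zpow_add₀ hq0.ne', zpow_zero]
  exact theta_mul_appell_one_sub h0 h1 (poleFree_pow_six hq0 hq1 hd') (by positivity)

lemma hasSum_appell12 (hq0 : 0 < q) (hq1 : q < 1) (d k : ℤ) :
    HasSum (fun r : ℤ ↦ q ^ (6 * r ^ 2 + (k - 6) * r) / (1 - q ^ (12 * r + d)))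
      (appell12 q d k) := by
  obtain ⟨h0, h1⟩ := pow_six_pos_lt_one hq0 hq1
  have h := (summable_appell h0 h1 (x := q ^ d) (y := q ^ k) (by positivity) (by positivity)).hasSum
  refine h.congr_fun fun r ↦ ?_
  rw [poleFactor, ← zpow_natCast q 6, ← zpow_mul, ← zpow_mul, ← zpow_mul, ← zpow_add₀ hq0.ne',
    ← zpow_add₀ hq0.ne', mul_one_div]
  push_cast
  ring_nf

lemma lerchTerm_eq (hq0 : 0 < q) (hq1 : q < 1) (c : ℤ) {d r : ℤ} (h : 6 * r + d ≠ 0) :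
    q ^ (6 * r ^ 2 + c * r) / (1 + q ^ (6 * r + d)) =
      q ^ (6 * r ^ 2 + (6 + c - 6) * r) / (1 - q ^ (12 * r + 2 * d)) -
      q ^ d * (q ^ (6 * r ^ 2 + (12 + c - 6) * r) / (1 - q ^ (12 * r + 2 * d))) := by
  have hden : q ^ (12 * r + 2 * d) = q ^ (6 * r + d) * q ^ (6 * r + d) := by
    rw [← zpow_add₀ hq0.ne']
    congr 1
    ring
  have hnum : q ^ d * q ^ (6 * r ^ 2 + (12 + c - 6) * r) =
      q ^ (6 * r ^ 2 + c * r) * q ^ (6 * r + d) := by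
    rw [← zpow_add₀ hq0.ne', ← zpow_add₀ hq0.ne']
    congr 1
    ring
  have hz1 : 1 - q ^ (6 * r + d) ≠ 0 :=
    sub_ne_zero.2 fun hz ↦ h ((zpow_eq_one_iff_right₀ hq0.le hq1.ne).1 hz.symm)
  have hz0 : 0 < q ^ (6 * r + d) := by positivity
  rw [← mul_div_assoc, hnum, hden, add_sub_cancel_left, ← sub_div]
  generalize q ^ (6 * r + d) = z at *
  rw [show 1 - z * z = (1 - z) * (1 + z) by ring]
  field_simp

lemma lerch_eq (hq0 : 0 < q) (hq1 : q < 1) (c : ℤ) {d : ℤ} (hd : ¬6 ∣ d) :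
    lerch q c d = appell12 q (2 * d) (6 + c) - q ^ d * appell12 q (2 * d) (12 + c) := by
  have h := (hasSum_appell12 hq0 hq1 (2 * d) (6 + c)).sub
    ((hasSum_appell12 hq0 hq1 (2 * d) (12 + c)).mul_left (q ^ d))
  exact (h.congr_fun fun r ↦ lerchTerm_eq hq0 hq1 c (by lia)).tsum_eq

lemma lerch_zero_eq (hq0 : 0 < q) (hq1 : q < 1) (c : ℤ) :
    lerch q c 0 = 1 / 2 + (appell12 q 0 (6 + c) - appell12 q 0 (12 + c)) := by
  have h := (hasSum_ite_eq (0 : ℤ) (1 / 2 : ℝ)).add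
    ((hasSum_appell12 hq0 hq1 0 (6 + c)).sub (hasSum_appell12 hq0 hq1 0 (12 + c)))
  refine (h.congr_fun fun r ↦ ?_).tsum_eq
  obtain rfl | hr := eq_or_ne r 0
  · norm_num
  · have h := lerchTerm_eq hq0 hq1 c (d := 0) (r := r) (by lia)
    rw [mul_zero, zpow_zero, one_mul] at h
    rw [h, if_neg hr, zero_add]

/-! ### Theta series with nome `q ^ (3 / 2)` -/

lemma sqrt_cube_pow_four_mul (ht0 : 0 < t) (htq : t ^ 2 = q) {y : ℝ} {j : ℤ}
    (hy : y ^ 2 = q ^ (2 * j)) : (t ^ 3) ^ 4 = q ^ 6 ∧ (t ^ 3) ^ 2 * y ^ 2 = q ^ (3 + 2 * j) ∧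
      (t ^ 3) ^ 6 * y ^ 2 = q ^ (9 + 2 * j) := by
  have hq : q ≠ 0 := htq ▸ by positivity
  rw [hy, zpow_add₀ hq, zpow_add₀ hq, ← htq]
  norm_cast
  simp only [← pow_mul]
  norm_num

lemma theta_sqrt_cube (ht0 : 0 < t) (ht1 : t < 1) (htq : t ^ 2 = q) {y : ℝ} {j : ℤ}
    (hy : y ^ 2 = q ^ (2 * j)) :
    theta (t ^ 3) y = theta12 q (3 + 2 * j) + y * theta12 q (9 + 2 * j) := by
  have hq0 : 0 < q := htq ▸ by positivity
  have hy0 : y ≠ 0 := pow_ne_zero_iff two_ne_zero |>.1 (hy ▸ by positivity)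
  obtain ⟨hb, h₃, h₉⟩ := sqrt_cube_pow_four_mul ht0 htq hy
  rw [theta_eq_add (by positivity) (pow_lt_one₀ ht0.le ht1 three_ne_zero) hy0, hb, h₃, h₉, theta12,
    theta12]

lemma thetaDeriv_sqrt_cube (ht0 : 0 < t) (ht1 : t < 1) (htq : t ^ 2 = q) {y : ℝ} {j : ℤ}
    (hy : y ^ 2 = q ^ (2 * j)) :
    thetaDeriv (t ^ 3) y = 2 * thetaDeriv12 q (3 + 2 * j) +
      y * (2 * thetaDeriv12 q (9 + 2 * j) + theta12 q (9 + 2 * j)) := by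
  have hq0 : 0 < q := htq ▸ by positivity
  have hy0 : y ≠ 0 := pow_ne_zero_iff two_ne_zero |>.1 (hy ▸ by positivity)
  obtain ⟨hb, h₃, h₉⟩ := sqrt_cube_pow_four_mul ht0 htq hy
  rw [thetaDeriv_eq_add (by positivity) (pow_lt_one₀ ht0.le ht1 three_ne_zero) hy0, hb, h₃, h₉,
    thetaDeriv12, thetaDeriv12, theta12]

lemma jTheta_sqrt_cube_neg_eq (ht0 : 0 < t) (ht1 : t < 1) (htq : t ^ 2 = q) :
    jTheta (t ^ 3) (-q) = theta12 q 5 + q * theta12 q 1 := by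
  have h := theta_sqrt_cube ht0 ht1 htq (y := q) (j := 1) (by norm_cast)
  have hrefl := theta12_twelve_sub (htq ▸ by positivity : 0 < q) 1
  norm_num only at h hrefl
  rw [jTheta, neg_neg, h, hrefl]

lemma jTheta_sqrt_cube_self_eq (ht0 : 0 < t) (ht1 : t < 1) (htq : t ^ 2 = q) :
    jTheta (t ^ 3) q = theta12 q 5 - q * theta12 q 1 := by
  have h := theta_sqrt_cube ht0 ht1 htq (y := -q) (j := 1) (by rw [neg_sq]; norm_cast)
  have hrefl := theta12_twelve_sub (htq ▸ by positivity : 0 < q) 1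
  norm_num only at h hrefl
  rw [jTheta, h, hrefl, neg_mul, sub_eq_add_neg]

lemma kappa_sqrt_cube (ht0 : 0 < t) (ht1 : t < 1) (htq : t ^ 2 = q) :
    kappa (t ^ 3) = theta12 q 3 - 4 * thetaDeriv12 q 3 := by
  have hq0 : 0 < q := htq ▸ by positivity
  have hq1 : q < 1 := htq ▸ pow_lt_one₀ ht0.le ht1 two_ne_zero
  have h := thetaDeriv_sqrt_cube ht0 ht1 htq (y := -1) (j := 0) (by norm_num)
  have hrefl := theta12_twelve_sub hq0 3
  have hrefl' := thetaDeriv12_twelve_sub hq0 hq1 3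
  norm_num only at h hrefl hrefl'
  rw [kappa, h, hrefl, hrefl']
  ring

lemma thetaDeriv_sqrt_cube_neg (ht0 : 0 < t) (ht1 : t < 1) (htq : t ^ 2 = q) :
    thetaDeriv (t ^ 3) (-q) =
      2 * thetaDeriv12 q 5 + 2 * q * thetaDeriv12 q 1 - q * theta12 q 1 := by
  have hq0 : 0 < q := htq ▸ by positivity
  have hq1 : q < 1 := htq ▸ pow_lt_one₀ ht0.le ht1 two_ne_zero
  have h := thetaDeriv_sqrt_cube ht0 ht1 htq (y := -q) (j := 1) (by rw [neg_sq]; norm_cast)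
  have hrefl := theta12_twelve_sub hq0 1
  have hrefl' := thetaDeriv12_twelve_sub hq0 hq1 1
  norm_num only at h hrefl hrefl'
  rw [h, hrefl, hrefl']
  ring

end ModulusTwelve

section LerchIdentities

variable {b q t : ℝ}

lemma jTheta_sq_base_mul (hb0 : 0 < b) (hb1 : b < 1) {x : ℝ} (hx : x ≠ 0) :
    jTheta (b ^ 2) x * jTheta (b ^ 2) (b ^ 2 / x) = theta (b ^ 4) (b ^ 2) * jTheta b x := by
  have hdiv : b ^ 2 / x = (b ^ 2) ^ 2 / (b ^ 2 * x) := by field_simp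
  rw [hdiv, jTheta_sq_div (by positivity) (by positivity), jTheta, jTheta, jTheta, ← mul_neg,
    theta_sq_base_mul hb0 hb1 (neg_ne_zero.2 hx)]

lemma jThetaLogDeriv_sq_base_sub (hb0 : 0 < b) (hb1 : b < 1) {x : ℝ} (hx : x ≠ 0)
    (h₁ : jTheta (b ^ 2) x ≠ 0) (h₂ : jTheta (b ^ 2) (b ^ 2 / x) ≠ 0) :
    jThetaLogDeriv (b ^ 2) x - jThetaLogDeriv (b ^ 2) (b ^ 2 / x) = jThetaLogDeriv b x := by
  have h0 : 0 < b ^ 2 := by positivity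
  have h1 : b ^ 2 < 1 := pow_lt_one₀ hb0.le hb1 two_ne_zero
  have hdiv : b ^ 2 / x = (b ^ 2) ^ 2 / (b ^ 2 * x) := by field_simp
  rw [hdiv, jTheta_sq_div h0 (by positivity)] at h₂
  rw [hdiv, jThetaLogDeriv_sq_div h0 h1 (by positivity), sub_neg_eq_add,
    jThetaLogDeriv_sq_base_add hb0 hb1 hx h₁ h₂]

lemma jThetaLogDeriv_eq_zero (hb0 : 0 < b) (hb1 : b < 1) {x : ℝ} (hx : x ^ 2 = b ^ 2) :
    jThetaLogDeriv b x = 0 := by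
  have hx0 : x ≠ 0 := pow_ne_zero_iff two_ne_zero |>.1 (hx ▸ by positivity)
  have h := jThetaLogDeriv_sq_div hb0 hb1 hx0
  rw [← hx, pow_two, mul_div_cancel_right₀ x hx0] at h
  exact self_eq_neg.1 h

lemma jThetaLogDeriv_neg_one (hb0 : 0 < b) (hb1 : b < 1) : jThetaLogDeriv b (-1) = 1 / 2 := by
  have h := jThetaLogDeriv_inv hb0 hb1 (neg_ne_zero.2 one_ne_zero)
    (jTheta_neg_ne_zero hb0 hb1 one_pos)
  rw [inv_neg_one] at h
  linarith

/-! ### Lerch series in terms of connection constants -/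

lemma theta12_mul_lerch_three_one_sub (hq0 : 0 < q) (hq1 : q < 1) :
    theta12 q 3 * (lerch q 3 1 - q ^ 2 * lerch q 9 2) =
      appellConst12 q 2 (-4) * (theta12 q 5 - q * theta12 q 1) := by
  have h9 := theta12_mul_appell12_sub hq0 hq1 (d := 2) (d' := -4) 7 (by norm_num) (by norm_num)
  have h15 := theta12_mul_appell12_sub hq0 hq1 (d := 2) (d' := -4) 13 (by norm_num) (by norm_num)
  have θ9 := theta12_twelve_sub hq0 3
  have θ15 := theta12_twelve_add hq0 3
  have θ11 := theta12_twelve_sub hq0 1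
  have α15 := appell12_neg hq0 4 15
  have α21 := appell12_neg hq0 4 21
  have hl₁ := lerch_eq hq0 hq1 3 (d := 1) (by norm_num)
  have hl₂ := lerch_eq hq0 hq1 9 (d := 2) (by norm_num)
  norm_num only at *
  rw [θ9] at h9 h15
  rw [θ15, θ11] at h15
  rw [hl₁, hl₂, α15, α21]
  simp only [zpow_neg, zpow_ofNat] at *
  field_simp at h15 ⊢
  linear_combination q ^ 2 * h9 - h15

lemma theta12_mul_lerch_one_zero_add (hq0 : 0 < q) (hq1 : q < 1) :
    theta12 q 3 * (lerch q 1 0 + q * lerch q 5 2) =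
      (theta12 q 5 + q * theta12 q 1) * lerch q 3 1 - (theta12 q 3 - 4 * thetaDeriv12 q 3) / 2 +
        appellConst12 q 2 4 * (theta12 q 5 - q * theta12 q 1) / q := by
  have h₁ := theta12_mul_appell12_zero_sub hq0 hq1 (d' := 2) 7 (by norm_num)
  have h₂ := theta12_mul_appell12_zero_sub hq0 hq1 (d' := 2) 13 (by norm_num)
  have h₃ := theta12_mul_appell12_sub hq0 hq1 (d := 2) (d' := 4) 7 (by norm_num) (by norm_num)
  have h₄ := theta12_mul_appell12_sub hq0 hq1 (d := 2) (d' := 4) 13 (by norm_num) (by norm_num)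
  have θ7 := theta12_twelve_sub hq0 5
  have θ9 := theta12_twelve_sub hq0 3
  have θ11 := theta12_twelve_sub hq0 1
  have θ13 := theta12_twelve_add hq0 1
  have θ15 := theta12_twelve_add hq0 3
  have θ17 := theta12_twelve_add hq0 5
  have θ19 := theta12_twelve_add hq0 7
  have δ9 := thetaDeriv12_twelve_sub hq0 hq1 3
  have δ15 := thetaDeriv12_twelve_add hq0 hq1 3
  have hl₁ := lerch_zero_eq hq0 hq1 1
  have hl₂ := lerch_eq hq0 hq1 5 (d := 2) (by norm_num)
  have hl₃ := lerch_eq hq0 hq1 3 (d := 1) (by norm_num)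
  norm_num only at *
  rw [θ9, θ7, δ9] at h₁
  rw [θ15, θ13, δ15] at h₂
  rw [θ11, θ9, θ13] at h₃
  rw [θ17, θ15, θ19, θ7] at h₄
  rw [hl₁, hl₂, hl₃]
  simp only [zpow_neg, zpow_ofNat] at *
  field_simp at h₂ h₃ h₄ ⊢
  linear_combination 2 * q * h₁ - 2 * q * h₂ - 2 * q * h₃ + 2 * h₄

lemma theta12_mul_lerch_seven_two (hq0 : 0 < q) (hq1 : q < 1) :
    2 * q ^ 2 * theta12 q 3 * lerch q 7 2 = (theta12 q 5 + q * theta12 q 1) * lerch q 3 0 -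
      (theta12 q 5 - q * theta12 q 1) * (1 / 2 + 2 * appellConst12 q 0 (-4)) +
        (2 * thetaDeriv12 q 5 + 2 * q * thetaDeriv12 q 1 - q * theta12 q 1) := by
  have h₁ := theta12_mul_appell12_zero_sub hq0 hq1 (d' := -4) 9 (by norm_num)
  have h₂ := theta12_mul_appell12_zero_sub hq0 hq1 (d' := -4) 15 (by norm_num)
  have θ9 := theta12_twelve_sub hq0 3
  have θ11 := theta12_twelve_sub hq0 1
  have θ15 := theta12_twelve_add hq0 3
  have δ11 := thetaDeriv12_twelve_sub hq0 hq1 1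
  have α15 := appell12_neg hq0 0 15
  have α13 := appell12_neg hq0 4 13
  have α19 := appell12_neg hq0 4 19
  have hl₁ := lerch_zero_eq hq0 hq1 3
  have hl₂ := lerch_eq hq0 hq1 7 (d := 2) (by norm_num)
  rw [neg_zero, zpow_zero] at α15
  norm_num only at *
  rw [θ9] at h₁
  rw [θ15, θ11, δ11, α15] at h₂
  rw [hl₁, hl₂, α15, α13, α19]
  simp only [zpow_neg, zpow_ofNat] at *
  field_simp at h₂ ⊢
  linear_combination -4 * q ^ 2 * h₁ + 4 * h₂

/-! ### Connection constants as theta quotients -/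

lemma appellConst12_two_neg_four_mul (hq0 : 0 < q) (hq1 : q < 1) :
    appellConst12 q 2 (-4) * jTheta (q ^ 6) (q ^ 4) * jTheta (q ^ 6) (q ^ 2) =
      kappa (q ^ 6) * jTheta (q ^ 6) (q ^ 6) := by
  obtain ⟨h0, h1⟩ := pow_six_pos_lt_one hq0 hq1
  have h := appellConst_mul_jTheta h0 h1 (poleFree_pow_six hq0 hq1 (d := 2) (by norm_num))
    (poleFree_pow_six hq0 hq1 (d := -4) (by norm_num))
  rw [← appellConst12, ← zpow_sub₀ hq0.ne'] at h
  norm_num only at h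
  simp only [zpow_neg, zpow_ofNat] at h
  rw [jTheta_inv (by positivity), jTheta_inv (by positivity)] at h
  field_simp at h
  linear_combination -h

lemma appellConst12_two_four_mul (hq0 : 0 < q) (hq1 : q < 1) :
    appellConst12 q 2 4 * jTheta (q ^ 6) (q ^ 4) = kappa (q ^ 6) * q ^ 2 := by
  obtain ⟨h0, h1⟩ := pow_six_pos_lt_one hq0 hq1
  have h := appellConst_mul_jTheta h0 h1 (poleFree_pow_six hq0 hq1 (d := 2) (by norm_num))
    (poleFree_pow_six hq0 hq1 (d := 4) (by norm_num))
  rw [← appellConst12, ← zpow_sub₀ hq0.ne'] at h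
  norm_num only at h
  simp only [zpow_ofNat] at h
  exact mul_right_cancel₀ (jTheta_pow_ne_zero hq0 hq1 (by norm_num) (by norm_num)) h

lemma appellConst12_zero_neg_four (hq0 : 0 < q) (hq1 : q < 1) :
    appellConst12 q 0 (-4) = -jThetaLogDeriv (q ^ 6) (q ^ 4) := by
  obtain ⟨h0, h1⟩ := pow_six_pos_lt_one hq0 hq1
  have h := jThetaLogDeriv_eq h0 h1 (kappa_ne_zero h0 h1)
    (poleFree_pow_six hq0 hq1 (d := -4) (by norm_num))
  have hinv := jThetaLogDeriv_inv h0 h1 (x := q ^ 4) (by positivity)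
    (jTheta_pow_ne_zero hq0 hq1 (by norm_num) (by norm_num))
  rw [appellConst12, zpow_zero, eq_sub_of_add_eq h.symm, zpow_neg, zpow_ofNat, hinv]
  ring

/-- With `φ(-q) = ∑ (-1) ^ n * q ^ (n ^ 2) = jTheta q q`, the series
`(φ(-q) ^ 2 + φ(-q ^ 3) ^ 2) / 4`. -/
noncomputable def phiSqSum (q : ℝ) : ℝ :=
  (jTheta q q ^ 2 + jTheta (q ^ 3) (q ^ 3) ^ 2) / 4

lemma theta12_three_mul_jTheta_sq (ht0 : 0 < t) (ht1 : t < 1) (htq : t ^ 2 = q) :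
    theta12 q 3 * jTheta (q ^ 3) (q ^ 3) ^ 2 = kappa (t ^ 3) := by
  have h := theta_mul_jTheta_sq_base_sq (pow_pos ht0 3) (pow_lt_one₀ ht0.le ht1 three_ne_zero)
  obtain ⟨hb4, hb2⟩ : (t ^ 3) ^ 4 = q ^ 6 ∧ (t ^ 3) ^ 2 = q ^ 3 := by
    constructor <;> rw [← htq] <;> ring
  rwa [hb4, hb2, ← theta12_natCast] at h

lemma theta12_three_mul_phiSqSum (ht0 : 0 < t) (ht1 : t < 1) (htq : t ^ 2 = q) :
    theta12 q 3 * phiSqSum q = theta12 q 3 * jTheta (q ^ 3) (q ^ 3) ^ 2 / 2 -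
      appellConst12 q 2 4 * jTheta (t ^ 3) q / q := by
  have hq0 : 0 < q := htq ▸ by positivity
  have hq1 : q < 1 := htq ▸ pow_lt_one₀ ht0.le ht1 two_ne_zero
  have ht30 : 0 < t ^ 3 := by positivity
  have ht31 : t ^ 3 < 1 := pow_lt_one₀ ht0.le ht1 three_ne_zero
  have hU0 : jTheta (t ^ 3) (-q) ≠ 0 := jTheta_neg_ne_zero ht30 ht31 hq0
  have hD0 : jTheta (q ^ 6) (q ^ 4) ≠ 0 := jTheta_pow_ne_zero hq0 hq1 (by norm_num) (by norm_num)
  have hκ' := kappa_sqrt_cube_mul_theta ht0 ht1 htq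
  have hUW : jTheta (t ^ 3) (-q) ^ 2 - jTheta (t ^ 3) q ^ 2 =
      4 * q * theta (q ^ 6) q * theta (q ^ 6) (q ^ 5) := by
    rw [jTheta_sqrt_cube_neg_eq ht0 ht1 htq, jTheta_sqrt_cube_self_eq ht0 ht1 htq, theta12, theta12,
      zpow_one, zpow_ofNat]
    ring
  rw [← theta12_three_mul_jTheta_sq ht0 ht1 htq] at hκ'
  have hφ := eq_div_of_mul_eq hU0 <|
    (mul_comm _ _).trans (jTheta_sqrt_cube_neg_mul ht0 ht1 htq)
  rw [phiSqSum, hφ, eq_div_of_mul_eq hD0 (appellConst12_two_four_mul hq0 hq1)]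
  field_simp
  linear_combination -8 * q * hκ' -
    2 * theta12 q 3 * jTheta (q ^ 3) (q ^ 3) ^ 2 * jTheta (q ^ 6) (q ^ 4) * hUW

/-! ### The three Lerch evaluations -/

lemma theta12_mul_lerch_three_one_sub_eq (ht0 : 0 < t) (ht1 : t < 1) (htq : t ^ 2 = q) :
    theta12 q 3 * (lerch q 3 1 - q ^ 2 * lerch q 9 2) =
      jTheta (t ^ 3) (-q) * jTheta (q ^ 3) q ^ 2 := by
  have hq0 : 0 < q := htq ▸ by positivity
  have hq1 : q < 1 := htq ▸ pow_lt_one₀ ht0.le ht1 two_ne_zero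
  have hD0 {k : ℕ} (hk : ¬12 ∣ k) : jTheta (q ^ 6) (q ^ k) ≠ 0 :=
    jTheta_pow_ne_zero hq0 hq1 (by norm_num) hk
  rw [theta12_mul_lerch_three_one_sub hq0 hq1, ← jTheta_sqrt_cube_self_eq ht0 ht1 htq]
  refine mul_right_cancel₀
    (mul_ne_zero (hD0 (k := 4) (by norm_num)) (hD0 (k := 2) (by norm_num))) ?_
  linear_combination jTheta (t ^ 3) q * appellConst12_two_neg_four_mul hq0 hq1 +
    kappa_pow_six_mul_jTheta ht0 ht1 htq

lemma theta12_mul_lerch_one_zero_add_eq (ht0 : 0 < t) (ht1 : t < 1) (htq : t ^ 2 = q) :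
    theta12 q 3 * (lerch q 1 0 + q * lerch q 5 2) =
      jTheta (t ^ 3) (-q) * lerch q 3 1 - theta12 q 3 * phiSqSum q := by
  have hq0 : 0 < q := htq ▸ by positivity
  have hq1 : q < 1 := htq ▸ pow_lt_one₀ ht0.le ht1 two_ne_zero
  rw [theta12_three_mul_phiSqSum ht0 ht1 htq, theta12_three_mul_jTheta_sq ht0 ht1 htq,
    theta12_mul_lerch_one_zero_add hq0 hq1, kappa_sqrt_cube ht0 ht1 htq,
    jTheta_sqrt_cube_neg_eq ht0 ht1 htq, jTheta_sqrt_cube_self_eq ht0 ht1 htq]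
  ring

/-! ### Consequences of the addition formula -/

lemma jTheta_pow_three_mul_pow_three {x : ℝ} (hq0 : 0 < q) (hx : x ^ 2 = q ^ 2) :
    jTheta (q ^ 3) (x * q ^ 3) = jTheta (q ^ 3) (x * q) := by
  have hx0 : x ≠ 0 := pow_ne_zero_iff two_ne_zero |>.1 (hx ▸ by positivity)
  rw [← jTheta_sq_div (by positivity) (by positivity : x * q ^ 3 ≠ 0)]
  congr 1
  field_simp
  exact hx.symm

lemma theta12_three_ne_zero (hq0 : 0 < q) (hq1 : q < 1) : theta12 q 3 ≠ 0 :=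
  theta_ne_zero (pow_six_pos_lt_one hq0 hq1).1 (pow_six_pos_lt_one hq0 hq1).2 (zpow_pos hq0 3)

lemma jTheta_pow_three_mul (ht0 : 0 < t) (ht1 : t < 1) (htq : t ^ 2 = q) {x : ℝ} (hx : x ≠ 0) :
    jTheta (q ^ 3) x * jTheta (q ^ 3) (q ^ 3 / x) = theta12 q 3 * jTheta (t ^ 3) x := by
  have h := jTheta_sq_base_mul (pow_pos ht0 3) (pow_lt_one₀ ht0.le ht1 three_ne_zero) hx
  obtain ⟨hb4, hb2⟩ : (t ^ 3) ^ 4 = q ^ 6 ∧ (t ^ 3) ^ 2 = q ^ 3 := by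
    constructor <;> rw [← htq] <;> ring
  rwa [hb4, hb2, ← theta12_natCast] at h

lemma jTheta_pow_three_self_mul (ht0 : 0 < t) (ht1 : t < 1) (htq : t ^ 2 = q) :
    jTheta (q ^ 3) q * jTheta (q ^ 3) (q ^ 2) = theta12 q 3 * jTheta (t ^ 3) q := by
  have hq : q ≠ 0 := htq ▸ by positivity
  rw [← jTheta_pow_three_mul ht0 ht1 htq hq, show q ^ 3 / q = q ^ 2 by field_simp]

lemma jTheta_pow_three_neg_mul (ht0 : 0 < t) (ht1 : t < 1) (htq : t ^ 2 = q) :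
    jTheta (q ^ 3) (-q) * jTheta (q ^ 3) (-q ^ 2) = theta12 q 3 * jTheta (t ^ 3) (-q) := by
  have hq : q ≠ 0 := htq ▸ by positivity
  rw [← jTheta_pow_three_mul ht0 ht1 htq (neg_ne_zero.2 hq), show q ^ 3 / -q = -q ^ 2 by field_simp]

lemma kappa_pow_three (hq0 : 0 < q) (hq1 : q < 1) :
    theta12 q 3 ^ 2 * jTheta (q ^ 3) (q ^ 3) = kappa (q ^ 3) := by
  rw [← theta_sq_base_sq_mul_jTheta_self (by positivity) (pow_lt_one₀ hq0.le hq1 three_ne_zero),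
    ← pow_mul, ← theta12_natCast]
  rfl

lemma jTheta_sqrt_cube_neg_mul_sq (ht0 : 0 < t) (ht1 : t < 1) (htq : t ^ 2 = q) :
    jTheta (t ^ 3) (-q) * jTheta (q ^ 3) (q ^ 3) ^ 2 = jTheta (t ^ 3) q *
      (1 - 2 * jThetaLogDeriv (q ^ 3) q - 2 * jThetaLogDeriv (q ^ 3) (q ^ 2)) := by
  have hq0 : 0 < q := htq ▸ by positivity
  have hq1 : q < 1 := htq ▸ pow_lt_one₀ ht0.le ht1 two_ne_zero
  have b0 : 0 < q ^ 3 := by positivity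
  have b1 : q ^ 3 < 1 := pow_lt_one₀ hq0.le hq1 three_ne_zero
  have hadd := jThetaLogDeriv_addition b0 b1 (kappa_ne_zero b0 b1) (x := q) (x' := -1) (y := q ^ 3)
    (by simpa using poleFree_pow hq0 hq1 (m := 3) (k := 1) (by norm_num)) (poleFree_neg b0 one_pos)
    (by simpa [pow_succ'] using poleFree_pow hq0 hq1 (m := 3) (k := 4) (by norm_num))
    (by simpa using poleFree_neg b0 b0)
  have hρ4 : jThetaLogDeriv (q ^ 3) (q * q ^ 3) = -jThetaLogDeriv (q ^ 3) (q ^ 2) := by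
    rw [← jThetaLogDeriv_sq_div b0 b1 (by positivity)]
    congr 1
    field_simp
  rw [show (-1 : ℝ) / q = (-q)⁻¹ by field_simp, jTheta_inv (neg_ne_zero.2 hq0.ne'), neg_one_mul,
    jThetaLogDeriv_neg_one b0 b1, hρ4, jThetaLogDeriv_eq_zero b0 b1 (neg_sq _), mul_neg_one,
    jTheta_pow_three_mul_pow_three hq0 (neg_sq q), jTheta_pow_three_mul_pow_three hq0 rfl,
    neg_mul, ← pow_two] at hadd
  field_simp at hadd
  have hκ := jTheta_self_mul_neg_one_mul_neg_self b0 b1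
  refine mul_left_cancel₀ (mul_ne_zero (kappa_ne_zero b0 b1) (theta12_three_ne_zero hq0 hq1)) ?_
  linear_combination jTheta (q ^ 3) (q ^ 3) / 2 * hadd -
    kappa (q ^ 3) * jTheta (q ^ 3) (q ^ 3) ^ 2 * jTheta_pow_three_neg_mul ht0 ht1 htq +
    (1 - 2 * jThetaLogDeriv (q ^ 3) q - 2 * jThetaLogDeriv (q ^ 3) (q ^ 2)) / 2 *
      (jTheta (q ^ 3) (q ^ 3) * jTheta (q ^ 3) (-1) * jTheta (q ^ 3) (-q ^ 3) *
        jTheta_pow_three_self_mul ht0 ht1 htq + theta12 q 3 * jTheta (t ^ 3) q * hκ)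

lemma mul_theta12_three_mul_jTheta_sq (ht0 : 0 < t) (ht1 : t < 1) (htq : t ^ 2 = q) :
    q * theta12 q 3 * jTheta (q ^ 3) q ^ 2 = jTheta (t ^ 3) q *
      (2 * jThetaLogDeriv (q ^ 3) (q ^ 2) - jThetaLogDeriv (q ^ 3) q) := by
  have hq0 : 0 < q := htq ▸ by positivity
  have hq1 : q < 1 := htq ▸ pow_lt_one₀ ht0.le ht1 two_ne_zero
  have b0 : 0 < q ^ 3 := by positivity
  have b1 : q ^ 3 < 1 := pow_lt_one₀ hq0.le hq1 three_ne_zero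
  have hP {k : ℕ} (hk : ¬6 ∣ k) : PoleFree (q ^ 3) (q ^ k) := poleFree_pow hq0 hq1 hk
  have hadd := jThetaLogDeriv_addition b0 b1 (kappa_ne_zero b0 b1) (x := q) (x' := q ^ 2) (y := q)
    (by simpa using hP (k := 1) (by norm_num)) (hP (by norm_num))
    (by simpa [pow_two] using hP (k := 2) (by norm_num))
    (by simpa [pow_succ] using hP (k := 3) (by norm_num))
  rw [show q ^ 2 / q = q by field_simp, show q * q ^ 2 * q = q * q ^ 3 by ring,
    jTheta_pow_three_mul_pow_three hq0 rfl, ← pow_succ, ← pow_two, jThetaLogDeriv_eq_zero b0 b1 rfl,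
    ← kappa_pow_three hq0 hq1] at hadd
  have hB {k : ℕ} (hk : ¬6 ∣ k) : jTheta (q ^ 3) (q ^ k) ≠ 0 :=
    jTheta_pow_ne_zero hq0 hq1 (by norm_num) hk
  refine mul_left_cancel₀ (mul_ne_zero (mul_ne_zero (theta12_three_ne_zero hq0 hq1)
    (hB (k := 2) (by norm_num))) (hB (k := 3) (by norm_num))) ?_
  linear_combination hadd + (2 * jThetaLogDeriv (q ^ 3) (q ^ 2) - jThetaLogDeriv (q ^ 3) q) *
    jTheta (q ^ 3) (q ^ 2) * jTheta (q ^ 3) (q ^ 3) * jTheta_pow_three_self_mul ht0 ht1 htq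

lemma mul_kappa_pow_six_mul_jTheta (ht0 : 0 < t) (ht1 : t < 1) (htq : t ^ 2 = q) :
    q * kappa (q ^ 6) * jTheta (t ^ 3) (-q) =
      (jThetaLogDeriv (q ^ 3) (-q) - 2 * jThetaLogDeriv (q ^ 3) (q ^ 2)) *
        (jTheta (q ^ 6) (q ^ 4) * theta12 q 3) := by
  have hq0 : 0 < q := htq ▸ by positivity
  have hq1 : q < 1 := htq ▸ pow_lt_one₀ ht0.le ht1 two_ne_zero
  have b0 : 0 < q ^ 3 := by positivity
  have b1 : q ^ 3 < 1 := pow_lt_one₀ hq0.le hq1 three_ne_zero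
  have hP : PoleFree (q ^ 3) (q ^ 2) := poleFree_pow hq0 hq1 (by norm_num)
  have hadd := jThetaLogDeriv_addition b0 b1 (kappa_ne_zero b0 b1) (x := -q) (x' := q ^ 2) (y := -q)
    (poleFree_neg b0 hq0) hP (by simpa [pow_two] using hP)
    (by simpa [pow_succ] using poleFree_neg b0 b0)
  rw [show q ^ 2 / -q = -q by field_simp, show -q * q ^ 2 * -q = q * q ^ 3 by ring,
    show -q * -q = q ^ 2 by ring, show q ^ 2 * -q = -q ^ 3 by ring,
    jTheta_pow_three_mul_pow_three hq0 rfl, ← pow_two,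
    jThetaLogDeriv_eq_zero b0 b1 (neg_sq _)] at hadd
  have hB2 : jTheta (q ^ 3) (q ^ 2) ≠ 0 := jTheta_pow_ne_zero hq0 hq1 (by norm_num) (by norm_num)
  have hN {x : ℝ} (hx : 0 < x) : jTheta (q ^ 3) (-x) ≠ 0 := jTheta_neg_ne_zero b0 b1 hx
  have hcancel : kappa (q ^ 3) * q * jTheta (q ^ 3) (-q) =
      (jThetaLogDeriv (q ^ 3) (-q) - 2 * jThetaLogDeriv (q ^ 3) (q ^ 2)) *
        (jTheta (q ^ 3) (q ^ 2) * jTheta (q ^ 3) (-q ^ 3)) := by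
    refine mul_left_cancel₀ (mul_ne_zero (hN hq0) hB2) ?_
    linear_combination -hadd
  have hκ := kappa_mul_jTheta_mul_jTheta_neg b0 b1 (x := q ^ 2) (by positivity)
  rw [show (q ^ 3) ^ 2 = q ^ 6 by ring, show (q ^ 2) ^ 2 = q ^ 4 by ring, ← zpow_natCast q 3] at hκ
  change _ = _ * theta12 q 3 ^ 2 at hκ
  simp only [Nat.cast_ofNat, zpow_ofNat] at hκ
  refine mul_left_cancel₀ (mul_ne_zero (theta12_three_ne_zero hq0 hq1)
    (mul_ne_zero (mul_ne_zero (hN (x := q ^ 2) (by positivity)) hB2) (hN b0))) ?_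
  linear_combination q * theta12 q 3 * jTheta (t ^ 3) (-q) * hκ -
    q * kappa (q ^ 3) * jTheta (q ^ 6) (q ^ 4) * theta12 q 3 ^ 2 *
      jTheta_pow_three_neg_mul ht0 ht1 htq +
    jTheta (q ^ 6) (q ^ 4) * theta12 q 3 ^ 2 * jTheta (q ^ 3) (-q ^ 2) * hcancel

lemma jThetaLogDeriv_pow_three_sub (ht0 : 0 < t) (ht1 : t < 1) (htq : t ^ 2 = q) :
    jThetaLogDeriv (q ^ 3) q - jThetaLogDeriv (q ^ 3) (q ^ 2) = jThetaLogDeriv (t ^ 3) q := by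
  have hq0 : 0 < q := htq ▸ by positivity
  have hq1 : q < 1 := htq ▸ pow_lt_one₀ ht0.le ht1 two_ne_zero
  have hB {k : ℕ} (hk : ¬6 ∣ k) : jTheta (q ^ 3) (q ^ k) ≠ 0 :=
    jTheta_pow_ne_zero hq0 hq1 (by norm_num) hk
  have hbase : (t ^ 3) ^ 2 = q ^ 3 := by rw [← htq]; ring
  have hdiv : q ^ 3 / q = q ^ 2 := by field_simp
  have h := jThetaLogDeriv_sq_base_sub (pow_pos ht0 3) (pow_lt_one₀ ht0.le ht1 three_ne_zero)
    hq0.ne'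
  rw [hbase, hdiv] at h
  exact h (by simpa using hB (k := 1) (by norm_num)) (hB (by norm_num))

lemma jThetaLogDeriv_pow_three_neg_sub (ht0 : 0 < t) (ht1 : t < 1) (htq : t ^ 2 = q) :
    jThetaLogDeriv (q ^ 3) (-q) - jThetaLogDeriv (q ^ 3) (-q ^ 2) =
      jThetaLogDeriv (t ^ 3) (-q) := by
  have hq0 : 0 < q := htq ▸ by positivity
  have hq1 : q < 1 := htq ▸ pow_lt_one₀ ht0.le ht1 two_ne_zero
  have hN {x : ℝ} (hx : 0 < x) : jTheta (q ^ 3) (-x) ≠ 0 :=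
    jTheta_neg_ne_zero (by positivity) (pow_lt_one₀ hq0.le hq1 three_ne_zero) hx
  have hbase : (t ^ 3) ^ 2 = q ^ 3 := by rw [← htq]; ring
  have hdiv : q ^ 3 / -q = -q ^ 2 := by field_simp
  have h := jThetaLogDeriv_sq_base_sub (pow_pos ht0 3) (pow_lt_one₀ ht0.le ht1 three_ne_zero)
    (neg_ne_zero.2 hq0.ne')
  rw [hbase, hdiv] at h
  exact h (hN hq0) (hN (by positivity))

lemma jTheta_sqrt_cube_self_ne_zero (ht0 : 0 < t) (ht1 : t < 1) (htq : t ^ 2 = q) :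
    jTheta (t ^ 3) q ≠ 0 :=
  htq ▸ jTheta_pow_ne_zero ht0 ht1 (by norm_num) (by norm_num)

lemma jThetaLogDeriv_pow_three_neg (ht0 : 0 < t) (ht1 : t < 1) (htq : t ^ 2 = q) :
    jThetaLogDeriv (q ^ 3) (-q) = 2 * jThetaLogDeriv (q ^ 6) (q ^ 4) +
      jThetaLogDeriv (q ^ 3) (q ^ 2) - jThetaLogDeriv (t ^ 3) q := by
  have hq0 : 0 < q := htq ▸ by positivity
  have hq1 : q < 1 := htq ▸ pow_lt_one₀ ht0.le ht1 two_ne_zero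
  have b0 : 0 < q ^ 3 := by positivity
  have b1 : q ^ 3 < 1 := pow_lt_one₀ hq0.le hq1 three_ne_zero
  have t0 : 0 < t ^ 3 := by positivity
  have t1 : t ^ 3 < 1 := pow_lt_one₀ ht0.le ht1 three_ne_zero
  have hneg := jThetaLogDeriv_add_neg t0 t1 hq0.ne' (jTheta_sqrt_cube_self_ne_zero ht0 ht1 htq)
    (jTheta_neg_ne_zero t0 t1 hq0)
  have hneg' := jThetaLogDeriv_add_neg b0 b1 (x := q ^ 2) (by positivity)
    (jTheta_pow_ne_zero hq0 hq1 (by norm_num) (by norm_num))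
    (jTheta_neg_ne_zero b0 b1 (by positivity))
  rw [show (t ^ 3) ^ 2 = q ^ 3 by rw [← htq]; ring] at hneg
  rw [show (q ^ 3) ^ 2 = q ^ 6 by ring, show (q ^ 2) ^ 2 = q ^ 4 by ring] at hneg'
  linear_combination hneg + hneg' + jThetaLogDeriv_pow_three_neg_sub ht0 ht1 htq

lemma jTheta_sqrt_cube_neg_mul_phiSqSum (ht0 : 0 < t) (ht1 : t < 1) (htq : t ^ 2 = q) :
    jTheta (t ^ 3) (-q) * phiSqSum q + q * theta12 q 3 * jTheta (q ^ 3) q ^ 2 =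
      jTheta (t ^ 3) q *
        (1 / 2 - 2 * jThetaLogDeriv (q ^ 6) (q ^ 4) - jThetaLogDeriv (t ^ 3) q) := by
  have hq0 : 0 < q := htq ▸ by positivity
  have hq1 : q < 1 := htq ▸ pow_lt_one₀ ht0.le ht1 two_ne_zero
  have hD0 : jTheta (q ^ 6) (q ^ 4) ≠ 0 := jTheta_pow_ne_zero hq0 hq1 (by norm_num) (by norm_num)
  have hθ0 := theta12_three_ne_zero hq0 hq1
  have hφ : jTheta (t ^ 3) (-q) * phiSqSum q =
      jTheta (t ^ 3) (-q) * jTheta (q ^ 3) (q ^ 3) ^ 2 / 2 - jTheta (t ^ 3) q *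
        (jThetaLogDeriv (q ^ 3) (-q) - 2 * jThetaLogDeriv (q ^ 3) (q ^ 2)) := by
    have h := theta12_three_mul_phiSqSum ht0 ht1 htq
    rw [eq_div_of_mul_eq hD0 (appellConst12_two_four_mul hq0 hq1)] at h
    refine mul_left_cancel₀ (mul_ne_zero hθ0 hD0) ?_
    field_simp at h
    linear_combination jTheta (t ^ 3) (-q) / 2 * h -
      jTheta (t ^ 3) q * mul_kappa_pow_six_mul_jTheta ht0 ht1 htq
  rw [hφ, jThetaLogDeriv_pow_three_neg ht0 ht1 htq]
  linear_combination jTheta_sqrt_cube_neg_mul_sq ht0 ht1 htq / 2 +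
    mul_theta12_three_mul_jTheta_sq ht0 ht1 htq -
      2 * jTheta (t ^ 3) q * jThetaLogDeriv_pow_three_sub ht0 ht1 htq

lemma theta12_mul_lerch_seven_two_eq (ht0 : 0 < t) (ht1 : t < 1) (htq : t ^ 2 = q) :
    q * (theta12 q 3 * (2 * q * lerch q 7 2)) = -q * theta12 q 3 * jTheta (q ^ 3) q ^ 2 -
      jTheta (t ^ 3) (-q) * (phiSqSum q - lerch q 3 0) := by
  have hq0 : 0 < q := htq ▸ by positivity
  have hq1 : q < 1 := htq ▸ pow_lt_one₀ ht0.le ht1 two_ne_zero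
  have hρ : jThetaLogDeriv (t ^ 3) q * jTheta (t ^ 3) q = thetaDeriv (t ^ 3) (-q) :=
    div_mul_cancel₀ _ (jTheta_sqrt_cube_self_ne_zero ht0 ht1 htq)
  have hl := theta12_mul_lerch_seven_two hq0 hq1
  rw [appellConst12_zero_neg_four hq0 hq1, ← jTheta_sqrt_cube_neg_eq ht0 ht1 htq,
    ← jTheta_sqrt_cube_self_eq ht0 ht1 htq, ← thetaDeriv_sqrt_cube_neg ht0 ht1 htq, ← hρ] at hl
  linear_combination hl + jTheta_sqrt_cube_neg_mul_phiSqSum ht0 ht1 htq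

end LerchIdentities

section Dissection

variable {q : ℝ}

/-- Ramanujan's theta series `ψ(q)`, written as a sum over all integers. -/
noncomputable def ramanujanPsi (q : ℝ) : ℝ :=
  ∑' n : ℤ, q ^ (2 * n ^ 2 + n)

/-- The Lerch series which, multiplied by the signed generating function of the partitions without
repeated odd parts, generates these partitions weighted by their `M2`-rank modulo 6. -/
noncomputable def rankSeries (q : ℝ) : ℝ :=
  ∑' n : ℤ, q ^ (2 * n ^ 2 + n) / (1 - q ^ (2 * n) + q ^ (4 * n))

lemma summable_gauss (hq0 : 0 < q) (hq1 : q < 1) {a : ℤ} (ha : 0 < a) (c : ℤ) {e : ℤ → ℝ}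
    (he : LinearGrowth e) : Summable fun n : ℤ ↦ q ^ (a * n ^ 2 + c * n) * e n := by
  simpa only [one_zpow, mul_one] using summable_gauss_mul hq0 hq1 ha c one_ne_zero he

lemma summable_ramanujanPsi (hq0 : 0 < q) (hq1 : q < 1) :
    Summable fun n : ℤ ↦ q ^ (2 * n ^ 2 + n) := by
  simpa only [one_mul, mul_one] using summable_gauss hq0 hq1 two_pos 1 linearGrowth_one

lemma three_quarters_le_one_sub_add_sq (z : ℝ) : 3 / 4 ≤ 1 - z + z ^ 2 := by
  nlinarith only [sq_nonneg (z - 1 / 2)]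

lemma zpow_four_mul_eq_sq (q : ℝ) (n : ℤ) : q ^ (4 * n) = (q ^ (2 * n)) ^ 2 := by
  rw [← zpow_natCast, ← zpow_mul]
  congr 1
  push_cast
  ring

lemma summable_rankSeries (hq0 : 0 < q) (hq1 : q < 1) :
    Summable fun n : ℤ ↦ q ^ (2 * n ^ 2 + n) / (1 - q ^ (2 * n) + q ^ (4 * n)) := by
  have he : LinearGrowth fun n ↦ (1 - q ^ (2 * n) + q ^ (4 * n))⁻¹ :=
    .of_bounded (3 / 4)⁻¹ fun n ↦ by
      have h := three_quarters_le_one_sub_add_sq (q ^ (2 * n))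
      rw [zpow_four_mul_eq_sq, abs_of_pos (by positivity)]
      gcongr
  simpa only [one_mul, div_eq_mul_inv] using summable_gauss hq0 hq1 two_pos 1 he

lemma summable_lerch (hq0 : 0 < q) (hq1 : q < 1) (c d : ℤ) :
    Summable fun n : ℤ ↦ q ^ (6 * n ^ 2 + c * n) / (1 + q ^ (6 * n + d)) := by
  have he : LinearGrowth fun n ↦ (1 + q ^ (6 * n + d))⁻¹ :=
    .of_bounded 1 fun n ↦ by
      rw [abs_of_pos (by positivity)]
      exact inv_le_one_of_one_le₀ (le_add_of_nonneg_right (by positivity))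
  exact summable_gauss hq0 hq1 (by norm_num) c he

lemma lerch_reflect (hq0 : 0 < q) (c d : ℤ) :
    lerch q c d = q ^ (12 - c - d) * lerch q (18 - c) (6 - d) := by
  rw [lerch, lerch, ← ((Equiv.neg ℤ).trans (Equiv.subRight (1 : ℤ))).tsum_eq, ← tsum_mul_left]
  refine tsum_congr fun n ↦ ?_
  simp only [Equiv.trans_apply, Equiv.neg_apply, Equiv.subRight_apply]
  rw [show 6 * (-n - 1) + d = -(6 * n + (6 - d)) by ring,
    show 6 * (-n - 1) ^ 2 + c * (-n - 1) =
      (12 - c - d) + (6 * n ^ 2 + (18 - c) * n) - (6 * n + (6 - d)) by ring,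
    zpow_sub₀ hq0.ne', zpow_add₀ hq0.ne', zpow_neg]
  field_simp
  ring

lemma theta12_eq_tsum (hq0 : 0 < q) (k : ℤ) :
    theta12 q k = ∑' r : ℤ, q ^ (6 * r ^ 2 + (k - 6) * r) := by
  refine tsum_congr fun r ↦ ?_
  rw [← zpow_natCast q 6, ← zpow_mul, ← zpow_mul, ← zpow_add₀ hq0.ne']
  congr 1
  push_cast
  ring

lemma cube_zpow (q : ℝ) (a : ℤ) : (q ^ 3) ^ a = q ^ (3 * a) := by
  rw [← zpow_natCast q 3, ← zpow_mul]
  rfl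

lemma ramanujanPsi_eq (hq0 : 0 < q) (hq1 : q < 1) :
    ramanujanPsi q =
      theta12 (q ^ 3) 5 + q ^ 3 * theta12 (q ^ 3) 1 + q * theta12 (q ^ 3) 3 := by
  have hQ0 : 0 < q ^ 3 := by positivity
  have hres (j : ℤ) : ∑' m : ℤ, q ^ (2 * (m * 3 + j) ^ 2 + (m * 3 + j)) =
      q ^ (2 * j ^ 2 + j) * theta12 (q ^ 3) (4 * j + 7) := by
    rw [theta12_eq_tsum hQ0, ← tsum_mul_left]
    refine tsum_congr fun m ↦ ?_
    rw [cube_zpow, ← zpow_add₀ hq0.ne']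
    ring_nf
  have h₀ := theta12_twelve_sub hQ0 5
  have h₁ := theta12_twelve_sub hQ0 1
  have h₂ := theta12_twelve_add hQ0 3
  norm_num only at h₀ h₁ h₂
  rw [ramanujanPsi, tsum_int_eq_sum_fin 3 (summable_ramanujanPsi hq0 hq1), Fin.sum_univ_three]
  simp only [Nat.cast_ofNat, hres]
  norm_num [h₀, h₁, h₂]
  field_simp

lemma div_one_sub_add_sq {z : ℝ} (hz : 0 < z) (w : ℝ) :
    w / (1 - z + z ^ 2) = w / (1 + z ^ 3) + w * z / (1 + z ^ 3) := by
  have hpos : 0 < 1 - z + z ^ 2 := by linarith [three_quarters_le_one_sub_add_sq z]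
  field_simp
  ring

lemma tsum_rankSeries_residue (hq0 : 0 < q) (hq1 : q < 1) (j : ℤ) :
    ∑' m : ℤ, q ^ (2 * (m * 3 + j) ^ 2 + (m * 3 + j)) /
        (1 - q ^ (2 * (m * 3 + j)) + q ^ (4 * (m * 3 + j))) =
      q ^ (2 * j ^ 2 + j) * lerch (q ^ 3) (4 * j + 1) (2 * j) +
        q ^ (2 * j ^ 2 + 3 * j) * lerch (q ^ 3) (4 * j + 3) (2 * j) := by
  have hQ0 : 0 < q ^ 3 := by positivity
  have hQ1 : q ^ 3 < 1 := pow_lt_one₀ hq0.le hq1 three_ne_zero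
  rw [lerch, lerch, ← tsum_mul_left, ← tsum_mul_left,
    ← ((summable_lerch hQ0 hQ1 _ _).mul_left _).tsum_add
      ((summable_lerch hQ0 hQ1 _ _).mul_left _)]
  refine tsum_congr fun m ↦ ?_
  rw [zpow_four_mul_eq_sq, div_one_sub_add_sq (by positivity), ← zpow_natCast (q ^ (2 * _)) 3,
    ← zpow_mul, ← zpow_add₀ hq0.ne']
  simp only [cube_zpow, ← mul_div_assoc, ← zpow_add₀ hq0.ne']
  push_cast
  ring_nf

lemma rankSeries_eq (hq0 : 0 < q) (hq1 : q < 1) :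
    rankSeries q = lerch (q ^ 3) 1 0 + lerch (q ^ 3) 3 0 + q ^ 3 * lerch (q ^ 3) 5 2 +
      q * ((q ^ 3) ^ 2 * lerch (q ^ 3) 9 2) + q ^ 2 * (2 * q ^ 3 * lerch (q ^ 3) 7 2) := by
  have hQ0 : 0 < q ^ 3 := by positivity
  have h₉ := lerch_reflect hQ0 9 4
  have h₁₁ := lerch_reflect hQ0 11 4
  norm_num only at h₉ h₁₁
  rw [rankSeries, tsum_int_eq_sum_fin 3 (summable_rankSeries hq0 hq1), Fin.sum_univ_three]
  simp only [Nat.cast_ofNat, tsum_rankSeries_residue hq0 hq1]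
  norm_num [h₉, h₁₁]
  field_simp
  ring

theorem theta12_mul_rankSeries (hq0 : 0 < q) (hq1 : q < 1) :
    q * (theta12 (q ^ 3) 3 * rankSeries q) = ramanujanPsi q *
      (q * lerch (q ^ 3) 3 1 - q ^ 2 * jTheta (q ^ 9) (q ^ 3) ^ 2 -
        (phiSqSum (q ^ 3) - lerch (q ^ 3) 3 0)) := by
  have hQ0 : 0 < q ^ 3 := by positivity
  have ht0 := Real.sqrt_pos.2 hQ0
  have ht1 : √(q ^ 3) < 1 := by
    rw [Real.sqrt_lt' one_pos, one_pow]
    exact pow_lt_one₀ hq0.le hq1 three_ne_zero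
  have htq := Real.sq_sqrt hQ0.le
  have h₁ := theta12_mul_lerch_one_zero_add_eq ht0 ht1 htq
  have h₂ := theta12_mul_lerch_three_one_sub_eq ht0 ht1 htq
  have h₃ := theta12_mul_lerch_seven_two_eq ht0 ht1 htq
  rw [rankSeries_eq hq0 hq1, ramanujanPsi_eq hq0 hq1, ← jTheta_sqrt_cube_neg_eq ht0 ht1 htq,
    show q ^ 9 = (q ^ 3) ^ 3 by ring]
  linear_combination q * h₁ - q ^ 2 * h₂ + h₃

end Dissection

section OddDistinct

variable {A M N : Multiset ℕ} {b k r : ℕ} {m : ℤ}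

/-! ### Partitions without repeated odd parts as multisets -/

/-- The multiset `M` consists of the parts of a partition without repeated odd parts. -/
def OddDistinct (M : Multiset ℕ) : Prop :=
  0 ∉ M ∧ ∀ j, Odd j → M.count j ≤ 1

/-- The partitions, of all sizes together, without repeated odd parts. -/
abbrev OddDistinctPartition : Type := {M : Multiset ℕ // OddDistinct M}

/-- `⌈ℓ / 2⌉`, where `ℓ` is the largest part and `ℓ = 0` if there are no parts. -/
def halfMax (M : Multiset ℕ) : ℕ := (M.sup + 1) / 2

/-- The M2-rank of the partition with multiset of parts `M`. -/
def rank (M : Multiset ℕ) : ℤ := (halfMax M : ℤ) - (Multiset.card M : ℤ)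

lemma oddDistinct_zero : OddDistinct 0 := ⟨by simp, by simp⟩

lemma halfMax_le_iff : halfMax M ≤ k ↔ ∀ i ∈ M, i ≤ 2 * k := by
  rw [← Multiset.sup_le (s := M) (a := 2 * k), halfMax]
  omega

lemma sup_mem (hM : M ≠ 0) : M.sup ∈ M := by
  induction M using Multiset.induction with
  | empty => exact absurd rfl hM
  | cons a s ih =>
    rw [Multiset.sup_cons]
    rcases eq_or_ne s 0 with rfl | hs
    · simp
    · rcases le_total a s.sup with h | h
      · rw [sup_eq_right.2 h]
        exact Multiset.mem_cons_of_mem (ih hs)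
      · rw [sup_eq_left.2 h]
        exact Multiset.mem_cons_self _ _

lemma OddDistinct.eq_zero_of_halfMax_eq_zero (hA : OddDistinct A) (h : halfMax A = 0) : A = 0 := by
  refine Multiset.eq_zero_of_forall_notMem fun i hi ↦ hA.1 ?_
  have hi0 := halfMax_le_iff.1 h.le i hi
  rwa [show i = 0 by omega] at hi

/-- The partition got from `A` by adding `2` to every part, then adjoining parts `2` and at most
one part `1`, of total size `b`. -/
def stretch (A : Multiset ℕ) (b : ℕ) : Multiset ℕ :=
  A.map (· + 2) + Multiset.replicate (b / 2) 2 + Multiset.replicate (b % 2) 1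

/-- The partition got from `M` by deleting the parts `1` and `2` and subtracting `2` from all
others. -/
def shrink (M : Multiset ℕ) : Multiset ℕ := (M.filter (2 < ·)).map (· - 2)

lemma count_stretch (A : Multiset ℕ) (b j : ℕ) : (stretch A b).count j =
    (if 2 ≤ j then A.count (j - 2) else 0) + (if j = 2 then b / 2 else 0) +
      (if j = 1 then b % 2 else 0) := by
  have hmap : (A.map (· + 2)).count j = if 2 ≤ j then A.count (j - 2) else 0 := by
    split_ifs with h
    · obtain ⟨i, rfl⟩ := Nat.exists_eq_add_of_le' h
      exact Multiset.count_map_eq_count' _ _ (add_left_injective 2) i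
    · rw [Multiset.count_eq_zero, Multiset.mem_map]
      rintro ⟨i, -, rfl⟩
      omega
  rw [stretch, Multiset.count_add, Multiset.count_add, hmap, Multiset.count_replicate,
    Multiset.count_replicate]
  simp only [eq_comm]

lemma count_shrink (M : Multiset ℕ) (j : ℕ) :
    (shrink M).count j = if 0 < j then M.count (j + 2) else 0 := by
  rw [shrink, Multiset.count_map, Multiset.filter_filter]
  split_ifs with h
  · rw [Multiset.count_eq_card_filter_eq]
    congr 1
    exact Multiset.filter_congr fun i _ ↦ by omega
  · rw [Multiset.card_eq_zero, Multiset.filter_eq_nil]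
    omega

lemma OddDistinct.count_zero (hM : OddDistinct M) : M.count 0 = 0 := Multiset.count_eq_zero.2 hM.1

lemma OddDistinct.stretch (hA : OddDistinct A) (b : ℕ) : OddDistinct (stretch A b) := by
  refine ⟨Multiset.count_eq_zero.1 (by simp [count_stretch]), fun j hj ↦ ?_⟩
  rw [count_stretch]
  rcases j with _ | _ | j
  · simp at hj
  · simp
    omega
  · have hj2 : j ≠ 0 := by rintro rfl; exact absurd hj (by decide)
    simpa [hj2] using hA.2 j (by simpa [Nat.odd_add] using hj)

lemma OddDistinct.shrink (hM : OddDistinct M) : OddDistinct (shrink M) := by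
  refine ⟨Multiset.count_eq_zero.1 (by simp [count_shrink]), fun j hj ↦ ?_⟩
  rw [count_shrink, if_pos hj.pos]
  exact hM.2 _ (hj.add_even even_two)

lemma OddDistinct.shrink_stretch (hA : OddDistinct A) (b : ℕ) :
    M2Rank.shrink (M2Rank.stretch A b) = A := by
  ext j
  rw [count_shrink, count_stretch]
  rcases j.eq_zero_or_pos with rfl | hj
  · simp [hA.count_zero]
  · simp [hj, hj.ne']

lemma OddDistinct.two_mul_count_stretch (hA : OddDistinct A) (b : ℕ) :
    2 * (M2Rank.stretch A b).count 2 + (M2Rank.stretch A b).count 1 = b := by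
  simp [count_stretch, hA.count_zero, Nat.div_add_mod]

lemma OddDistinct.stretch_shrink (hM : OddDistinct M) :
    M2Rank.stretch (M2Rank.shrink M) (2 * M.count 2 + M.count 1) = M := by
  have h1 := hM.2 1 (by decide)
  ext j
  rw [count_stretch, count_shrink]
  rcases j with _ | _ | _ | j
  · simp [hM.count_zero]
  · simp
    omega
  · simp
    omega
  · simp

/-- Splitting off the parts `1` and `2`, recorded by their total size. -/
def stretchEquiv : OddDistinctPartition × ℕ ≃ OddDistinctPartition where
  toFun p := ⟨stretch p.1.1 p.2, p.1.2.stretch p.2⟩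
  invFun M := (⟨shrink M.1, M.2.shrink⟩, 2 * M.1.count 2 + M.1.count 1)
  left_inv p := Prod.ext (Subtype.ext (p.1.2.shrink_stretch p.2))
    (p.1.2.two_mul_count_stretch p.2)
  right_inv M := Subtype.ext M.2.stretch_shrink

lemma card_stretch (A : Multiset ℕ) (b : ℕ) :
    Multiset.card (stretch A b) = Multiset.card A + (b + 1) / 2 := by
  simp [stretch]
  omega

lemma sum_stretch (A : Multiset ℕ) (b : ℕ) :
    (stretch A b).sum = A.sum + 2 * Multiset.card A + b := by
  simp [stretch, Multiset.sum_map_add]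
  omega

lemma mem_stretch {i : ℕ} : i ∈ stretch A b ↔
    (∃ a ∈ A, a + 2 = i) ∨ (b / 2 ≠ 0 ∧ i = 2) ∨ (b % 2 ≠ 0 ∧ i = 1) := by
  simp only [stretch, Multiset.mem_add, Multiset.mem_map, Multiset.mem_replicate, or_assoc]

lemma halfMax_stretch (h : A ≠ 0 ∨ b ≠ 0) : halfMax (stretch A b) = halfMax A + 1 := by
  have hA := halfMax_le_iff.1 (le_refl (halfMax A))
  have hS := halfMax_le_iff.1 (le_refl (halfMax (stretch A b)))
  refine le_antisymm (halfMax_le_iff.2 fun i hi ↦ ?_) ?_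
  · rcases mem_stretch.1 hi with ⟨a, ha, rfl⟩ | ⟨-, rfl⟩ | ⟨-, rfl⟩
    · linarith [hA a ha]
    · omega
    · omega
  · have hpos : 0 < halfMax (stretch A b) := by
      obtain ⟨i, hi, hi0⟩ : ∃ i ∈ stretch A b, 0 < i := by
        by_cases hA0 : A = 0
        · have hb0 : b ≠ 0 := h.resolve_left (not_not_intro hA0)
          by_cases hb : b / 2 = 0
          · exact ⟨1, mem_stretch.2 (.inr (.inr ⟨by omega, rfl⟩)), one_pos⟩
          · exact ⟨2, mem_stretch.2 (.inr (.inl ⟨hb, rfl⟩)), two_pos⟩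
        · exact ⟨A.sup + 2, mem_stretch.2 (.inl ⟨_, sup_mem hA0, rfl⟩), by omega⟩
      have := hS i hi
      omega
    have hle : halfMax A ≤ halfMax (stretch A b) - 1 := halfMax_le_iff.2 fun a ha ↦ by
      have := hS (a + 2) (mem_stretch.2 (.inl ⟨a, ha, rfl⟩))
      omega
    omega

/-- For `m = -1` the two sides differ at the empty partition. -/
lemma rank_stretch_le_iff (hm : m ≠ -1) : rank (stretch A b) ≤ m + 1 ↔
    (halfMax A : ℤ) ≤ Multiset.card A + m + ((b + 1) / 2 : ℕ) := by
  rw [rank, card_stretch]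
  by_cases h : A ≠ 0 ∨ b ≠ 0
  · rw [halfMax_stretch h]
    omega
  · obtain ⟨rfl, rfl⟩ : A = 0 ∧ b = 0 := by tauto
    simp [stretch, halfMax]
    omega

lemma OddDistinct.erase (hN : OddDistinct N) (a : ℕ) : OddDistinct (N.erase a) :=
  ⟨fun h ↦ hN.1 (Multiset.mem_of_mem_erase h), fun j hj ↦
    (Multiset.count_le_of_le j (Multiset.erase_le a N)).trans (hN.2 j hj)⟩

lemma OddDistinct.halfMax_erase_sup_le (hN : OddDistinct N) :
    halfMax (N.erase N.sup) ≤ N.sup / 2 := by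
  refine halfMax_le_iff.2 fun i hi ↦ ?_
  have hle := Multiset.le_sup (Multiset.mem_of_mem_erase hi)
  rcases Nat.even_or_odd' N.sup with ⟨k, hk | hk⟩
  · omega
  · have hne : i ≠ N.sup := by
      rintro rfl
      have hcount := hN.2 N.sup ⟨k, hk⟩
      have hpos := Multiset.count_pos.2 hi
      rw [Multiset.count_erase_self] at hpos
      omega
    omega

/-- Adjoins `r` to the parts `A`, intended as a new largest part. A part `0` stands for the empty
partition, which has no largest part to remove. -/
def insertTop (A : Multiset ℕ) (r : ℕ) : Multiset ℕ := if r = 0 then 0 else r ::ₘ A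

lemma OddDistinct.insertTop (hA : OddDistinct A) (hr : halfMax A ≤ r / 2) :
    OddDistinct (insertTop A r) := by
  unfold M2Rank.insertTop
  split_ifs with h0
  · exact oddDistinct_zero
  · refine ⟨by simpa [Ne.symm h0] using hA.1, fun j hj ↦ ?_⟩
    rw [Multiset.count_cons]
    split_ifs with hjr
    · have hj0 : A.count j = 0 := by
        refine Multiset.count_eq_zero.2 fun hmem ↦ ?_
        have := halfMax_le_iff.1 hr j hmem
        obtain ⟨k, hk⟩ := hj
        omega
      omega
    · simpa using hA.2 j hj

lemma sup_insertTop (hr : halfMax A ≤ r / 2) : (insertTop A r).sup = r := by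
  unfold insertTop
  split_ifs with h0
  · simp [h0]
  · rw [Multiset.sup_cons, sup_eq_left, Multiset.sup_le]
    intro i hi
    have := halfMax_le_iff.1 hr i hi
    omega

lemma OddDistinct.erase_insertTop (hA : OddDistinct A) (hr : halfMax A ≤ r / 2) :
    (M2Rank.insertTop A r).erase r = A := by
  unfold M2Rank.insertTop
  split_ifs with h0
  · subst h0
    rw [hA.eq_zero_of_halfMax_eq_zero (by omega), Multiset.erase_zero]
  · exact Multiset.erase_cons_head _ _

lemma OddDistinct.insertTop_erase_sup (hN : OddDistinct N) :
    M2Rank.insertTop (N.erase N.sup) N.sup = N := by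
  rcases eq_or_ne N 0 with rfl | h
  · simp [M2Rank.insertTop]
  · have hmem := sup_mem h
    have h0 : N.sup ≠ 0 := fun h0 ↦ hN.1 (h0 ▸ hmem)
    rw [M2Rank.insertTop, if_neg h0, Multiset.cons_erase hmem]

/-- Inserting a new largest part, or removing it. -/
def insertTopEquiv :
    {p : OddDistinctPartition × ℕ // halfMax p.1.1 ≤ p.2 / 2} ≃ OddDistinctPartition where
  toFun p := ⟨insertTop p.1.1.1 p.1.2, p.1.1.2.insertTop p.2⟩
  invFun N := ⟨(⟨N.1.erase N.1.sup, N.2.erase _⟩, N.1.sup), N.2.halfMax_erase_sup_le⟩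
  left_inv p := by
    refine Subtype.ext (Prod.ext (Subtype.ext ?_) (sup_insertTop p.2))
    dsimp only
    rw [sup_insertTop p.2, p.1.1.2.erase_insertTop p.2]
  right_inv N := Subtype.ext N.2.insertTop_erase_sup

/-- The largest part of `N` exceeds twice the number of other parts by at least `2 * m + 1`. -/
def TopDominates (m : ℤ) (N : Multiset ℕ) : Prop :=
  2 * (Multiset.card (N.erase N.sup) : ℤ) + 2 * m + 1 ≤ N.sup

/-- The pairs `(A, b)` for which `stretch A b` has M2-rank at most `m + 1`
(see `rank_stretch_le_iff`). -/
abbrev StretchPair (m : ℤ) : Type :=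
  {p : OddDistinctPartition × ℕ //
    (halfMax p.1.1 : ℤ) ≤ Multiset.card p.1.1 + m + ((p.2 + 1) / 2 : ℕ)}

/-- The largest part that is inserted into `A` in exchange for the small parts of total size `b`. -/
def topOf (m : ℤ) (A : Multiset ℕ) (b : ℕ) : ℕ :=
  (2 * (Multiset.card A : ℤ) + b + 2 * m + 1).toNat

/-- Trades the size `b` of the small parts for the new largest part `topOf m A b`. -/
def stretchPairEquiv (m : ℤ) : StretchPair m ≃
    {p : {p : OddDistinctPartition × ℕ // halfMax p.1.1 ≤ p.2 / 2} //
      2 * (Multiset.card p.1.1.1 : ℤ) + 2 * m + 1 ≤ p.1.2} where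
  toFun p := ⟨⟨(p.1.1, topOf m p.1.1.1 p.1.2), by have := p.2; unfold topOf; dsimp only; omega⟩,
    by have := p.2; unfold topOf; dsimp only; omega⟩
  invFun p := ⟨(p.1.1.1, ((p.1.1.2 : ℤ) - 2 * m - 1 - 2 * Multiset.card p.1.1.1.1).toNat), by
    have hmax := p.1.2
    have := p.2
    dsimp only
    omega⟩
  left_inv p := Subtype.ext <| Prod.ext rfl <| by
    have := p.2
    unfold topOf
    dsimp only
    omega
  right_inv p := Subtype.ext <| Subtype.ext <| Prod.ext rfl <| by
    have := p.2
    unfold topOf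
    dsimp only
    omega

/-- The partitions of M2-rank at most `m + 1`, split into `stretch A b`. -/
def stretchPairEquivRankLE (hm : m ≠ -1) :
    StretchPair m ≃ {M : OddDistinctPartition // rank M.1 ≤ m + 1} :=
  stretchEquiv.subtypeEquiv fun _ ↦ (rank_stretch_le_iff hm).symm

/-- The partitions with dominant largest part, split into `insertTop A r`. -/
def stretchPairEquivTopDominates (m : ℤ) :
    StretchPair m ≃ {N : OddDistinctPartition // TopDominates m N.1} :=
  (stretchPairEquiv m).trans <| insertTopEquiv.subtypeEquiv fun p ↦ by
    change _ ↔ TopDominates m (insertTop p.1.1.1 p.1.2)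
    rw [TopDominates, sup_insertTop p.2, p.1.1.2.erase_insertTop p.2]

lemma sum_stretchPairEquivTopDominates (hm : m ≠ -1) (p : StretchPair m) :
    ((stretchPairEquivTopDominates m p).1.1.sum : ℤ) =
      (stretchPairEquivRankLE hm p).1.1.sum + 2 * m + 1 := by
  obtain ⟨⟨⟨A, hA⟩, b⟩, hb⟩ := p
  change ((insertTop A (topOf m A b)).sum : ℤ) = (stretch A b).sum + 2 * m + 1
  dsimp only at hb
  rw [sum_stretch]
  unfold insertTop
  split_ifs with h0 <;> unfold topOf at *
  · obtain rfl := hA.eq_zero_of_halfMax_eq_zero (by omega)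
    simp [halfMax] at *
    omega
  · rw [Multiset.sum_cons]
    omega

lemma topDominates_iff_of_ne_zero (hN : N ≠ 0) : TopDominates m N ↔ m ≤ rank N := by
  have := Multiset.card_erase_add_one (sup_mem hN)
  unfold TopDominates rank halfMax
  omega

lemma topDominates_iff (hm : m ≠ 0) : TopDominates m N ↔ m ≤ rank N := by
  rcases eq_or_ne N 0 with rfl | hN
  · simp [TopDominates, rank, halfMax]
    omega
  · exact topDominates_iff_of_ne_zero hN

lemma topDominates_zero_iff : TopDominates 0 N ↔ 0 ≤ rank N ∧ N ≠ 0 := by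
  rcases eq_or_ne N 0 with rfl | hN
  · simp [TopDominates]
  · simp [topDominates_iff_of_ne_zero hN, hN]

end OddDistinct

section GeneratingFunctions

variable {x q : ℝ} {m n : ℕ} {P P' P'' : OddDistinctPartition → Prop}

/-! ### Rank generating functions -/

/-- The number partitioned by `s`. -/
def size (s : OddDistinctPartition) : ℕ := s.1.sum

/-- An odd-distinct multiset of sum `n` as a partition of `n`. -/
def toPartition (n : ℕ) (s : {s : OddDistinctPartition // size s = n}) : n.Partition where
  parts := s.1.1
  parts_pos hi := Nat.pos_of_ne_zero fun h ↦ s.1.2.1 (h ▸ hi)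
  parts_sum := s.2

lemma toPartition_injective (n : ℕ) : Function.Injective (toPartition n) := fun _ _ h ↦
  Subtype.ext (Subtype.ext (congrArg Nat.Partition.parts h))

instance (n : ℕ) : Finite {s : OddDistinctPartition // size s = n} :=
  .of_injective _ (toPartition_injective n)

lemma card_size_eq_le (n : ℕ) : Nat.card {s : OddDistinctPartition // size s = n} ≤ 2 ^ n :=
  calc
    _ ≤ Nat.card n.Partition := Nat.card_le_card_of_injective _ (toPartition_injective n)
    _ ≤ Nat.card (Composition n) := Nat.card_le_card_of_surjective _
      (Nat.Partition.ofComposition_surj (n := n))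
    _ = 2 ^ (n - 1) := by rw [Nat.card_eq_fintype_card, composition_card]
    _ ≤ 2 ^ n := Nat.pow_le_pow_right two_pos (n.sub_le 1)

lemma summable_abs_pow_size (hx : |x| < 1 / 2) :
    Summable fun s : OddDistinctPartition ↦ |x| ^ size s := by
  rw [← (Equiv.sigmaFiberEquiv size).summable_iff,
    summable_sigma_of_nonneg fun _ ↦ by simp only [Function.comp_apply]; positivity]
  refine ⟨fun n ↦ .of_finite, ?_⟩
  have hgeom : Summable fun n : ℕ ↦ (2 * |x|) ^ n :=
    summable_geometric_of_lt_one (by positivity) (by linarith)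
  refine .of_nonneg_of_le (fun n ↦ tsum_nonneg fun _ ↦ pow_nonneg (abs_nonneg x) _)
    (fun n ↦ ?_) hgeom
  have hfib (s : {s : OddDistinctPartition // size s = n}) :
      ((fun s ↦ |x| ^ size s) ∘ Equiv.sigmaFiberEquiv size) ⟨n, s⟩ = |x| ^ n := by
    simp only [Function.comp_apply, Equiv.sigmaFiberEquiv_apply, s.2]
  rw [tsum_congr hfib, tsum_const, nsmul_eq_mul, mul_pow]
  gcongr
  exact_mod_cast card_size_eq_le n

lemma summable_mul_pow_size (hx : |x| < 1 / 2) {c : OddDistinctPartition → ℝ} {C : ℝ}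
    (hc : ∀ s, |c s| ≤ C) : Summable fun s ↦ c s * x ^ size s :=
  .of_norm_bounded ((summable_abs_pow_size hx).mul_left C) fun s ↦ by
    rw [Real.norm_eq_abs, abs_mul, abs_pow]
    exact mul_le_mul_of_nonneg_right (hc s) (by positivity)

/-- The generating function of the partitions without repeated odd parts that satisfy `P`. -/
noncomputable def genFun (P : OddDistinctPartition → Prop) (x : ℝ) : ℝ :=
  ∑' s, if P s then x ^ size s else 0

lemma summable_genFun (hx : |x| < 1 / 2) (P : OddDistinctPartition → Prop) :
    Summable fun s ↦ if P s then x ^ size s else 0 :=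
  (summable_mul_pow_size hx (c := fun s ↦ if P s then 1 else 0) (C := 1)
    fun s ↦ by split_ifs <;> simp).congr fun s ↦ by simp

lemma genFun_congr (h : ∀ s, P s ↔ P' s) : genFun P x = genFun P' x := by
  rw [funext fun s ↦ propext (h s)]

lemma genFun_eq_tsum_subtype (P : OddDistinctPartition → Prop) :
    genFun P x = ∑' s : {s // P s}, x ^ size s.1 :=
  (tsum_subtype {s | P s} fun s ↦ x ^ size s).symm

lemma genFun_add (hx : |x| < 1 / 2) (hdisj : ∀ s, P s → ¬P' s) (hor : ∀ s, P'' s ↔ P s ∨ P' s) :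
    genFun P x + genFun P' x = genFun P'' x := by
  unfold genFun
  rw [← (summable_genFun hx _).tsum_add (summable_genFun hx _)]
  refine tsum_congr fun s ↦ ?_
  by_cases hs : P s
  · simp [hor, hs, hdisj s hs]
  · simp [hor, hs]

lemma genFun_add_compl (hx : |x| < 1 / 2) (h : ∀ s, P' s ↔ ¬P s) :
    genFun P x + genFun P' x = genFun (fun _ ↦ True) x :=
  genFun_add hx (fun s hs hs' ↦ (h s).1 hs' hs) fun s ↦ by simp [h, em]

lemma genFun_eq_empty : genFun (fun s ↦ s.1 = 0) x = 1 := by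
  unfold genFun
  refine (tsum_eq_single ⟨0, oddDistinct_zero⟩ fun s hs ↦ ?_).trans (by simp [size])
  exact if_neg fun h ↦ hs (Subtype.ext h)

lemma genFun_topDominates (hx0 : x ≠ 0) {m : ℤ} (hm : m ≠ -1) :
    genFun (fun s ↦ TopDominates m s.1) x =
      x ^ (2 * m + 1) * genFun (fun s ↦ rank s.1 ≤ m + 1) x := by
  rw [genFun_eq_tsum_subtype, genFun_eq_tsum_subtype, ← tsum_mul_left,
    ← (stretchPairEquivTopDominates m).tsum_eq, ← (stretchPairEquivRankLE hm).tsum_eq]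
  refine tsum_congr fun p ↦ ?_
  rw [← zpow_natCast, ← zpow_natCast, ← zpow_add₀ hx0]
  congr 1
  rw [size, size, sum_stretchPairEquivTopDominates hm]
  ring

/-- The generating function of all partitions without repeated odd parts. -/
noncomputable def partitionGF (x : ℝ) : ℝ := genFun (fun _ ↦ True) x

/-- The generating function of the partitions of M2-rank at least `m`. -/
noncomputable def rankGeGF (m : ℕ) (x : ℝ) : ℝ := genFun (fun s ↦ m ≤ rank s.1) x

/-- The generating function of the partitions of M2-rank at most `-m`. -/
noncomputable def rankLeNegGF (m : ℕ) (x : ℝ) : ℝ := genFun (fun s ↦ rank s.1 ≤ -m) x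

lemma rankGeGF_rec (hx : |x| < 1 / 2) (hx0 : x ≠ 0) (hm : m ≠ 0) :
    rankGeGF m x = x ^ (2 * m + 1) * (partitionGF x - rankGeGF (m + 2) x) := by
  have hcompl : rankGeGF (m + 2) x + genFun (fun s ↦ rank s.1 ≤ m + 1) x = partitionGF x :=
    genFun_add_compl hx fun s ↦ by
      push_cast
      omega
  have hrec := genFun_topDominates hx0 (show (m : ℤ) ≠ -1 by omega)
  rw [genFun_congr fun s ↦ topDominates_iff (mod_cast hm)] at hrec
  rw [rankGeGF, hrec, eq_sub_of_add_eq' hcompl]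
  norm_cast

lemma rankLeNegGF_rec (hx : |x| < 1 / 2) (hx0 : x ≠ 0) (hm : m ≠ 0) :
    rankLeNegGF m x = x ^ (2 * m + 1) * (partitionGF x - rankLeNegGF (m + 2) x) := by
  have hcompl : rankLeNegGF (m + 2) x + genFun (fun s ↦ -(m : ℤ) - 1 ≤ rank s.1) x =
      partitionGF x := genFun_add_compl hx fun s ↦ by
    push_cast
    omega
  have hrec := genFun_topDominates hx0 (show -(m : ℤ) - 1 ≠ -1 by omega)
  rw [genFun_congr fun s ↦ topDominates_iff (by omega), sub_add_cancel] at hrec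
  rw [← eq_sub_of_add_eq' hcompl, hrec, ← mul_assoc, ← zpow_natCast, ← zpow_add₀ hx0,
    show ((2 * m + 1 : ℕ) : ℤ) + (2 * (-(m : ℤ) - 1) + 1) = 0 by push_cast; ring, zpow_zero,
    one_mul, rankLeNegGF]

lemma partitionGF_sub_rankLeNegGF_one_sub_one (hx : |x| < 1 / 2) (hx0 : x ≠ 0) :
    partitionGF x - rankLeNegGF 1 x - 1 = x * (partitionGF x - rankGeGF 2 x) := by
  have hneg : rankLeNegGF 1 x + genFun (fun s ↦ 0 ≤ rank s.1) x = partitionGF x :=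
    genFun_add_compl hx fun s ↦ by
      push_cast
      omega
  have hle : rankGeGF 2 x + genFun (fun s ↦ rank s.1 ≤ 0 + 1) x = partitionGF x :=
    genFun_add_compl hx fun s ↦ by
      push_cast
      omega
  have hsplit : genFun (fun s ↦ TopDominates 0 s.1) x + 1 = genFun (fun s ↦ 0 ≤ rank s.1) x := by
    rw [← genFun_eq_empty (x := x)]
    refine genFun_add hx (fun s hs ↦ (topDominates_zero_iff.1 hs).2) fun s ↦ ?_
    rcases eq_or_ne s.1 0 with hs | hs
    · simp [hs, rank, halfMax]
    · simp [hs, topDominates_zero_iff]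
  have hrec := genFun_topDominates hx0 (show (0 : ℤ) ≠ -1 by decide)
  simp only [mul_zero, zero_add, zpow_one] at hrec hle
  rw [← eq_sub_of_add_eq' hneg, ← eq_sub_of_add_eq' hle, ← hrec, ← hsplit, add_sub_cancel_right]

lemma abs_genFun_le (hx : |x| < 1 / 2) (P : OddDistinctPartition → Prop) :
    |genFun P x| ≤ ∑' s, |x| ^ size s := by
  rw [← Real.norm_eq_abs]
  refine tsum_of_norm_bounded (summable_abs_pow_size hx).hasSum fun s ↦ ?_
  split_ifs
  · simp
  · rw [norm_zero]
    positivity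

lemma eq_zero_of_eq_neg_pow_mul (hx : |x| < 1) {D : ℕ → ℝ} {C : ℝ} (hC : ∀ m, |D m| ≤ C)
    (hD : ∀ m ≠ 0, D m = -x ^ (2 * m + 1) * D (m + 2)) (hm : m ≠ 0) : D m = 0 := by
  have hbound (k : ℕ) : ∀ m ≠ 0, |D m| ≤ |x| ^ k * C := by
    induction k with
    | zero => simpa using fun m _ ↦ hC m
    | succ k ih =>
      intro m hm
      have hpow : |x| ^ (2 * m + 1) ≤ |x| := pow_le_of_le_one (abs_nonneg _) hx.le (by omega)
      rw [hD m hm, abs_mul, abs_neg, abs_pow, pow_succ' |x| k, mul_assoc]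
      exact mul_le_mul hpow (ih _ (by omega)) (abs_nonneg _) (abs_nonneg _)
  have hlim : Tendsto (fun k : ℕ ↦ |x| ^ k * C) atTop (𝓝 0) := by
    simpa using (tendsto_pow_atTop_nhds_zero_of_lt_one (abs_nonneg x) hx).mul_const C
  exact abs_nonpos_iff.1 (ge_of_tendsto' hlim fun k ↦ hbound k m hm)

theorem rankLeNegGF_eq_rankGeGF (hx : |x| < 1 / 2) (hx0 : x ≠ 0) (hm : m ≠ 0) :
    rankLeNegGF m x = rankGeGF m x :=
  sub_eq_zero.1 <| eq_zero_of_eq_neg_pow_mul (hx.trans (by norm_num))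
    (D := fun m ↦ rankLeNegGF m x - rankGeGF m x)
    (fun _ ↦ (abs_sub _ _).trans (add_le_add (abs_genFun_le hx _) (abs_genFun_le hx _)))
    (fun m hm ↦ by rw [rankLeNegGF_rec hx hx0 hm, rankGeGF_rec hx hx0 hm]; ring) hm

/-- The partial theta series whose product with the generating function of all partitions gives,
up to sign, that of the partitions of M2-rank at least `m`. -/
noncomputable def rankTail (m : ℕ) (q : ℝ) : ℝ := ∑' n : ℕ, q ^ ((n + 1) * (2 * n + 1 + 2 * m))

lemma pow_rankTail_le (hq0 : 0 ≤ q) (hq1 : q ≤ 1) (m n : ℕ) :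
    q ^ ((n + 1) * (2 * n + 1 + 2 * m)) ≤ q ^ n :=
  pow_le_pow_of_le_one hq0 hq1 (by nlinarith [Nat.zero_le (n * n), Nat.zero_le (n * m)])

lemma summable_rankTail (hq0 : 0 ≤ q) (hq1 : q < 1) (m : ℕ) :
    Summable fun n : ℕ ↦ q ^ ((n + 1) * (2 * n + 1 + 2 * m)) :=
  .of_nonneg_of_le (fun _ ↦ by positivity) (pow_rankTail_le hq0 hq1.le m)
    (summable_geometric_of_lt_one hq0 hq1)

lemma rankTail_rec (hq0 : 0 ≤ q) (hq1 : q < 1) (m : ℕ) :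
    rankTail m q = q ^ (2 * m + 1) * (1 + rankTail (m + 2) q) := by
  unfold rankTail
  rw [(summable_rankTail hq0 hq1 m).tsum_eq_zero_add, mul_add (q ^ (2 * m + 1)), ← tsum_mul_left]
  congr 1
  · ring
  · exact tsum_congr fun n ↦ by ring

theorem rankGeGF_neg (hq0 : 0 < q) (hq1 : q < 1 / 2) (hm : m ≠ 0) :
    rankGeGF m (-q) = -(partitionGF (-q) * rankTail m q) := by
  have hq1' : q < 1 := by linarith
  have hx : |(-q)| < 1 / 2 := by rwa [abs_neg, abs_of_pos hq0]
  have htail (m : ℕ) : |rankTail m q| ≤ ∑' n : ℕ, q ^ n := by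
    rw [rankTail, abs_of_nonneg (tsum_nonneg fun n ↦ by positivity)]
    exact (summable_rankTail hq0.le hq1' m).tsum_le_tsum (pow_rankTail_le hq0.le hq1'.le m)
      (summable_geometric_of_lt_one hq0.le hq1')
  refine eq_neg_of_add_eq_zero_left <| eq_zero_of_eq_neg_pow_mul (hx.trans (by norm_num))
    (D := fun m ↦ rankGeGF m (-q) + partitionGF (-q) * rankTail m q)
    (C := (∑' s, |-q| ^ size s) + |partitionGF (-q)| * ∑' n : ℕ, q ^ n) (fun m ↦ ?_)
    (fun m hm ↦ ?_) hm
  · refine (abs_add_le _ _).trans (add_le_add (abs_genFun_le hx _) ?_)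
    rw [abs_mul]
    gcongr
    exact htail m
  · rw [rankGeGF_rec hx (by linarith) hm, rankTail_rec hq0.le hq1', Odd.neg_pow ⟨m, rfl⟩]
    ring

end GeneratingFunctions

section WeightedRank

variable {x q R C : ℝ} {m n : ℕ} {w : ℤ → ℝ}

/-! ### Sums over partitions weighted by the rank -/

/-- The generating function of the partitions of M2-rank `r`. -/
noncomputable def rankGF (r : ℤ) (x : ℝ) : ℝ := genFun (fun s ↦ rank s.1 = r) x

lemma rankGF_natCast (hx : |x| < 1 / 2) (m : ℕ) :
    rankGF m x = rankGeGF m x - rankGeGF (m + 1) x :=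
  eq_sub_of_add_eq <| genFun_add hx (fun s ↦ by push_cast; omega) fun s ↦ by push_cast; omega

lemma rankGF_neg_natCast (hx : |x| < 1 / 2) (m : ℕ) :
    rankGF (-m) x = rankLeNegGF m x - rankLeNegGF (m + 1) x :=
  eq_sub_of_add_eq <| genFun_add hx (fun s ↦ by push_cast; omega) fun s ↦ by push_cast; omega

lemma rankGF_neg (hx : |x| < 1 / 2) (hx0 : x ≠ 0) (hm : m ≠ 0) : rankGF (-m) x = rankGF m x := by
  rw [rankGF_neg_natCast hx, rankGF_natCast hx, rankLeNegGF_eq_rankGeGF hx hx0 hm,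
    rankLeNegGF_eq_rankGeGF hx hx0 m.succ_ne_zero]

lemma rankGF_zero (hx : |x| < 1 / 2) (hx0 : x ≠ 0) :
    rankGF 0 x = partitionGF x - 2 * rankGeGF 1 x := by
  have hle : rankLeNegGF 0 x + rankGeGF 1 x = partitionGF x :=
    genFun_add_compl hx fun s ↦ by push_cast; omega
  have hzero := rankGF_neg_natCast hx 0
  rw [zero_add, rankLeNegGF_eq_rankGeGF hx hx0 one_ne_zero, Nat.cast_zero, neg_zero] at hzero
  linear_combination hzero + hle

lemma rankTail_sub (hq0 : 0 ≤ q) (hq1 : q < 1) (m : ℕ) : rankTail m q - rankTail (m + 1) q =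
    ∑' n : ℕ, q ^ ((n + 1) * (2 * n + 1)) *
      ((1 - q ^ (2 * (n + 1))) * (q ^ (2 * (n + 1))) ^ m) := by
  unfold rankTail
  rw [← (summable_rankTail hq0 hq1 m).tsum_sub (summable_rankTail hq0 hq1 (m + 1))]
  exact tsum_congr fun n ↦ by ring

lemma rankGF_neg_arg (hq0 : 0 < q) (hq1 : q < 1 / 2) (hm : m ≠ 0) :
    rankGF m (-q) = -(partitionGF (-q) * (rankTail m q - rankTail (m + 1) q)) := by
  have hx : |(-q)| < 1 / 2 := by rwa [abs_neg, abs_of_pos hq0]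
  rw [rankGF_natCast hx, rankGeGF_neg hq0 hq1 hm, rankGeGF_neg hq0 hq1 m.succ_ne_zero]
  ring

lemma OddDistinct.natAbs_rank_le_sum {M : Multiset ℕ} (hM : OddDistinct M) :
    (rank M).natAbs ≤ M.sum := by
  have hsup : M.sup ≤ M.sum := Multiset.sup_le.2 fun i hi ↦
    Multiset.single_le_sum (fun _ _ ↦ Nat.zero_le _) i hi
  have hcard : Multiset.card M ≤ M.sum := by
    simpa using Multiset.card_nsmul_le_sum (s := M) (a := 1)
      fun i hi ↦ Nat.pos_of_ne_zero fun h ↦ hM.1 (h ▸ hi)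
  unfold rank halfMax
  omega

lemma summable_weight_rank (hR : 1 ≤ R) (hx : R * |x| < 1 / 2)
    (hw : ∀ r, |w r| ≤ C * R ^ r.natAbs) : Summable fun s ↦ w (rank s.1) * x ^ size s := by
  have hC : 0 ≤ C := by simpa using (abs_nonneg _).trans (hw 0)
  have hRx : |(R * |x|)| = R * |x| := abs_of_nonneg (by positivity)
  refine .of_norm_bounded ((summable_abs_pow_size (hRx.trans_lt hx)).mul_left C) fun s ↦ ?_
  rw [Real.norm_eq_abs, abs_mul, abs_pow, hRx, mul_pow, ← mul_assoc]
  gcongr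
  calc |w (rank s.1)| ≤ C * R ^ (rank s.1).natAbs := hw _
    _ ≤ C * R ^ size s := by gcongr; exact s.2.natAbs_rank_le_sum

lemma hasSum_weight_mul_rankGF (hs : Summable fun s ↦ w (rank s.1) * x ^ size s) :
    HasSum (fun r ↦ w r * rankGF r x) (∑' s, w (rank s.1) * x ^ size s) := by
  refine (hs.hasSum.tsum_fiberwise fun s ↦ rank s.1).congr_fun fun r ↦ ?_
  rw [rankGF, genFun_eq_tsum_subtype, ← tsum_mul_left]
  exact tsum_congr fun s ↦ by rw [s.2]

lemma tsum_int_eq_zero_add {f : ℤ → ℝ} (hf : Summable f) :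
    ∑' r, f r = f 0 + ∑' n : ℕ, (f (n + 1) + f (-(n + 1))) := by
  have hpos : Summable fun n : ℕ ↦ f (n + 1) :=
    hf.comp_injective (i := fun n : ℕ ↦ (n + 1 : ℤ)) fun _ _ h ↦ by simpa using h
  have hneg : Summable fun n : ℕ ↦ f (-(n + 1)) :=
    hf.comp_injective (i := fun n : ℕ ↦ (-(n + 1) : ℤ)) fun _ _ h ↦ by simpa using h
  rw [tsum_of_add_one_of_neg_add_one hpos hneg, hpos.tsum_add hneg]
  ring

lemma abs_weight_add_le (hw : ∀ r, |w r| ≤ C * R ^ r.natAbs) (m : ℕ) :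
    |w (m + 1) + w (-(m + 1))| ≤ 2 * C * R ^ (m + 1) := by
  have hpos := hw (m + 1)
  have hneg := hw (-(m + 1))
  rw [Int.natAbs_neg] at hneg
  rw [show ((m : ℤ) + 1).natAbs = m + 1 by omega] at hpos hneg
  linarith [abs_add_le (w (m + 1)) (w (-(m + 1)))]

lemma summable_weight_rankTail (hq0 : 0 < q) (hq1 : q < 1) (hR : 0 ≤ R) (hRq : R * q < 1)
    (hw : ∀ r, |w r| ≤ C * R ^ r.natAbs) : Summable (Function.uncurry fun m n : ℕ ↦
      (w (m + 1) + w (-(m + 1))) * (q ^ ((n + 1) * (2 * n + 1)) *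
        ((1 - q ^ (2 * (n + 1))) * (q ^ (2 * (n + 1))) ^ (m + 1)))) := by
  have hC : 0 ≤ C := by simpa using (abs_nonneg _).trans (hw 0)
  have hbound : Summable fun p : ℕ × ℕ ↦ (2 * C * (R * q) ^ (p.1 + 1)) * q ^ p.2 :=
    .mul_of_nonneg
      (((summable_nat_add_iff 1).2 (summable_geometric_of_lt_one (by positivity) hRq)).mul_left _)
      (summable_geometric_of_lt_one hq0.le hq1) (fun _ ↦ by dsimp only [Pi.zero_apply]; positivity)
      fun _ ↦ by dsimp only [Pi.zero_apply]; positivity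
  refine .of_norm_bounded hbound fun ⟨m, n⟩ ↦ ?_
  have hz1 : q ^ (2 * (n + 1)) ≤ 1 := pow_le_one₀ hq0.le hq1.le
  have hz0 : 0 < q ^ (2 * (n + 1)) := by positivity
  have hpow : q ^ ((n + 1) * (2 * n + 1)) * ((1 - q ^ (2 * (n + 1))) *
      (q ^ (2 * (n + 1))) ^ (m + 1)) ≤ q ^ (m + 1) * q ^ n :=
    calc
      _ ≤ q ^ ((n + 1) * (2 * n + 1)) * (1 * (q ^ (2 * (n + 1))) ^ (m + 1)) := by
        gcongr
        linarith
      _ = q ^ ((n + 1) * (2 * n + 1 + 2 * (m + 1))) := by ring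
      _ ≤ q ^ (m + 1 + n) := pow_le_pow_of_le_one hq0.le hq1.le
        (by nlinarith [Nat.zero_le (n * n), Nat.zero_le (n * m)])
      _ = _ := pow_add _ _ _
  dsimp only [Function.uncurry_apply_pair]
  rw [Real.norm_eq_abs, abs_mul, mul_pow, ← mul_assoc (2 * C), mul_assoc _ (q ^ (m + 1)),
    abs_of_nonneg (a := q ^ _ * _)
      (mul_nonneg (by positivity) (mul_nonneg (by linarith) (by positivity)))]
  gcongr
  exact abs_weight_add_le hw m

lemma hasSum_weight_rankTail_row {z g : ℝ} (p y : ℝ)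
    (hg : HasSum (fun m : ℕ ↦ (w (m + 1) + w (-(m + 1))) * z ^ (m + 1)) g) :
    HasSum (fun m : ℕ ↦ (w (m + 1) + w (-(m + 1))) * (p * (y * z ^ (m + 1)))) (p * (y * g)) :=
  ((hg.mul_left y).mul_left p).congr_fun fun m ↦ by ring

lemma summable_weight_rankTail_rows (hq0 : 0 < q) (hq1 : q < 1) (hR : 0 ≤ R) (hRq : R * q < 1)
    (hw : ∀ r, |w r| ≤ C * R ^ r.natAbs) {g : ℕ → ℝ}
    (hg : ∀ n : ℕ, HasSum
      (fun m : ℕ ↦ (w (m + 1) + w (-(m + 1))) * (q ^ (2 * (n + 1))) ^ (m + 1)) (g n)) :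
    Summable fun n : ℕ ↦ q ^ ((n + 1) * (2 * n + 1)) * ((1 - q ^ (2 * (n + 1))) * g n) :=
  (summable_weight_rankTail hq0 hq1 hR hRq hw).prod_symm.prod.congr fun n ↦
    (hasSum_weight_rankTail_row (q ^ ((n + 1) * (2 * n + 1))) (1 - q ^ (2 * (n + 1)))
      (hg n)).tsum_eq

lemma tsum_weight_mul_rankTail_sub (hq0 : 0 < q) (hq1 : q < 1) (hR : 0 ≤ R) (hRq : R * q < 1)
    (hw : ∀ r, |w r| ≤ C * R ^ r.natAbs) {g : ℕ → ℝ}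
    (hg : ∀ n : ℕ, HasSum
      (fun m : ℕ ↦ (w (m + 1) + w (-(m + 1))) * (q ^ (2 * (n + 1))) ^ (m + 1)) (g n)) :
    ∑' m : ℕ, (w (m + 1) + w (-(m + 1))) * (rankTail (m + 1) q - rankTail (m + 2) q) =
      ∑' n : ℕ, q ^ ((n + 1) * (2 * n + 1)) * ((1 - q ^ (2 * (n + 1))) * g n) := by
  rw [← tsum_congr fun n ↦ (hasSum_weight_rankTail_row _ _ (hg n)).tsum_eq,
    (summable_weight_rankTail hq0 hq1 hR hRq hw).tsum_comm]
  exact tsum_congr fun m ↦ by rw [rankTail_sub hq0.le hq1, ← tsum_mul_left]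

theorem hasSum_weight_rank (hq0 : 0 < q) (hR : 1 ≤ R) (hRq : R * q < 1 / 2)
    (hw : ∀ r, |w r| ≤ C * R ^ r.natAbs) {g : ℕ → ℝ}
    (hg : ∀ n : ℕ, HasSum
      (fun m : ℕ ↦ (w (m + 1) + w (-(m + 1))) * (q ^ (2 * (n + 1))) ^ (m + 1)) (g n)) :
    HasSum (fun s ↦ w (rank s.1) * (-q) ^ size s)
      (partitionGF (-q) * (w 0 + ∑' n : ℕ, q ^ ((n + 1) * (2 * n + 1)) *
        (2 * w 0 * q ^ (2 * (n + 1)) - (1 - q ^ (2 * (n + 1))) * g n))) := by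
  have hq1 : q < 1 / 2 := (le_mul_of_one_le_left hq0.le hR).trans_lt hRq
  have hx : |(-q)| < 1 / 2 := by rwa [abs_neg, abs_of_pos hq0]
  have hx0 : -q ≠ 0 := neg_ne_zero.2 hq0.ne'
  have hs : Summable fun s ↦ w (rank s.1) * (-q) ^ size s :=
    summable_weight_rank hR (by rwa [abs_neg, abs_of_pos hq0]) hw
  have hrows := summable_weight_rankTail_rows hq0 (by linarith) (by linarith) (by linarith) hw hg
  have hcols := tsum_weight_mul_rankTail_sub hq0 (by linarith) (by linarith) (by linarith) hw hg
  have hrank : ∑' s, w (rank s.1) * (-q) ^ size s = w 0 * rankGF 0 (-q) + ∑' m : ℕ,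
      -partitionGF (-q) *
        ((w (m + 1) + w (-(m + 1))) * (rankTail (m + 1) q - rankTail (m + 2) q)) := by
    rw [← (hasSum_weight_mul_rankGF hs).tsum_eq,
      tsum_int_eq_zero_add (hasSum_weight_mul_rankGF hs).summable]
    congr 1
    refine tsum_congr fun m ↦ ?_
    have hneg := rankGF_neg hx hx0 m.succ_ne_zero
    have hpos := rankGF_neg_arg hq0 hq1 m.succ_ne_zero
    push_cast at hneg hpos
    rw [hneg, hpos]
    ring
  have htail : ∑' n : ℕ, q ^ ((n + 1) * (2 * n + 1)) * (2 * w 0 * q ^ (2 * (n + 1))) =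
      2 * w 0 * rankTail 1 q := by
    rw [rankTail, ← tsum_mul_left]
    exact tsum_congr fun n ↦ by ring
  have htail_summable : Summable fun n : ℕ ↦
      q ^ ((n + 1) * (2 * n + 1)) * (2 * w 0 * q ^ (2 * (n + 1))) :=
    ((summable_rankTail hq0.le (by linarith) 1).mul_left (2 * w 0)).congr fun n ↦ by ring
  refine hs.hasSum_iff.2 ?_
  rw [hrank, tsum_mul_left, hcols, rankGF_zero hx hx0, rankGeGF_neg hq0 hq1 one_ne_zero,
    tsum_congr fun n : ℕ ↦ mul_sub _ _ _, htail_summable.tsum_sub hrows, htail]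
  ring

end WeightedRank

section RankSeries

variable {q : ℝ}

lemma tsum_gauss_eq {F : ℝ → ℝ}
    (hF : Summable fun n : ℤ ↦ q ^ (2 * n ^ 2 + n) * F (q ^ (2 * n))) :
    ∑' n : ℤ, q ^ (2 * n ^ 2 + n) * F (q ^ (2 * n)) = F 1 + ∑' n : ℕ, q ^ ((n + 1) * (2 * n + 1)) *
      (q ^ (2 * (n + 1)) * F (q ^ (2 * (n + 1))) + F (q ^ (2 * (n + 1)))⁻¹) := by
  rw [tsum_int_eq_zero_add hF]
  congr 1
  · norm_num
  refine tsum_congr fun n ↦ ?_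
  have hpos : q ^ (2 * ((n : ℤ) + 1) ^ 2 + (n + 1)) =
      q ^ ((n + 1) * (2 * n + 1)) * q ^ (2 * (n + 1)) := by
    rw [← pow_add, ← zpow_natCast]
    congr 1
    push_cast
    ring
  have hneg : q ^ (2 * (-((n : ℤ) + 1)) ^ 2 + -(n + 1)) = q ^ ((n + 1) * (2 * n + 1)) := by
    rw [← zpow_natCast]
    congr 1
    push_cast
    ring
  have hbase : q ^ (2 * ((n : ℤ) + 1)) = q ^ (2 * (n + 1)) := mod_cast zpow_natCast q (2 * (n + 1))
  rw [mul_neg, zpow_neg, hpos, hneg, hbase]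
  ring

lemma partitionGF_neg_mul_ramanujanPsi (hq0 : 0 < q) (hq1 : q < 1 / 2) :
    partitionGF (-q) * ramanujanPsi q = 1 := by
  have hx : |(-q)| < 1 / 2 := by rwa [abs_neg, abs_of_pos hq0]
  have hrec := partitionGF_sub_rankLeNegGF_one_sub_one hx (neg_ne_zero.2 hq0.ne')
  rw [rankLeNegGF_eq_rankGeGF hx (neg_ne_zero.2 hq0.ne') one_ne_zero,
    rankGeGF_neg hq0 hq1 one_ne_zero, rankGeGF_neg hq0 hq1 two_ne_zero] at hrec
  have hpsi : ramanujanPsi q = 1 + (rankTail 1 q + rankTail 0 q) := by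
    have hsum := summable_ramanujanPsi hq0 (by linarith)
    have h := tsum_gauss_eq (F := fun _ ↦ 1) (by simpa only [mul_one] using hsum)
    simp only [mul_one] at h
    rw [ramanujanPsi, h, rankTail, rankTail, ← (summable_rankTail hq0.le (by linarith) 1).tsum_add
      (summable_rankTail hq0.le (by linarith) 0)]
    congr 1
    exact tsum_congr fun n ↦ by ring
  rw [hpsi, rankTail_rec hq0.le (by linarith) 0]
  linear_combination hrec

theorem hasSum_weight_rank_eq_tsum_gauss {R C : ℝ} {w : ℤ → ℝ} {F : ℝ → ℝ} (hq0 : 0 < q)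
    (hR : 1 ≤ R) (hRq : R * q < 1 / 2) (hw : ∀ r, |w r| ≤ C * R ^ r.natAbs) (hF1 : F 1 = w 0)
    (hF : Summable fun n : ℤ ↦ q ^ (2 * n ^ 2 + n) * F (q ^ (2 * n)))
    (hwF : ∀ z, 0 < z → z ≤ q → HasSum (fun m : ℕ ↦ (w (m + 1) + w (-(m + 1))) * z ^ (m + 1))
      ((2 * w 0 * z - (z * F z + F z⁻¹)) / (1 - z))) :
    HasSum (fun s ↦ w (rank s.1) * (-q) ^ size s)
      (partitionGF (-q) * ∑' n : ℤ, q ^ (2 * n ^ 2 + n) * F (q ^ (2 * n))) := by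
  have hq1 : q < 1 := by linarith [le_mul_of_one_le_left hq0.le hR]
  have hz (n : ℕ) : q ^ (2 * (n + 1)) ≤ q := pow_le_of_le_one hq0.le hq1.le (by omega)
  rw [tsum_gauss_eq hF, hF1]
  convert hasSum_weight_rank hq0 hR hRq hw fun n ↦ hwF _ (by positivity) (hz n) using 5 with n
  rw [mul_div_cancel₀ _ (by linarith [hz n])]
  ring

lemma hasSum_neg_zpow_add_mul_pow {a z : ℝ} (ha : 0 < a) (hz : 0 ≤ z) (haz : a * z < 1)
    (hza : z < a) :
    HasSum (fun m : ℕ ↦ ((-a) ^ ((m : ℤ) + 1) + (-a) ^ (-((m : ℤ) + 1))) * z ^ (m + 1))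
      (-(a * z) / (1 + a * z) - z / (a + z)) := by
  have hpos := (hasSum_geometric_of_abs_lt_one (r := -(a * z))
    (by rwa [abs_neg, abs_of_nonneg (by positivity)])).mul_left (-(a * z))
  have hneg := (hasSum_geometric_of_abs_lt_one (r := -(z / a))
    (by rwa [abs_neg, abs_of_nonneg (by positivity), div_lt_one ha])).mul_left (-(z / a))
  have hval : -(a * z) / (1 + a * z) - z / (a + z) =
      -(a * z) * (1 - -(a * z))⁻¹ + -(z / a) * (1 - -(z / a))⁻¹ := by
    rw [sub_neg_eq_add, sub_neg_eq_add]
    field_simp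
    ring
  rw [hval]
  refine (hpos.add hneg).congr_fun fun m ↦ ?_
  rw [← pow_succ', ← pow_succ', zpow_neg, ← inv_zpow, ← Nat.cast_succ, zpow_natCast, zpow_natCast,
    add_mul, ← mul_pow, ← mul_pow]
  congr 2 <;> ring

lemma hasSum_neg_zpow_rank {d : ℕ} (hq0 : 0 < q) (hq1 : q < 1 / 2) (hd : d ≤ 2) :
    HasSum (fun s ↦ (-q ^ d) ^ rank s.1 * (-q ^ 3) ^ size s)
      (partitionGF (-q ^ 3) * ((1 + q ^ d) * lerch q 3 d)) := by
  have ha0 : 0 < q ^ d := by positivity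
  have ha1 : q ^ d ≤ 1 := pow_le_one₀ hq0.le (by linarith)
  have hqa : q ^ 3 ≤ q ^ d * q :=
    pow_succ q d ▸ pow_le_pow_of_le_one hq0.le (by linarith) (by omega)
  have hterm (n : ℤ) : (q ^ 3) ^ (2 * n ^ 2 + n) *
      ((1 + q ^ d) / (1 + q ^ d * (q ^ 3) ^ (2 * n))) =
      (1 + q ^ d) * (q ^ (6 * n ^ 2 + 3 * n) / (1 + q ^ (6 * n + d))) := by
    rw [cube_zpow, cube_zpow, ← zpow_natCast q d, ← zpow_add₀ hq0.ne']
    ring_nf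
  rw [lerch, ← tsum_mul_left, ← tsum_congr hterm]
  refine hasSum_weight_rank_eq_tsum_gauss (R := (q ^ d)⁻¹) (C := 1) (w := fun r ↦ (-q ^ d) ^ r)
    (F := fun z ↦ (1 + q ^ d) / (1 + q ^ d * z)) (by positivity) ((one_le_inv₀ ha0).2 ha1)
    ?_ ?_ ?_ ?_ ?_
  · rw [inv_mul_lt_iff₀ ha0]
    exact hqa.trans_lt (by gcongr)
  · intro r
    rw [abs_zpow, abs_neg, abs_of_pos ha0, one_mul, ← zpow_natCast _ r.natAbs, inv_zpow']
    exact zpow_le_zpow_right_of_le_one₀ ha0 ha1 (by omega)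
  · rw [zpow_zero, mul_one, div_self (by positivity)]
  · exact ((summable_lerch hq0 (by linarith) 3 d).mul_left (1 + q ^ d)).congr fun n ↦ (hterm n).symm
  · intro z hz0 hzq
    have hza : z < q ^ d := by nlinarith
    have hval : (2 * (-q ^ d) ^ (0 : ℤ) * z - (z * ((1 + q ^ d) / (1 + q ^ d * z)) +
        (1 + q ^ d) / (1 + q ^ d * z⁻¹))) / (1 - z) =
        -(q ^ d * z) / (1 + q ^ d * z) - z / (q ^ d + z) := by
      have hz1 : 0 < 1 - z := by linarith
      rw [zpow_zero, ← div_eq_mul_inv, show 1 + q ^ d / z = (q ^ d + z) / z by field_simp; ring]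
      field_simp
      ring
    rw [hval]
    exact hasSum_neg_zpow_add_mul_pow ha0 hz0.le (by nlinarith) hza

/-- The sign pattern `N2(0,6) + N2(1,6) - N2(2,6) - N2(3,6)` as a weight on ranks. -/
noncomputable def signMod6 (r : ℤ) : ℝ := if r % 6 < 2 then 1 else if r % 6 < 4 then -1 else 0

lemma abs_signMod6_le_one (r : ℤ) : |signMod6 r| ≤ 1 := by
  unfold signMod6
  split_ifs <;> simp

lemma signMod6_add_three_add_neg (r : ℤ) :
    signMod6 (r + 3) + signMod6 (-(r + 3)) = -(signMod6 r + signMod6 (-r)) := by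
  unfold signMod6
  split_ifs <;> first | omega | norm_num

lemma hasSum_signMod6_mul_pow {z : ℝ} (hz0 : 0 ≤ z) (hz1 : z < 1) :
    HasSum (fun m : ℕ ↦ (signMod6 (m + 1) + signMod6 (-(m + 1))) * z ^ (m + 1))
      (z * (1 - 2 * z) / (1 - z + z ^ 2)) := by
  have hs : Summable fun m : ℕ ↦ (signMod6 (m + 1) + signMod6 (-(m + 1))) * z ^ (m + 1) := by
    refine .of_norm_bounded (((summable_nat_add_iff 1).2
      (summable_geometric_of_lt_one hz0 hz1)).mul_left 2) fun m ↦ ?_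
    rw [Real.norm_eq_abs, abs_mul, abs_of_nonneg (pow_nonneg hz0 (m + 1))]
    gcongr
    linarith [abs_add_le (signMod6 (m + 1)) (signMod6 (-(m + 1))), abs_signMod6_le_one (m + 1),
      abs_signMod6_le_one (-(m + 1))]
  have hshift := ((hasSum_nat_add_iff' 3).2 hs.hasSum).unique
    ((hs.hasSum.mul_left (-z ^ 3)).congr_fun fun m ↦ by
      have h := signMod6_add_three_add_neg (m + 1)
      push_cast
      rw [add_right_comm, h]
      ring)
  have hfirst : ∑ m ∈ Finset.range 3, (signMod6 (m + 1) + signMod6 (-(m + 1))) * z ^ (m + 1) =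
      z - z ^ 2 - 2 * z ^ 3 := by
    norm_num [Finset.sum_range_succ, signMod6]
    ring
  have hden : 0 < 1 - z + z ^ 2 := by linarith [three_quarters_le_one_sub_add_sq z]
  refine hs.hasSum_iff.2 ((eq_div_iff hden.ne').2 ?_)
  rw [hfirst] at hshift
  refine mul_left_cancel₀ (by positivity : 1 + z ≠ 0) ?_
  linear_combination hshift

theorem hasSum_signMod6_rank (hq0 : 0 < q) (hq1 : q < 1 / 2) :
    HasSum (fun s ↦ signMod6 (rank s.1) * (-q) ^ size s) (partitionGF (-q) * rankSeries q) := by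
  have hseries : rankSeries q = ∑' n : ℤ, q ^ (2 * n ^ 2 + n) *
      (1 - q ^ (2 * n) + (q ^ (2 * n)) ^ 2)⁻¹ :=
    tsum_congr fun n ↦ by rw [zpow_four_mul_eq_sq, div_eq_mul_inv]
  rw [hseries]
  refine hasSum_weight_rank_eq_tsum_gauss (R := 1) (C := 1) (F := fun z ↦ (1 - z + z ^ 2)⁻¹) hq0
    le_rfl (by simpa using hq1) (by simpa using abs_signMod6_le_one) (by simp [signMod6]) ?_ ?_
  · exact (summable_rankSeries hq0 (by linarith)).congr fun n ↦ by
      rw [zpow_four_mul_eq_sq, div_eq_mul_inv]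
  · intro z hz0 hzq
    have hval : (2 * signMod6 0 * z - (z * (1 - z + z ^ 2)⁻¹ + (1 - z⁻¹ + z⁻¹ ^ 2)⁻¹)) / (1 - z) =
        z * (1 - 2 * z) / (1 - z + z ^ 2) := by
      have hz1 : 0 < 1 - z := by linarith
      rw [show 1 - z⁻¹ + z⁻¹ ^ 2 = (1 - z + z ^ 2) / z ^ 2 by field_simp; ring,
        show signMod6 0 = 1 by simp [signMod6]]
      field_simp
      ring
    rw [hval]
    exact hasSum_signMod6_mul_pow hz0.le (by linarith)

lemma theta12_three_eq_ramanujanPsi (hq0 : 0 < q) : theta12 q 3 = ramanujanPsi (q ^ 3) := by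
  rw [theta12_eq_tsum hq0, ramanujanPsi, ← (Equiv.neg ℤ).tsum_eq]
  refine tsum_congr fun n ↦ ?_
  rw [cube_zpow, Equiv.neg_apply]
  congr 1
  ring

theorem mul_partitionGF_mul_rankSeries (hq0 : 0 < q) (hq1 : q < 1 / 2) :
    q * (partitionGF (-q) * rankSeries q) = partitionGF (-(q ^ 3) ^ 3) *
      (q * lerch (q ^ 3) 3 1 - q ^ 2 * jTheta ((q ^ 3) ^ 3) (q ^ 3) ^ 2 -
        (phiSqSum (q ^ 3) - lerch (q ^ 3) 3 0)) := by
  have hcube : (q ^ 3) ^ 3 < 1 / 2 :=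
    (pow_le_of_le_one (by positivity) (pow_le_one₀ hq0.le (by linarith)) three_ne_zero).trans_lt <|
      (pow_le_of_le_one hq0.le (by linarith) three_ne_zero).trans_lt hq1
  have hmain := theta12_mul_rankSeries hq0 (by linarith)
  rw [theta12_three_eq_ramanujanPsi (by positivity), show q ^ 9 = (q ^ 3) ^ 3 by ring] at hmain
  have hpsi := partitionGF_neg_mul_ramanujanPsi hq0 hq1
  have hpsi_cube := partitionGF_neg_mul_ramanujanPsi (q := (q ^ 3) ^ 3) (by positivity) hcube
  set D := q * lerch (q ^ 3) 3 1 - q ^ 2 * jTheta ((q ^ 3) ^ 3) (q ^ 3) ^ 2 -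
    (phiSqSum (q ^ 3) - lerch (q ^ 3) 3 0)
  linear_combination partitionGF (-q) * partitionGF (-(q ^ 3) ^ 3) * hmain +
    D * partitionGF (-(q ^ 3) ^ 3) * hpsi - q * (partitionGF (-q) * rankSeries q) * hpsi_cube

end RankSeries

section PositiveExpansion

variable {I J : Type*} {c : I → ℝ} {e : I → ℤ} {v v' : ℝ → ℝ} {S T : Set ℕ} {q x : ℝ}

/-! ### Nonnegative expansions in powers of `-q` -/

lemma eq_zero_of_hasSum_mul_neg_pow {d : ℕ → ℝ} {r : ℝ} (hr : 0 < r)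
    (h : ∀ q, 0 < q → q < r → HasSum (fun n ↦ d n * (-q) ^ n) 0) (n : ℕ) : d n = 0 := by
  let p := FormalMultilinearSeries.ofScalars ℝ d
  have hsum {y : ℝ} (hy : -r < y) (hy0 : y < 0) : p.sum y = 0 := by
    have := (h (-y) (by linarith) (by linarith)).tsum_eq
    rw [neg_neg] at this
    simpa [FormalMultilinearSeries.sum, p, FormalMultilinearSeries.ofScalars_apply_eq, mul_comm]
      using this
  have hradius : 0 < p.radius := by
    refine lt_of_lt_of_le ?_ (p.le_radius_of_summable (r := (r / 2).toNNReal) ?_)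
    · simpa using hr
    · refine (h (r / 2) (by linarith) (by linarith)).summable.norm.congr fun n ↦ ?_
      rw [FormalMultilinearSeries.ofScalars_norm, Real.coe_toNNReal _ (by linarith), norm_mul,
        norm_pow, norm_neg, Real.norm_of_nonneg (by linarith : 0 ≤ r / 2)]
  have hp := (p.hasFPowerSeriesOnBall hradius).hasFPowerSeriesAt
  have hzero : ∃ᶠ y in 𝓝[≠] (0 : ℝ), p.sum y = 0 := by
    have hleft : ∀ᶠ y in 𝓝[<] (0 : ℝ), p.sum y = 0 := by
      filter_upwards [Ioo_mem_nhdsLT (neg_neg_of_pos hr)] with y hy using hsum hy.1 hy.2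
    exact hleft.frequently.filter_mono (nhdsWithin_mono 0 fun y hy ↦ hy.ne)
  have hp0 := hp.locally_zero_iff.1 (hp.analyticAt.frequently_zero_iff_eventually_zero.1 hzero)
  exact congrFun ((FormalMultilinearSeries.ofScalars_series_eq_zero ℝ).1 hp0) n

lemma eq_succ_of_hasSum_mul_neg_pow {a b : ℕ → ℝ} {r : ℝ} (hr : 0 < r)
    (h : ∀ q, 0 < q → q < r → ∃ v, HasSum (fun n ↦ a n * (-q) ^ (n + 1)) v ∧
      HasSum (fun n ↦ b n * (-q) ^ n) v) (n : ℕ) : a n = b (n + 1) := by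
  have hdiff (q : ℝ) (hq0 : 0 < q) (hqr : q < r) :
      HasSum (fun n ↦ ((if n = 0 then 0 else a (n - 1)) - b n) * (-q) ^ n) 0 := by
    obtain ⟨v, ha, hb⟩ := h q hq0 hqr
    have hshift : HasSum (fun n ↦ (if n = 0 then 0 else a (n - 1)) * (-q) ^ n) v := by
      refine ((hasSum_nat_add_iff' 1).1 ?_)
      simpa using ha
    simpa [sub_mul] using hshift.sub hb
  simpa [sub_eq_zero] using eq_zero_of_hasSum_mul_neg_pow hr hdiff (n + 1)

/-- The coefficient of `x ^ n` in the series `∑ i, c i * x ^ e i`. -/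
noncomputable def seriesCoeff (c : I → ℝ) (e : I → ℤ) (n : ℕ) : ℝ := ∑' i : e ⁻¹' {(n : ℤ)}, c i

lemma hasSum_seriesCoeff {v : ℝ} (he : ∀ i, 0 ≤ e i) (h : HasSum (fun i ↦ c i * x ^ e i) v) :
    HasSum (fun n ↦ seriesCoeff c e n * x ^ n) v := by
  have hfiber (z : ℤ) : ∑' i : e ⁻¹' {z}, c i * x ^ e i = (∑' i : e ⁻¹' {z}, c i) * x ^ z := by
    rw [← tsum_mul_right]
    exact tsum_congr fun i ↦ by rw [i.2]
  have hsupport (z : ℤ) (hz : z ∉ Set.range ((↑) : ℕ → ℤ)) :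
      ∑' i : e ⁻¹' {z}, c i * x ^ e i = 0 := by
    have : IsEmpty (e ⁻¹' {z}) := ⟨fun i ↦ hz ⟨(e i).toNat, by have := he i; have := i.2; grind⟩⟩
    exact tsum_empty
  refine ((Nat.cast_injective.hasSum_iff hsupport).2 (h.tsum_fiberwise e)).congr_fun fun n ↦ ?_
  rw [Function.comp_apply, hfiber, zpow_natCast, seriesCoeff]

lemma seriesCoeff_nonneg (hc : ∀ i, 0 ≤ c i) (n : ℕ) : 0 ≤ seriesCoeff c e n :=
  tsum_nonneg fun i ↦ hc i

lemma seriesCoeff_pos (hx : x ≠ 0) (hs : Summable fun i ↦ c i * x ^ e i) (hc : ∀ i, 0 ≤ c i)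
    {n : ℕ} {i : I} (hi : 0 < c i) (hin : e i = n) : 0 < seriesCoeff c e n := by
  have hfiber : Summable fun j : e ⁻¹' {(n : ℤ)} ↦ c j := by
    refine (summable_mul_right_iff (zpow_ne_zero (n : ℤ) hx)).1 ?_
    exact (hs.subtype (e ⁻¹' {(n : ℤ)})).congr fun j ↦ by rw [Function.comp_apply, j.2]
  exact hfiber.tsum_pos (fun j ↦ hc j) ⟨i, hin⟩ hi

/-- On `0 < q < 1 / 2` the function `v` is a power series in `-q` with nonnegative coefficients,
those with index in `S` being positive. -/
def HasPosExpansion (v : ℝ → ℝ) (S : Set ℕ) : Prop :=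
  ∃ B : ℕ → ℝ, (∀ n, 0 ≤ B n) ∧ (∀ n ∈ S, 0 < B n) ∧
    ∀ q, 0 < q → q < 1 / 2 → HasSum (fun n ↦ B n * (-q) ^ n) (v q)

lemma HasPosExpansion.of_hasSum (hc : ∀ i, 0 ≤ c i) (he : ∀ i, 0 ≤ e i)
    (hv : ∀ q, 0 < q → q < 1 / 2 → HasSum (fun i ↦ c i * (-q) ^ e i) (v q))
    (hS : ∀ n ∈ S, ∃ i, 0 < c i ∧ e i = n) : HasPosExpansion v S := by
  refine ⟨seriesCoeff c e, seriesCoeff_nonneg hc, fun n hn ↦ ?_,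
    fun q hq0 hq1 ↦ hasSum_seriesCoeff he (hv q hq0 hq1)⟩
  obtain ⟨i, hi, hin⟩ := hS n hn
  exact seriesCoeff_pos (by norm_num) (hv (1 / 4) (by norm_num) (by norm_num)).summable hc hi hin

lemma HasPosExpansion.add (hv : HasPosExpansion v S) (hv' : HasPosExpansion v' T) :
    HasPosExpansion (fun q ↦ v q + v' q) (S ∪ T) := by
  obtain ⟨B, hB, hBS, hBsum⟩ := hv
  obtain ⟨B', hB', hBT, hBsum'⟩ := hv'
  refine ⟨fun n ↦ B n + B' n, fun n ↦ add_nonneg (hB n) (hB' n), ?_, fun q hq0 hq1 ↦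
    ((hBsum q hq0 hq1).add (hBsum' q hq0 hq1)).congr_fun fun n ↦ add_mul _ _ _⟩
  rintro n (hn | hn)
  exacts [add_pos_of_pos_of_nonneg (hBS n hn) (hB' n), add_pos_of_nonneg_of_pos (hB n) (hBT n hn)]

lemma hasSum_mul_prod {f : I → ℝ} {g : J → ℝ} {a b : ℝ} (hf : HasSum f a) (hg : HasSum g b) :
    HasSum (fun p : I × J ↦ f p.1 * g p.2) (a * b) :=
  hf.mul hg (summable_mul_of_summable_norm hf.summable.norm hg.summable.norm)

lemma neg_cube_zpow (q : ℝ) (a : ℤ) : (-q ^ 3) ^ a = (-q) ^ (3 * a) := by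
  rw [← cube_zpow, Odd.neg_pow (by decide)]

lemma neg_cube_cube_pow (q : ℝ) (n : ℕ) : (-(q ^ 3) ^ 3) ^ n = (-q) ^ (9 * (n : ℤ)) := by
  rw [← zpow_natCast, neg_cube_zpow, neg_cube_zpow, ← mul_assoc]
  norm_num

lemma cube_lt_half (hq0 : 0 < q) (hq1 : q < 1 / 2) : q ^ 3 < 1 / 2 :=
  (pow_le_of_le_one hq0.le (by linarith) three_ne_zero).trans_lt hq1

lemma exists_size_eq (j : ℕ) : ∃ s, size s = j := by
  rcases Nat.eq_zero_or_pos j with rfl | hj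
  · exact ⟨⟨0, oddDistinct_zero⟩, rfl⟩
  · refine ⟨⟨{j}, by simpa using hj.ne, fun i _ ↦ ?_⟩, Multiset.sum_singleton j⟩
    rw [Multiset.count_singleton]
    split_ifs <;> simp

lemma hasSum_partitionGF (hx : |x| < 1 / 2) : HasSum (fun s ↦ x ^ size s) (partitionGF x) := by
  simpa [partitionGF, genFun] using (summable_genFun hx fun _ ↦ True).hasSum

lemma hasSum_partitionGF_neg_cube_cube (hq0 : 0 < q) (hq1 : q < 1 / 2) :
    HasSum (fun s ↦ (-q) ^ (9 * (size s : ℤ))) (partitionGF (-(q ^ 3) ^ 3)) := by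
  have hcube := cube_lt_half (by positivity) (cube_lt_half hq0 hq1)
  refine (hasSum_partitionGF ?_).congr_fun fun s ↦ (neg_cube_cube_pow q _).symm
  rwa [abs_neg, abs_of_pos (by positivity)]

lemma hasSum_jTheta_pow (hq0 : 0 < q) (hq1 : q < 1) {k : ℕ} (hk : k ≠ 0) :
    HasSum (fun r : ℤ ↦ (-q) ^ (k * (r ^ 2 - r) + r)) (jTheta (q ^ k) q) := by
  refine (summable_theta (by positivity) (pow_lt_one₀ hq0.le hq1 hk)
    (neg_ne_zero.2 hq0.ne')).hasSum.congr_fun fun r ↦ ?_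
  have heven : Even ((k : ℤ) * (r ^ 2 - r)) := by
    rw [show r ^ 2 - r = r * (r - 1) by ring]
    exact (Int.even_mul_pred_self r).mul_left _
  rw [zpow_add₀ (neg_ne_zero.2 hq0.ne'), heven.neg_zpow, zpow_mul, zpow_natCast]

lemma hasPosExpansion_lerch :
    HasPosExpansion (fun q ↦ -2 * q * (partitionGF (-(q ^ 3) ^ 3) * lerch (q ^ 3) 3 1))
      {n | n % 3 = 1} := by
  refine .of_hasSum (I := OddDistinctPartition × ℕ) (c := fun _ ↦ 2)
    (e := fun i ↦ 1 + 3 * (3 * size i.1 + rank i.1.1 + i.2)) (fun _ ↦ zero_le_two) (fun i ↦ ?_)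
    (fun q hq0 hq1 ↦ ?_) fun n hn ↦ ⟨(⟨0, oddDistinct_zero⟩, n / 3), two_pos, ?_⟩
  · have := i.1.2.natAbs_rank_le_sum
    rw [size]
    omega
  · have hcube := cube_lt_half hq0 hq1
    have hgeom := hasSum_geometric_of_abs_lt_one (r := -q ^ 3)
      (by rw [abs_neg, abs_of_pos (by positivity)]; linarith)
    have hrank := hasSum_neg_zpow_rank (d := 1) (by positivity) hcube one_le_two
    have hval : -2 * q * (partitionGF (-(q ^ 3) ^ 3) * lerch (q ^ 3) 3 1) = -2 * q *
        (partitionGF (-(q ^ 3) ^ 3) * ((1 + (q ^ 3) ^ 1) * lerch (q ^ 3) 3 (1 : ℕ)) *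
          (1 - -q ^ 3)⁻¹) := by
      rw [pow_one, sub_neg_eq_add, Nat.cast_one]
      field_simp
    have hq : -q ≠ 0 := neg_ne_zero.2 hq0.ne'
    rw [hval]
    refine ((hasSum_mul_prod hrank hgeom).mul_left (-2 * q)).congr_fun fun i ↦ ?_
    rw [pow_one, neg_cube_zpow, neg_cube_cube_pow, ← zpow_natCast (-q ^ 3), neg_cube_zpow,
      ← zpow_add₀ hq, ← zpow_add₀ hq, zpow_add₀ hq, zpow_one]
    ring_nf
  · have hn : n % 3 = 1 := hn
    simp only [size, rank, halfMax, Multiset.sum_zero, Multiset.sup_zero, Multiset.card_zero]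
    norm_num
    omega

lemma hasPosExpansion_jTheta_sq :
    HasPosExpansion (fun q ↦ 2 * q ^ 2 *
      (partitionGF (-(q ^ 3) ^ 3) * jTheta ((q ^ 3) ^ 3) (q ^ 3) ^ 2)) {n | n % 3 = 2} := by
  have hexp (r : ℤ) : 0 ≤ 3 * (3 * (r ^ 2 - r) + r) := by nlinarith [Int.le_self_sq r]
  refine .of_hasSum (I := OddDistinctPartition × ℤ × ℤ) (c := fun _ ↦ 2)
    (e := fun i ↦ 2 + (9 * size i.1 + (3 * (3 * (i.2.1 ^ 2 - i.2.1) + i.2.1) +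
      3 * (3 * (i.2.2 ^ 2 - i.2.2) + i.2.2)))) (fun _ ↦ zero_le_two) (fun i ↦ ?_)
    (fun q hq0 hq1 ↦ ?_) fun n hn ↦ ?_
  · nlinarith [hexp i.2.1, hexp i.2.2]
  · have hcube := cube_lt_half hq0 hq1
    have htheta := hasSum_jTheta_pow (q := q ^ 3) (by positivity) (by linarith) three_ne_zero
    simp only [neg_cube_zpow] at htheta
    have hq : -q ≠ 0 := neg_ne_zero.2 hq0.ne'
    rw [sq (jTheta _ _)]
    refine ((hasSum_mul_prod (hasSum_partitionGF_neg_cube_cube hq0 hq1)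
      (hasSum_mul_prod htheta htheta)).mul_left (2 * q ^ 2)).congr_fun fun i ↦ ?_
    rw [zpow_add₀ hq, zpow_add₀ hq, zpow_add₀ hq, zpow_ofNat, neg_sq]
    push_cast
    ring
  · obtain ⟨s, hs⟩ := exists_size_eq (n / 9)
    have hn : n % 3 = 2 := hn
    obtain h | h | h : n % 9 = 2 ∨ n % 9 = 5 ∨ n % 9 = 8 := by omega
    exacts [⟨(s, 0, 0), two_pos, by norm_num [hs]; omega⟩,
      ⟨(s, 1, 0), two_pos, by norm_num [hs]; omega⟩, ⟨(s, 1, 1), two_pos, by norm_num [hs]; omega⟩]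

lemma hasPosExpansion_sub_lerch :
    HasPosExpansion (fun q ↦ partitionGF (-(q ^ 3) ^ 3) -
      partitionGF (-(q ^ 3) ^ 3) * (2 * lerch (q ^ 3) 3 0)) ∅ := by
  refine .of_hasSum (c := fun s : OddDistinctPartition ↦ 1 - (-1) ^ rank s.1)
    (e := fun s ↦ 9 * size s) (fun s ↦ ?_) (fun s ↦ by positivity) (fun q hq0 hq1 ↦ ?_) (by simp)
  · rcases Int.even_or_odd (rank s.1) with h | h <;> rw [h.neg_one_zpow] <;> norm_num
  · have hrank := hasSum_neg_zpow_rank (d := 0) (by positivity) (cube_lt_half hq0 hq1) zero_le_two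
    rw [pow_zero, one_add_one_eq_two, Nat.cast_zero] at hrank
    refine ((hasSum_partitionGF_neg_cube_cube hq0 hq1).sub hrank).congr_fun fun s ↦ ?_
    rw [neg_cube_cube_pow]
    ring

lemma hasPosExpansion_sq_sub_one {e : ℤ → ℤ} (he : ∀ r, 0 ≤ e r) (he0 : e 0 = 0)
    (hv : ∀ q, 0 < q → q < 1 / 2 → HasSum (fun r ↦ (-q) ^ e r) (v q)) :
    HasPosExpansion (fun q ↦ partitionGF (-(q ^ 3) ^ 3) * (1 / 2 * (v q ^ 2 - 1)))
      {n | ∃ j : ℕ, ∃ r t : ℤ, (r, t) ≠ 0 ∧ n = 9 * j + (e r + e t)} := by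
  refine .of_hasSum (I := OddDistinctPartition × ℤ × ℤ)
    (c := fun i ↦ if i.2 = 0 then 0 else 1 / 2)
    (e := fun i ↦ 9 * size i.1 + (e i.2.1 + e i.2.2)) (fun i ↦ by split_ifs <;> norm_num)
    (fun i ↦ add_nonneg (by positivity) (add_nonneg (he _) (he _))) (fun q hq0 hq1 ↦ ?_) ?_
  · have hq : -q ≠ 0 := neg_ne_zero.2 hq0.ne'
    have hsq := ((hasSum_mul_prod (hv q hq0 hq1) (hv q hq0 hq1)).sub
      (hasSum_ite_eq (0 : ℤ × ℤ) (1 : ℝ))).mul_left (1 / 2)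
    rw [← sq] at hsq
    refine (hasSum_mul_prod (hasSum_partitionGF_neg_cube_cube hq0 hq1) hsq).congr_fun fun i ↦ ?_
    split_ifs with hi
    · simp [hi, he0]
    · rw [zpow_add₀ hq, zpow_add₀ hq]
      ring
  · rintro n ⟨j, r, t, hrt, hn⟩
    obtain ⟨s, rfl⟩ := exists_size_eq j
    exact ⟨(s, r, t), by simp [hrt], hn.symm⟩

lemma hasSum_jTheta_cube (hq0 : 0 < q) (hq1 : q < 1 / 2) :
    HasSum (fun r : ℤ ↦ (-q) ^ (3 * r ^ 2)) (jTheta (q ^ 3) (q ^ 3)) := by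
  have hcube := cube_lt_half hq0 hq1
  have := hasSum_jTheta_pow (q := q ^ 3) (by positivity) (by linarith) one_ne_zero
  rw [pow_one] at this
  refine this.congr_fun fun r ↦ ?_
  rw [neg_cube_zpow]
  congr 1
  push_cast
  ring

lemma hasSum_jTheta_cube_cube (hq0 : 0 < q) (hq1 : q < 1 / 2) :
    HasSum (fun r : ℤ ↦ (-q) ^ (9 * r ^ 2)) (jTheta ((q ^ 3) ^ 3) ((q ^ 3) ^ 3)) := by
  refine (hasSum_jTheta_cube (by positivity) (cube_lt_half hq0 hq1)).congr_fun fun r ↦ ?_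
  rw [neg_cube_zpow, ← mul_assoc]
  norm_num

lemma HasPosExpansion.congr (hv : HasPosExpansion v S)
    (hvv' : ∀ q, 0 < q → q < 1 / 2 → v' q = v q) (hST : T ⊆ S) : HasPosExpansion v' T := by
  obtain ⟨B, hB, hBS, hsum⟩ := hv
  exact ⟨B, hB, fun n hn ↦ hBS n (hST hn), fun q hq0 hq1 ↦ hvv' q hq0 hq1 ▸ hsum q hq0 hq1⟩

theorem hasPosExpansion_rankSeries :
    HasPosExpansion (fun q ↦ -2 * q * (partitionGF (-q) * rankSeries q)) {0}ᶜ := by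
  refine ((((hasPosExpansion_lerch.add hasPosExpansion_jTheta_sq).add
    hasPosExpansion_sub_lerch).add (hasPosExpansion_sq_sub_one (fun r ↦ by positivity) (by norm_num)
      fun q ↦ hasSum_jTheta_cube)).add (hasPosExpansion_sq_sub_one (fun r ↦ by positivity)
      (by norm_num) fun q ↦ hasSum_jTheta_cube_cube)).congr (fun q hq0 hq1 ↦ ?_) fun n hn ↦ ?_
  · have hkey := mul_partitionGF_mul_rankSeries hq0 hq1
    rw [phiSqSum] at hkey
    linear_combination -2 * hkey
  · have hn : n ≠ 0 := hn
    obtain h | h | h | h | h : n % 3 = 1 ∨ n % 3 = 2 ∨ n % 9 = 3 ∨ n % 9 = 6 ∨ n % 9 = 0 := by omega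
    · exact .inl (.inl (.inl (.inl h)))
    · exact .inl (.inl (.inl (.inr h)))
    · exact .inl (.inr ⟨n / 9, 1, 0, by simp, by omega⟩)
    · exact .inl (.inr ⟨n / 9, 1, 1, by simp, by omega⟩)
    · exact .inr ⟨n / 9 - 1, 1, 0, by simp, by omega⟩

theorem tsum_signMod6_rank_pos (n : ℕ) : 0 < ∑' s : size ⁻¹' {n}, signMod6 (rank s.1.1) := by
  obtain ⟨B, -, hBpos, hBsum⟩ := hasPosExpansion_rankSeries
  let A (n : ℕ) : ℝ := ∑' s : size ⁻¹' {n}, signMod6 (rank s.1.1)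
  have hA {q : ℝ} (hq0 : 0 < q) (hq1 : q < 1 / 2) :
      HasSum (fun n ↦ A n * (-q) ^ n) (partitionGF (-q) * rankSeries q) := by
    refine ((hasSum_signMod6_rank hq0 hq1).tsum_fiberwise size).congr_fun fun n ↦ ?_
    rw [← tsum_mul_right]
    exact tsum_congr fun s ↦ by rw [s.2]
  have hAB : 2 * A n = B (n + 1) :=
    eq_succ_of_hasSum_mul_neg_pow one_half_pos (a := fun n ↦ 2 * A n) (fun q hq0 hq1 ↦ ⟨_,
      ((hA hq0 hq1).mul_left (-2 * q)).congr_fun fun n ↦ by ring, hBsum q hq0 hq1⟩) n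
  linarith [hBpos (n + 1) n.succ_ne_zero]

end PositiveExpansion

section Counting

/-! ### Counting partitions -/

/-- Odd-distinct multisets of sum `n` correspond to partitions of `n` without repeated odd parts,
and `rank` to `m2Rank`. -/
def rankModEquivPartition (r : ℤ) (m n : ℕ) :
    {s : size ⁻¹' {n} // rank s.1.1 ≡ r [ZMOD m]} ≃
      {P : n.Partition // NoRepeatedOddParts P ∧ m2Rank P ≡ r [ZMOD m]} where
  toFun s := ⟨toPartition n s.1, s.1.1.2.2, s.2⟩
  invFun P := ⟨⟨⟨P.1.parts, fun h ↦ (P.1.parts_pos h).ne' rfl, P.2.1⟩, P.1.parts_sum⟩, P.2.2⟩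
  left_inv _ := rfl
  right_inv _ := rfl

lemma N2_eq_sum (r : ℤ) (m n : ℕ) [Fintype (size ⁻¹' {n})] :
    (N2 r m n : ℝ) = ∑ s : size ⁻¹' {n}, if rank s.1.1 ≡ r [ZMOD m] then 1 else 0 := by
  have hcard : N2 r m n = Nat.card {s : size ⁻¹' {n} // rank s.1.1 ≡ r [ZMOD m]} :=
    (Nat.card_congr (rankModEquivPartition r m n)).symm
  rw [hcard, Finset.sum_boole, Nat.card_eq_fintype_card, Fintype.card_subtype]

lemma signMod6_eq_sum_ite (k : ℤ) : signMod6 k =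
    (if k ≡ 0 [ZMOD 6] then 1 else 0) + (if k ≡ 1 [ZMOD 6] then 1 else 0) -
      (if k ≡ 2 [ZMOD 6] then 1 else 0) - (if k ≡ 3 [ZMOD 6] then 1 else 0) := by
  unfold signMod6 Int.ModEq
  obtain h | h | h | h | h | h : k % 6 = 0 ∨ k % 6 = 1 ∨ k % 6 = 2 ∨ k % 6 = 3 ∨ k % 6 = 4 ∨
    k % 6 = 5 := by omega
  all_goals simp only [h]; norm_num

theorem tsum_signMod6_rank_eq (n : ℕ) : ∑' s : size ⁻¹' {n}, signMod6 (rank s.1.1) =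
    N2 0 6 n + N2 1 6 n - N2 2 6 n - N2 3 6 n := by
  have : Finite (size ⁻¹' {n}) := inferInstanceAs (Finite {s // size s = n})
  have := Fintype.ofFinite (size ⁻¹' {n})
  simp only [tsum_fintype, N2_eq_sum, signMod6_eq_sum_ite, Finset.sum_add_distrib,
    Finset.sum_sub_distrib, Nat.cast_ofNat]

end Counting

end M2Rank

theorem N2_mod6_inequality (n : ℕ) :
    N2 0 6 n + N2 1 6 n > N2 2 6 n + N2 3 6 n := by
  have hpos := M2Rank.tsum_signMod6_rank_pos n
  rw [M2Rank.tsum_signMod6_rank_eq] at hpos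
  have hlt : (N2 2 6 n + N2 3 6 n : ℝ) < N2 0 6 n + N2 1 6 n := by linarith
  exact_mod_cast hlt
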